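/- Let S ∈ sp(n,ℂ) be the Hamilton map of L_S with Re Q_S ≥ 0, assume S_i ≠ 0 (so that ν > 0), and assume condition (R). Then for every α ∈ ℂ with |Re α| < ν, the operator L_S + iαU admits a tempered fundamental solution, i.e. there exists a tempered distribution E ∈ 𝒮'(ℍ_n) with (L_S + iαU)E = δ₀; in particular L_S + iαU is locally solvable. -/

import Mathlib

open MeasureTheory Complex Matrix

noncomputable section

/-- Index type for `2n`-dimensional (symplectic) vectors: `X`-coordinates `inl j`,
`Y`-coordinates `inr j`. -/
abbrev Idx (n : ℕ) := Fin n ⊕ Fin n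

/-- The standard symplectic matrix `J = [[0, I],[-I, 0]]` over `ℂ`. -/
def Jmat (n : ℕ) : Matrix (Idx n) (Idx n) ℂ := Matrix.fromBlocks 0 1 (-1) 0

/-- The standard symplectic matrix `J = [[0, I],[-I, 0]]` over `ℝ`. -/
def JmatR (n : ℕ) : Matrix (Idx n) (Idx n) ℝ := Matrix.fromBlocks 0 1 (-1) 0

/-- The standard symplectic form `σ(z,w) = ᵗz J w` on `ℂ^{2n}`. -/
def sigmaC (n : ℕ) (z w : Idx n → ℂ) : ℂ := z ⬝ᵥ (Jmat n).mulVec w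

/-- The standard symplectic form on `ℝ^{2n}`. -/
def sigmaR (n : ℕ) (v w : Idx n → ℝ) : ℝ := v ⬝ᵥ (JmatR n).mulVec w

/-- Inclusion of real vectors into `ℂ^{2n}`. -/
def realVec (n : ℕ) (v : Idx n → ℝ) : Idx n → ℂ := fun i => (v i : ℂ)

/-- Complex conjugation on `ℂ^{2n}` relative to the real form `ℝ^{2n}`. -/
def conjVec (n : ℕ) (z : Idx n → ℂ) : Idx n → ℂ := fun i => (starRingEnd ℂ) (z i)

/-- `S ∈ sp(n, ℂ)`, i.e. `σ(Sz, w) + σ(z, Sw) = 0` for all `z, w`. -/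
def InSp (n : ℕ) (S : Matrix (Idx n) (Idx n) ℂ) : Prop := Sᵀ * Jmat n + Jmat n * S = 0

/-- `Re Q_S ≥ 0`: the real part of the quadratic form `Q_S(v) = σ(v, Sv)` is
positive semi-definite on `ℝ^{2n}`. -/
def RePosQ (n : ℕ) (S : Matrix (Idx n) (Idx n) ℂ) : Prop :=
  ∀ v : Idx n → ℝ, 0 ≤ (sigmaC n (realVec n v) (S.mulVec (realVec n v))).re

/-- The generalized eigenspace `V_μ` of the matrix `S` for the eigenvalue `μ`. -/
def genEig (n : ℕ) (S : Matrix (Idx n) (Idx n) ℂ) (μ : ℂ) : Submodule ℂ (Idx n → ℂ) :=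
  Module.End.maxGenEigenspace (Matrix.mulVecLin S) μ

/-- `V_r`: the sum of the generalized eigenspaces of `S` for real eigenvalues. -/
def Vreal (n : ℕ) (S : Matrix (Idx n) (Idx n) ℂ) : Submodule ℂ (Idx n → ℂ) :=
  ⨆ lam : ℝ, genEig n S (lam : ℂ)

/-- `V_i`: the sum of the generalized eigenspaces of `S` for non-real eigenvalues. -/
def Vimag (n : ℕ) (S : Matrix (Idx n) (Idx n) ℂ) : Submodule ℂ (Idx n → ℂ) :=
  ⨆ μ : {z : ℂ // z.im ≠ 0}, genEig n S (μ : ℂ)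

/-- `Sr` is the "real part" `S_r` of `S`: it agrees with `S` on `V_r` and vanishes on `V_i`. -/
def IsRealPart (n : ℕ) (S Sr : Matrix (Idx n) (Idx n) ℂ) : Prop :=
  (∀ v ∈ Vreal n S, Sr.mulVec v = S.mulVec v) ∧ ∀ v ∈ Vimag n S, Sr.mulVec v = 0

/-- `Si` is the "imaginary part" `S_i` of `S`: it vanishes on `V_r` and agrees with `S`
on `V_i`. -/
def IsImagPart (n : ℕ) (S Si : Matrix (Idx n) (Idx n) ℂ) : Prop :=
  (∀ v ∈ Vreal n S, Si.mulVec v = 0) ∧ ∀ v ∈ Vimag n S, Si.mulVec v = S.mulVec v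

/-- Condition (R): `V_λ ⊕ V_{−λ}` is invariant under complex conjugation for every
real `λ ≠ 0`. -/
def CondR (n : ℕ) (S : Matrix (Idx n) (Idx n) ℂ) : Prop :=
  ∀ lam : ℝ, lam ≠ 0 →
    ∀ z ∈ genEig n S (lam : ℂ) ⊔ genEig n S (-(lam : ℂ)),
      conjVec n z ∈ genEig n S (lam : ℂ) ⊔ genEig n S (-(lam : ℂ))

/-- `ν = Σ_j ν_j`: the sum of the imaginary parts of the eigenvalues of `S` lying in the
upper half plane, counted with multiplicity. -/
def nuTotal (n : ℕ) (S : Matrix (Idx n) (Idx n) ℂ) : ℝ :=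
  (S.charpoly.roots.map (fun z => max z.im 0)).sum

/-- `S_i ≠ 0`, i.e. `S` has at least one non-real eigenvalue. -/
def HasNonrealEig (n : ℕ) (S : Matrix (Idx n) (Idx n) ℂ) : Prop :=
  ∃ z ∈ S.charpoly.roots, z.im ≠ 0

/-- Semisimple (= diagonalizable over `ℂ`) matrix. -/
def IsSemisimpleMat (n : ℕ) (D : Matrix (Idx n) (Idx n) ℂ) : Prop :=
  ∃ (P : Matrix (Idx n) (Idx n) ℂ) (d : Idx n → ℂ), IsUnit P ∧ D = P * Matrix.diagonal d * P⁻¹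

/-- `S = D + N` is the Jordan decomposition of `S`: `D` semisimple, `N` nilpotent,
`DN = ND`. -/
def IsJordanDecomp (n : ℕ) (S D N : Matrix (Idx n) (Idx n) ℂ) : Prop :=
  S = D + N ∧ IsSemisimpleMat n D ∧ IsNilpotent N ∧ D * N = N * D

/-- The Heisenberg group `ℍ_n = ℝ^n × ℝ^n × ℝ`, with coordinates `(x, y, u)`. -/
abbrev Hgrp (n : ℕ) := (Fin n → ℝ) × (Fin n → ℝ) × ℝ

/-- The left-invariant vector field `X_j = ∂_{x_j} - (1/2) y_j ∂_u` on `ℍ_n`. -/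
def Xop (n : ℕ) (j : Fin n) (f : Hgrp n → ℂ) : Hgrp n → ℂ :=
  fun p => fderiv ℝ f p (Pi.single j 1, 0, 0) - ((p.2.1 j : ℂ) / 2) * fderiv ℝ f p (0, 0, 1)

/-- The left-invariant vector field `Y_j = ∂_{y_j} + (1/2) x_j ∂_u` on `ℍ_n`. -/
def Yop (n : ℕ) (j : Fin n) (f : Hgrp n → ℂ) : Hgrp n → ℂ :=
  fun p => fderiv ℝ f p (0, Pi.single j 1, 0) + ((p.1 j : ℂ) / 2) * fderiv ℝ f p (0, 0, 1)

/-- The central left-invariant vector field `U = ∂_u` on `ℍ_n`. -/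
def Uop (n : ℕ) (f : Hgrp n → ℂ) : Hgrp n → ℂ := fun p => fderiv ℝ f p (0, 0, 1)

/-- `(V_1, …, V_{2n}) = (X_1, …, X_n, Y_1, …, Y_n)`. -/
def Vop (n : ℕ) : Idx n → (Hgrp n → ℂ) → Hgrp n → ℂ
  | Sum.inl j => Xop n j
  | Sum.inr j => Yop n j

/-- The operator `L_{A,α} = Σ_{j,k} a_{jk} V_j V_k + iα U` on `ℍ_n`. -/
def Lop (n : ℕ) (A : Matrix (Idx n) (Idx n) ℂ) (α : ℂ) (f : Hgrp n → ℂ) : Hgrp n → ℂ :=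
  fun p => (∑ j, ∑ k, A j k * Vop n j (Vop n k f) p) + Complex.I * α * Uop n f p

/-- `φ ∈ C_c^∞(Ω)`. -/
def IsTestOn (n : ℕ) (Ω : Set (Hgrp n)) (φ : Hgrp n → ℂ) : Prop :=
  ContDiff ℝ (⊤ : ℕ∞) φ ∧ HasCompactSupport φ ∧ tsupport φ ⊆ Ω

/-- Local solvability of an operator `L` whose formal transpose (with respect to the
bilinear pairing `(f, φ) ↦ ∫ f φ` and Haar = Lebesgue measure) is `Lt`: every point has an
open neighborhood `Ω` such that for every `f ∈ C_c^∞(Ω)` there is a distribution `u` on `Ω`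
(a linear functional acting on test functions) with `Lu = f` on `Ω`, i.e.
`u(Lt φ) = ∫ f φ` for all `φ ∈ C_c^∞(Ω)`. -/
def LocSolvVia (n : ℕ) (Lt : (Hgrp n → ℂ) → Hgrp n → ℂ) : Prop :=
  ∀ p : Hgrp n, ∃ Ω : Set (Hgrp n), IsOpen Ω ∧ p ∈ Ω ∧
    ∀ f : Hgrp n → ℂ, IsTestOn n Ω f →
      ∃ u : (Hgrp n → ℂ) →ₗ[ℂ] ℂ,
        ∀ φ : Hgrp n → ℂ, IsTestOn n Ω φ → u (Lt φ) = ∫ x, f x * φ x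

/-- Local solvability of `L_{A,α} = Σ a_{jk} V_j V_k + iαU` (for symmetric `A`); its
formal transpose is `L_{A,-α}` since the `V_j` are formally skew-adjoint and the second
order part is formally self-transposed. -/
def LocSolv (n : ℕ) (A : Matrix (Idx n) (Idx n) ℂ) (α : ℂ) : Prop :=
  LocSolvVia n (Lop n A (-α))

set_option linter.unusedSectionVars false
set_option linter.unusedVariables false

section MatExp
variable {ι : Type*} [Fintype ι] [DecidableEq ι]

lemma det_sub_smul_eq_prod (M : Matrix ι ι ℂ) (a : ℂ) :
    (M - a • (1 : Matrix ι ι ℂ)).det = (M.charpoly.roots.map (fun w => w - a)).prod := by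
  have h1 : M.charpoly.eval a = (M.charpoly.roots.map (fun w => a - w)).prod := by
    have hs := (IsAlgClosed.splits M.charpoly)
    have := hs.eval_eq_prod_roots_of_monic M.charpoly_monic a
    simpa using this
  rw [Matrix.eval_charpoly] at h1
  have h2 : M - a • (1 : Matrix ι ι ℂ) = -(Matrix.scalar ι a - M) := by
    rw [neg_sub]; congr 1; ext i j; simp [Matrix.scalar, Matrix.one_apply, Matrix.diagonal]
  rw [h2, Matrix.det_neg, h1]
  have hc : Multiset.card M.charpoly.roots = Fintype.card ι := by
    rw [← (IsAlgClosed.splits M.charpoly).natDegree_eq_card_roots, M.charpoly_natDegree_eq_dim]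
  rw [← hc]
  have : (fun w => w - a) = fun w : ℂ => (-1) * (a - w) := by ext w; ring
  rw [this, Multiset.prod_map_mul]; simp

lemma det_aeval_eq_prod (M : Matrix ι ι ℂ) (q : Polynomial ℂ) :
    (Polynomial.aeval M q).det = (M.charpoly.roots.map (fun w => q.eval w)).prod := by
  have hc : Multiset.card M.charpoly.roots = Fintype.card ι := by
    rw [← (IsAlgClosed.splits M.charpoly).natDegree_eq_card_roots, M.charpoly_natDegree_eq_dim]
  have hq := (IsAlgClosed.splits q).eq_prod_roots
  have key : ∀ t : Multiset ℂ, (Polynomial.aeval M ((t.map (fun a => Polynomial.X - Polynomial.C a)).prod)).det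
      = (M.charpoly.roots.map (fun w => ((t.map (fun a => Polynomial.X - Polynomial.C a)).prod).eval w)).prod := by
    intro t
    induction t using Multiset.induction_on with
    | empty => simp
    | cons a t ih =>
      rw [Multiset.map_cons, Multiset.prod_cons, map_mul, Matrix.det_mul, ih]
      simp only [Polynomial.eval_mul, Multiset.prod_map_mul]
      congr 1
      have h5 := det_sub_smul_eq_prod M a
      simp only [Polynomial.eval_sub, Polynomial.eval_X, Polynomial.eval_C]
      rw [← h5]
      simp [Algebra.algebraMap_eq_smul_one]
  rw [hq, map_mul, Matrix.det_mul, key]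
  simp only [Polynomial.eval_mul, Multiset.prod_map_mul]
  congr 1
  simp [hc, Algebra.algebraMap_eq_smul_one]

lemma exists_eigvec_of_mem_roots (M : Matrix ι ι ℂ) {w : ℂ} (hw : w ∈ M.charpoly.roots) :
    ∃ v : ι → ℂ, v ≠ 0 ∧ M *ᵥ v = w • v := by
  have hr := (Polynomial.mem_roots'.1 hw).2
  have h0 : (Matrix.scalar ι w - M).det = 0 := by rw [← Matrix.eval_charpoly]; exact hr
  obtain ⟨v, hv, h⟩ := Matrix.exists_mulVec_eq_zero_iff.2 h0
  refine ⟨v, hv, ?_⟩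
  rw [Matrix.sub_mulVec, sub_eq_zero] at h
  rw [← h]; ext i; simp [Matrix.scalar, Matrix.mulVec_diagonal]

lemma pow_mulVec_eig (M : Matrix ι ι ℂ) {w : ℂ} {v : ι → ℂ} (h : M *ᵥ v = w • v) (k : ℕ) :
    (M ^ k) *ᵥ v = w ^ k • v := by
  induction k with
  | zero => simp
  | succ k ih => rw [pow_succ, ← Matrix.mulVec_mulVec, h, Matrix.mulVec_smul, ih, smul_smul]; ring_nf

lemma aeval_mulVec_eig (M : Matrix ι ι ℂ) {w : ℂ} {v : ι → ℂ} (h : M *ᵥ v = w • v) (q : Polynomial ℂ) :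
    (Polynomial.aeval M q) *ᵥ v = q.eval w • v := by
  induction q using Polynomial.induction_on' with
  | add p q hp hq => simp [Matrix.add_mulVec, hp, hq, add_smul]
  | monomial k a =>
    simp [Polynomial.aeval_monomial, Algebra.algebraMap_eq_smul_one, Matrix.smul_mulVec, pow_mulVec_eig M h, smul_smul]

open scoped Matrix.Norms.Operator in
lemma exp_mulVec_eig (M : Matrix ι ι ℂ) {w : ℂ} {v : ι → ℂ} (h : M *ᵥ v = w • v) :
    (NormedSpace.exp M) *ᵥ v = Complex.exp w • v := by
  have h1 := NormedSpace.exp_series_hasSum_exp' (𝕂 := ℂ) M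
  have h2 : HasSum (fun n : ℕ => (((n.factorial : ℂ)⁻¹) • M ^ n) *ᵥ v) ((NormedSpace.exp M) *ᵥ v) := by
    exact h1.map ((Matrix.mulVec.addMonoidHomLeft v)) (by
      show Continuous fun N : Matrix ι ι ℂ => N *ᵥ v
      fun_prop)
  have h3 := NormedSpace.exp_series_hasSum_exp' (𝕂 := ℂ) w
  have h4 := h3.smul_const v
  rw [Complex.exp_eq_exp_ℂ]
  refine h2.unique ?_
  convert h4 using 2 with k
  rw [Matrix.smul_mulVec, pow_mulVec_eig M h, smul_smul, smul_eq_mul]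

open scoped Matrix.Norms.Operator in
lemma exists_poly_exp (M : Matrix ι ι ℂ) (c : ℂ) :
    ∃ q : Polynomial ℂ, NormedSpace.exp (c • M) = Polynomial.aeval M q ∧
      ∀ w ∈ M.charpoly.roots, q.eval w = Complex.exp (c * w) := by
  have hcl : IsClosed ((Algebra.adjoin ℂ {M} : Subalgebra ℂ (Matrix ι ι ℂ)) : Set (Matrix ι ι ℂ)) :=
    (Subalgebra.toSubmodule (Algebra.adjoin ℂ {M})).closed_of_finiteDimensional
  have hm : NormedSpace.exp (c • M) ∈ (Algebra.adjoin ℂ {M} : Subalgebra ℂ (Matrix ι ι ℂ)) :=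
    NormedSpace.exp_mem (R := ℂ) hcl (Subalgebra.smul_mem _ (Algebra.self_mem_adjoin_singleton ℂ M) c)
  rw [Algebra.adjoin_singleton_eq_range_aeval] at hm
  obtain ⟨q, hq⟩ := hm
  refine ⟨q, hq.symm, fun w hw => ?_⟩
  obtain ⟨v, hv, h⟩ := exists_eigvec_of_mem_roots M hw
  have h1 := aeval_mulVec_eig M h q
  have h2 := exp_mulVec_eig (c • M) (w := c * w) (v := v) (by rw [Matrix.smul_mulVec, h, smul_smul])
  have hq' : Polynomial.aeval M q = NormedSpace.exp (c • M) := hq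
  rw [hq', h2] at h1
  exact (smul_left_injective ℂ hv h1).symm

open scoped Matrix.Norms.Operator in
lemma hasDerivAt_exp_entry (M : Matrix ι ι ℂ) (s : ℝ) (i j : ι) :
    HasDerivAt (fun s : ℝ => NormedSpace.exp ((s : ℂ) • M) i j)
      ((M * NormedSpace.exp ((s : ℂ) • M)) i j) s := by
  have h := hasDerivAt_exp_smul_const' (𝕂 := ℝ) M s
  have e : ∀ s : ℝ, (s : ℂ) • M = s • M := fun s => by simp
  simp_rw [e]
  exact ((hasDerivAt_pi.1 ((hasDerivAt_pi.1 h) i)) j)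
end MatExp

section Mono
variable {ι : Type*} [Fintype ι] [DecidableEq ι]

lemma hasDerivAt_dotV {u v : ℝ → ι → ℂ} {u' v' : ι → ℂ} {s : ℝ} (hu : HasDerivAt u u' s)
    (hv : HasDerivAt v v' s) :
    HasDerivAt (fun s => u s ⬝ᵥ v s) (u' ⬝ᵥ v s + u s ⬝ᵥ v') s := by
  simp only [dotProduct, ← Finset.sum_add_distrib]
  exact HasDerivAt.fun_sum fun i _ => ((hasDerivAt_pi.1 hu i).mul (hasDerivAt_pi.1 hv i))

lemma hasDerivAt_mulVecV (M : Matrix ι ι ℂ) {v : ℝ → ι → ℂ} {v' : ι → ℂ} {s : ℝ}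
    (hv : HasDerivAt v v' s) : HasDerivAt (fun s => M *ᵥ v s) (M *ᵥ v') s := by
  rw [hasDerivAt_pi]
  intro i
  have := hasDerivAt_dotV (hasDerivAt_const s (M i)) hv
  simpa [Matrix.mulVec] using this

/-- The flow `exp(2 s K A)`. -/
def flowE (K A : Matrix ι ι ℂ) (s : ℝ) : Matrix ι ι ℂ :=
  NormedSpace.exp ((s : ℂ) • ((2 : ℂ) • (K * A)))

lemma flowE_zero (K A : Matrix ι ι ℂ) : flowE K A 0 = 1 := by
  simp [flowE, NormedSpace.exp_zero]

lemma flowE_deriv (K A : Matrix ι ι ℂ) (s : ℝ) (i j : ι) :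
    HasDerivAt (fun s : ℝ => flowE K A s i j) (((2 : ℂ) • (K * A * flowE K A s)) i j) s := by
  have := hasDerivAt_exp_entry ((2 : ℂ) • (K * A)) s i j
  simpa [flowE] using this

lemma flowE_vec_deriv (K A : Matrix ι ι ℂ) (x : ι → ℂ) (s : ℝ) :
    HasDerivAt (fun s : ℝ => flowE K A s *ᵥ x) ((2 : ℂ) • (K *ᵥ A *ᵥ (flowE K A s *ᵥ x))) s := by
  rw [hasDerivAt_pi]
  intro i
  have h := hasDerivAt_dotV (u := fun s => flowE K A s i) (hasDerivAt_pi.2 fun j => flowE_deriv K A s i j)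
    (hasDerivAt_const s x)
  have e : ((2 : ℂ) • (K *ᵥ A *ᵥ (flowE K A s *ᵥ x))) i =
      (fun j => ((2 : ℂ) • (K * A * flowE K A s)) i j) ⬝ᵥ x + flowE K A s i ⬝ᵥ 0 := by
    rw [Matrix.mulVec_mulVec, Matrix.mulVec_mulVec, ← Matrix.smul_mulVec]
    simp [Matrix.mulVec]
  rw [e]; exact h

lemma re_star_dot_comm (x y : ι → ℂ) : (star x ⬝ᵥ y).re = (star y ⬝ᵥ x).re := by
  rw [← Complex.conj_re (star x ⬝ᵥ y)]
  congr 1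
  have := Matrix.star_dotProduct_star (star y) x
  rw [star_star] at this
  simp only [dotProduct, map_sum, Pi.star_apply, map_mul]
  refine Finset.sum_congr rfl fun i _ => ?_
  simp; ring

lemma star_mulVec_dot {K : Matrix ι ι ℂ} (hKh : Kᴴ = K) (x y : ι → ℂ) :
    star (K *ᵥ x) ⬝ᵥ y = star x ⬝ᵥ (K *ᵥ y) := by
  rw [Matrix.star_mulVec, hKh, Matrix.dotProduct_mulVec]

lemma flow_mono {K A : Matrix ι ι ℂ} (hK2 : K * K = 1) (hKh : Kᴴ = K)
    (hAp : ∀ x : ι → ℂ, 0 ≤ (star x ⬝ᵥ A *ᵥ x).re) (x : ι → ℂ) {s : ℝ} (hs : 0 ≤ s) :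
    (star x ⬝ᵥ K *ᵥ x).re ≤
      (star (flowE K A s *ᵥ x) ⬝ᵥ K *ᵥ (flowE K A s *ᵥ x)).re := by
  set f : ℝ → ℝ := fun s => (star (flowE K A s *ᵥ x) ⬝ᵥ K *ᵥ (flowE K A s *ᵥ x)).re with hf
  have hd : ∀ s, HasDerivAt f (4 * (star (flowE K A s *ᵥ x) ⬝ᵥ A *ᵥ (flowE K A s *ᵥ x)).re) s := by
    intro s
    have h1 := flowE_vec_deriv K A x s
    have h2 := hasDerivAt_dotV h1.star (hasDerivAt_mulVecV K h1)
    have h3 := (Complex.reCLM.hasFDerivAt.comp_hasDerivAt s h2)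
    have hKK : ∀ z : ι → ℂ, K *ᵥ (K *ᵥ z) = z := fun z => by rw [Matrix.mulVec_mulVec, hK2, Matrix.one_mulVec]
    refine HasDerivAt.congr_deriv (f := f) h3 ?_
    generalize flowE K A s *ᵥ x = r
    rw [Complex.reCLM_apply, Complex.add_re, Matrix.mulVec_smul, hKK, star_smul,
      smul_dotProduct, dotProduct_smul, star_mulVec_dot hKh, hKK]
    have := re_star_dot_comm (A *ᵥ r) r
    simp at this ⊢
    rw [this]; ring
  have hm : Monotone f := monotone_of_deriv_nonneg (fun s => (hd s).differentiableAt) (fun s => by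
    rw [(hd s).deriv]; have := hAp (flowE K A s *ᵥ x); positivity)
  have := hm hs
  simpa [hf, flowE_zero] using this

/-- `p`-component at time `s` of the state with initial data `(p,q)`. -/
def stP (K A : Matrix ι ι ℂ) (s : ℝ) (p q : ι → ℂ) : ι → ℂ :=
  (1/2 : ℂ) • (flowE K A s *ᵥ (p + K *ᵥ q) + (p - K *ᵥ q))

/-- `q`-component. -/
def stQ (K A : Matrix ι ι ℂ) (s : ℝ) (p q : ι → ℂ) : ι → ℂ :=
  (1/2 : ℂ) • (K *ᵥ (flowE K A s *ᵥ (p + K *ᵥ q) - (p - K *ᵥ q)))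

lemma re_qp_aux {K : Matrix ι ι ℂ} (hK2 : K * K = 1) (hKh : Kᴴ = K) (r r' : ι → ℂ) :
    (star ((1/2 : ℂ) • (K *ᵥ (r - r'))) ⬝ᵥ ((1/2 : ℂ) • (r + r'))).re =
      1/4 * ((star r ⬝ᵥ K *ᵥ r).re - (star r' ⬝ᵥ K *ᵥ r').re) := by
  rw [star_smul, smul_dotProduct, dotProduct_smul, star_mulVec_dot hKh, star_sub, Matrix.mulVec_add,
    sub_dotProduct, dotProduct_add, dotProduct_add]
  have h1 := re_star_dot_comm r (K *ᵥ r')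
  rw [star_mulVec_dot hKh] at h1
  have : (star (1/2 : ℂ) • (1/2 : ℂ) • (star r ⬝ᵥ K *ᵥ r + star r ⬝ᵥ K *ᵥ r' - (star r' ⬝ᵥ K *ᵥ r + star r' ⬝ᵥ K *ᵥ r'))) =
    ((1/4 : ℝ) : ℂ) * (star r ⬝ᵥ K *ᵥ r + star r ⬝ᵥ K *ᵥ r' - (star r' ⬝ᵥ K *ᵥ r + star r' ⬝ᵥ K *ᵥ r')) := by
    simp [smul_eq_mul]; ring
  rw [this, Complex.re_ofReal_mul]
  simp only [Complex.sub_re, Complex.add_re]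
  rw [h1]; ring

lemma state_mono {K A : Matrix ι ι ℂ} (hK2 : K * K = 1) (hKh : Kᴴ = K)
    (hAp : ∀ x : ι → ℂ, 0 ≤ (star x ⬝ᵥ A *ᵥ x).re) (p q : ι → ℂ) {s : ℝ} (hs : 0 ≤ s) :
    (star q ⬝ᵥ p).re ≤ (star (stQ K A s p q) ⬝ᵥ stP K A s p q).re := by
  rw [stP, stQ, re_qp_aux hK2 hKh]
  have h1 := flow_mono hK2 hKh hAp (p + K *ᵥ q) hs
  have h2 := re_qp_aux hK2 hKh (p + K *ᵥ q) (p - K *ᵥ q)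
  have e1 : (1/2 : ℂ) • (K *ᵥ (p + K *ᵥ q - (p - K *ᵥ q))) = q := by
    have : p + K *ᵥ q - (p - K *ᵥ q) = (2 : ℂ) • (K *ᵥ q) := by rw [two_smul]; abel
    rw [this, Matrix.mulVec_smul, Matrix.mulVec_mulVec, hK2, Matrix.one_mulVec, smul_smul]; norm_num
  have e2 : (1/2 : ℂ) • (p + K *ᵥ q + (p - K *ᵥ q)) = p := by
    have : p + K *ᵥ q + (p - K *ᵥ q) = (2 : ℂ) • p := by rw [two_smul]; abel
    rw [this, smul_smul]; norm_num
  rw [e1, e2] at h2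
  rw [h2]; linarith
end Mono

section DetBound
variable {ι : Type*} [Fintype ι] [DecidableEq ι]

/-- The matrix `N` whose determinant governs the decay. -/
def Nmat (K A : Matrix ι ι ℂ) (ρ ε : ℝ) (s : ℝ) : Matrix ι ι ℂ :=
  (1/2 : ℂ) • ((1 + (ρ : ℂ) • K) * flowE K A s * (1 + (ε : ℂ) • K)
    + (1 - (ρ : ℂ) • K) * (1 - (ε : ℂ) • K))

lemma stP_add_stQ (K A : Matrix ι ι ℂ) (ρ : ℝ) (s : ℝ) (p q : ι → ℂ) :
    stP K A s p q + (ρ : ℂ) • stQ K A s p q =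
      (1/2 : ℂ) • ((1 + (ρ : ℂ) • K) *ᵥ (flowE K A s *ᵥ (p + K *ᵥ q)) +
        (1 - (ρ : ℂ) • K) *ᵥ (p - K *ᵥ q)) := by
  unfold stP stQ
  generalize flowE K A s *ᵥ (p + K *ᵥ q) = r
  generalize p - K *ᵥ q = r'
  rw [Matrix.add_mulVec, Matrix.sub_mulVec, Matrix.one_mulVec, Matrix.one_mulVec, Matrix.smul_mulVec,
    Matrix.smul_mulVec, Matrix.mulVec_sub]
  ext i
  simp
  ring

lemma Nmat_mulVec (K A : Matrix ι ι ℂ) (ρ ε s : ℝ) (x : ι → ℂ) :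
    Nmat K A ρ ε s *ᵥ x = stP K A s x ((ε : ℂ) • x) + (ρ : ℂ) • stQ K A s x ((ε : ℂ) • x) := by
  rw [stP_add_stQ, Nmat, Matrix.smul_mulVec, Matrix.add_mulVec, ← Matrix.mulVec_mulVec,
    ← Matrix.mulVec_mulVec, ← Matrix.mulVec_mulVec]
  simp [Matrix.add_mulVec, Matrix.sub_mulVec, Matrix.smul_mulVec, Matrix.mulVec_smul]

lemma star_dot_self_re (x : ι → ℂ) : (star x ⬝ᵥ x).re = ∑ i, ‖x i‖ ^ 2 := by
  simp only [dotProduct, Pi.star_apply, Complex.re_sum]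
  refine Finset.sum_congr rfl fun i _ => ?_
  simp [← Complex.normSq_eq_norm_sq, Complex.normSq_apply]

lemma star_dot_self_nonneg (x : ι → ℂ) : 0 ≤ (star x ⬝ᵥ x).re := by
  rw [star_dot_self_re]; positivity

lemma eq_zero_of_star_dot_self {x : ι → ℂ} (h : (star x ⬝ᵥ x).re ≤ 0) : x = 0 := by
  rw [star_dot_self_re] at h
  have h0 := le_antisymm h (Finset.sum_nonneg fun i _ => by positivity)
  rw [Finset.sum_eq_zero_iff_of_nonneg (fun i _ => by positivity)] at h0
  ext i
  simpa using h0 i (Finset.mem_univ i)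

lemma norm_add_rho {p q : ι → ℂ} {ρ : ℝ} (hρ : 0 ≤ ρ) (h : 0 ≤ (star q ⬝ᵥ p).re) :
    ρ ^ 2 * (star q ⬝ᵥ q).re ≤ (star (p + (ρ : ℂ) • q) ⬝ᵥ (p + (ρ : ℂ) • q)).re := by
  have h1 := re_star_dot_comm p q
  have h2 := star_dot_self_nonneg p
  have : star (p + (ρ : ℂ) • q) ⬝ᵥ (p + (ρ : ℂ) • q) =
      star p ⬝ᵥ p + (ρ : ℂ) * (star p ⬝ᵥ q) + (ρ : ℂ) * (star q ⬝ᵥ p) + ((ρ ^ 2 : ℝ) : ℂ) * (star q ⬝ᵥ q) := by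
    simp [star_add, star_smul, add_dotProduct, dotProduct_add, smul_dotProduct, dotProduct_smul]
    ring
  rw [this]
  simp only [Complex.add_re, Complex.re_ofReal_mul]
  rw [h1]
  nlinarith [mul_nonneg hρ h]

variable {K A : Matrix ι ι ℂ}

lemma Nmat_inj (hK2 : K * K = 1) (hKh : Kᴴ = K)
    (hAp : ∀ x : ι → ℂ, 0 ≤ (star x ⬝ᵥ A *ᵥ x).re) {ρ s : ℝ} (hρ : 0 < ρ) (hs : 0 ≤ s) :
    (Nmat K A ρ 0 s).det ≠ 0 := by
  intro h0
  obtain ⟨x, hx, h⟩ := Matrix.exists_mulVec_eq_zero_iff.2 h0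
  apply hx
  rw [Nmat_mulVec] at h
  have hm := state_mono hK2 hKh hAp x (((0 : ℝ) : ℂ) • x) hs
  have hm' : 0 ≤ (star (stQ K A s x (((0 : ℝ) : ℂ) • x)) ⬝ᵥ stP K A s x (((0 : ℝ) : ℂ) • x)).re := by
    simpa using hm
  have h1 := norm_add_rho hρ.le hm'
  rw [h] at h1
  simp only [star_zero, zero_dotProduct, Complex.zero_re] at h1
  have hq : stQ K A s x (((0 : ℝ) : ℂ) • x) = 0 := by
    apply eq_zero_of_star_dot_self
    have : 0 < ρ ^ 2 := by positivity
    nlinarith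
  rw [hq] at h
  have hp : stP K A s x (((0 : ℝ) : ℂ) • x) = 0 := by simpa using h
  have hKK : ∀ z : ι → ℂ, K *ᵥ (K *ᵥ z) = z := fun z => by
    rw [Matrix.mulVec_mulVec, hK2, Matrix.one_mulVec]
  have e : x = stP K A s x (((0 : ℝ) : ℂ) • x) - K *ᵥ stQ K A s x (((0 : ℝ) : ℂ) • x) := by
    have hz : K *ᵥ (((0 : ℝ) : ℂ) • x) = 0 := by simp
    unfold stP stQ
    rw [hz, Matrix.mulVec_smul, hKK]
    ext i; simp; ring
  rw [e, hp, hq]; simp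

lemma entry_bound_of_norm {T : Matrix ι ι ℂ} {c : ℝ} (hc : 0 ≤ c)
    (h : ∀ y, (star (T *ᵥ y) ⬝ᵥ (T *ᵥ y)).re ≤ c ^ 2 * (star y ⬝ᵥ y).re) (i j : ι) : ‖T i j‖ ≤ c := by
  have h1 := h (Pi.single j 1)
  rw [star_dot_self_re, star_dot_self_re] at h1
  have h2 : ∑ i, ‖(Pi.single j (1 : ℂ) : ι → ℂ) i‖ ^ 2 = 1 := by
    rw [Finset.sum_eq_single j]
    · simp
    · intro b _ hb; simp [hb]
    · simp
  rw [h2, mul_one] at h1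
  have h3 : ‖T i j‖ ^ 2 ≤ c ^ 2 := by
    refine le_trans ?_ h1
    have := Finset.single_le_sum (f := fun i => ‖(T *ᵥ (Pi.single j (1 : ℂ) : ι → ℂ)) i‖ ^ 2)
      (fun i _ => by positivity) (Finset.mem_univ i)
    simpa using this
  exact (sq_le_sq₀ (norm_nonneg _) hc).1 h3

lemma Tprime_bound (hK2 : K * K = 1) (hKh : Kᴴ = K)
    (hAp : ∀ x : ι → ℂ, 0 ≤ (star x ⬝ᵥ A *ᵥ x).re) {ρ s : ℝ} (hρ : 0 < ρ) (hs : 0 ≤ s) (i j : ι) :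
    ‖(((1/2 : ℂ) • (K * (flowE K A s - 1))) * (Nmat K A ρ 0 s)⁻¹) i j‖ ≤ 1 / ρ := by
  have hdet := Nmat_inj hK2 hKh hAp hρ hs
  apply entry_bound_of_norm (by positivity)
  intro y
  set x := (Nmat K A ρ 0 s)⁻¹ *ᵥ y with hx
  have hy : y = Nmat K A ρ 0 s *ᵥ x := by
    rw [hx, Matrix.mulVec_mulVec, Matrix.mul_nonsing_inv _ (isUnit_iff_ne_zero.2 hdet), Matrix.one_mulVec]
  have hq : (((1/2 : ℂ) • (K * (flowE K A s - 1))) * (Nmat K A ρ 0 s)⁻¹) *ᵥ y =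
      stQ K A s x (((0 : ℝ) : ℂ) • x) := by
    rw [← Matrix.mulVec_mulVec, ← hx, Matrix.smul_mulVec, ← Matrix.mulVec_mulVec, Matrix.sub_mulVec]
    simp [stQ]
  rw [hq]
  have hm := state_mono hK2 hKh hAp x (((0 : ℝ) : ℂ) • x) hs
  have hm' : 0 ≤ (star (stQ K A s x (((0 : ℝ) : ℂ) • x)) ⬝ᵥ stP K A s x (((0 : ℝ) : ℂ) • x)).re := by
    simpa using hm
  have h1 := norm_add_rho hρ.le hm'
  rw [← Nmat_mulVec, ← hy] at h1
  rw [div_pow, one_pow, one_div, inv_mul_eq_div, le_div_iff₀ (by positivity)]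
  linarith

lemma det_one_add_accretive {T : Matrix ι ι ℂ} (hT : ∀ x, 0 ≤ (star x ⬝ᵥ T *ᵥ x).re) {ε : ℝ} (hε : 0 ≤ ε) :
    1 ≤ ‖(1 + (ε : ℂ) • T).det‖ := by
  have h := det_aeval_eq_prod T (1 + Polynomial.C (ε : ℂ) * Polynomial.X)
  have e : Polynomial.aeval T (1 + Polynomial.C (ε : ℂ) * Polynomial.X) = 1 + (ε : ℂ) • T := by
    simp [Algebra.algebraMap_eq_smul_one]
  rw [e] at h
  rw [h]
  have hr : ∀ w ∈ T.charpoly.roots, 1 ≤ ‖(1 + Polynomial.C (ε : ℂ) * Polynomial.X).eval w‖ := by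
    intro w hw
    obtain ⟨v, hv, hev⟩ := exists_eigvec_of_mem_roots T hw
    have h1 := hT v
    rw [hev, dotProduct_smul, smul_eq_mul] at h1
    have him : (star v ⬝ᵥ v).im = 0 := by
      simp only [dotProduct, Pi.star_apply, Complex.im_sum]
      refine Finset.sum_eq_zero fun i _ => ?_
      simp; ring
    rw [Complex.mul_re, him, mul_zero, sub_zero] at h1
    have hpos : 0 < (star v ⬝ᵥ v).re := by
      by_contra hcon
      exact hv (eq_zero_of_star_dot_self (not_lt.1 hcon))
    have hw0 : 0 ≤ w.re := by
      by_contra hcon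
      nlinarith [not_le.1 hcon]
    refine le_trans ?_ (Complex.re_le_norm _)
    simp
    positivity
  generalize T.charpoly.roots = R at hr
  clear h
  induction R using Multiset.induction_on with
  | empty => simp
  | cons a R ih =>
    rw [Multiset.map_cons, Multiset.prod_cons, norm_mul]
    have h1 := hr a (Multiset.mem_cons_self a R)
    have h2 := ih (fun w hw => hr w (Multiset.mem_cons_of_mem hw))
    nlinarith

lemma Nmat_eps (hK2 : K * K = 1) (hKh : Kᴴ = K)
    (hAp : ∀ x : ι → ℂ, 0 ≤ (star x ⬝ᵥ A *ᵥ x).re) {ρ ε s : ℝ} (hρ : 0 < ρ) (hε : 0 ≤ ε) (hs : 0 ≤ s) :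
    ‖(Nmat K A ρ 0 s).det‖ ≤ ‖(Nmat K A ρ ε s).det‖ := by
  have hdet := Nmat_inj hK2 hKh hAp hρ hs
  set B : Matrix ι ι ℂ := (1/2 : ℂ) • ((1 + (ρ : ℂ) • K) * flowE K A s * K - (1 - (ρ : ℂ) • K) * K) with hB
  have e1 : Nmat K A ρ ε s = Nmat K A ρ 0 s + (ε : ℂ) • B := by
    rw [hB, Nmat, Nmat]
    simp only [Matrix.mul_add, Matrix.mul_sub, Matrix.mul_one, Matrix.mul_smul, Complex.ofReal_zero, zero_smul,
      add_zero, sub_zero, smul_add, smul_sub]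
    rw [smul_comm (ε : ℂ) (1/2 : ℂ) , smul_comm (ε : ℂ) (1/2 : ℂ)]
    abel
  set T := (Nmat K A ρ 0 s)⁻¹ * B with hTdef
  have e2 : Nmat K A ρ ε s = Nmat K A ρ 0 s * (1 + (ε : ℂ) • T) := by
    rw [e1, Matrix.mul_add, Matrix.mul_one, Matrix.mul_smul, hTdef, ← Matrix.mul_assoc,
      Matrix.mul_nonsing_inv _ (isUnit_iff_ne_zero.2 hdet), Matrix.one_mul]
  have hT : ∀ x, 0 ≤ (star x ⬝ᵥ T *ᵥ x).re := by
    intro x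
    set y := T *ᵥ x with hy
    have hNy : Nmat K A ρ 0 s *ᵥ y = B *ᵥ x := by
      rw [hy, Matrix.mulVec_mulVec, hTdef, ← Matrix.mul_assoc,
        Matrix.mul_nonsing_inv _ (isUnit_iff_ne_zero.2 hdet), Matrix.one_mul]
    have hz : stP K A s y (-x) + (ρ : ℂ) • stQ K A s y (-x) = 0 := by
      rw [stP_add_stQ]
      have : Nmat K A ρ 0 s *ᵥ y - B *ᵥ x = 0 := by rw [hNy, sub_self]
      rw [← this, Nmat, hB]
      simp only [Complex.ofReal_zero, zero_smul, add_zero, sub_zero, Matrix.mul_one]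
      simp only [Matrix.smul_mulVec, Matrix.add_mulVec, Matrix.sub_mulVec, Matrix.one_mulVec,
        ← Matrix.mulVec_mulVec, Matrix.mulVec_add, Matrix.mulVec_neg, sub_neg_eq_add, Matrix.mulVec_sub]
      module
    have hm := state_mono hK2 hKh hAp y (-x) hs
    have hp : stP K A s y (-x) = -((ρ : ℂ) • stQ K A s y (-x)) := eq_neg_of_add_eq_zero_left hz
    rw [hp, dotProduct_neg, dotProduct_smul, star_neg, neg_dotProduct, Complex.neg_re, Complex.neg_re,
      smul_eq_mul, Complex.re_ofReal_mul] at hm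
    have := mul_nonneg hρ.le (star_dot_self_nonneg (stQ K A s y (-x)))
    linarith
  rw [e2, Matrix.det_mul, norm_mul]
  have := det_one_add_accretive hT hε
  nlinarith [norm_nonneg (Nmat K A ρ 0 s).det]

end DetBound

section DetBound2
variable {ι : Type*} [Fintype ι] [DecidableEq ι] {K A : Matrix ι ι ℂ}

/-- total growth rate of the flow -/
def growth (M : Matrix ι ι ℂ) : ℝ := (M.charpoly.roots.map (fun z => max z.re 0)).sum

lemma exists_proj_poly (R : Finset ℂ) :
    ∃ h : Polynomial ℂ, ∀ w ∈ R, h.eval w = if 0 < w.re then 1 else 0 := by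
  refine ⟨Lagrange.interpolate R id (fun w => if 0 < w.re then 1 else 0), fun w hw => ?_⟩
  have := Lagrange.eval_interpolate_at_node (s := R) (v := id) (fun w : ℂ => if 0 < w.re then (1 : ℂ) else 0)
    (Function.injective_id.injOn) hw
  simpa using this

lemma prod_lower (f : ℂ → ℂ) (g : ℂ → ℝ) (R : Multiset ℂ) (hg : ∀ w ∈ R, Real.exp (g w) ≤ ‖f w‖) :
    Real.exp ((R.map g).sum) ≤ ‖(R.map f).prod‖ := by
  induction R using Multiset.induction_on with
  | empty => simp
  | cons a R ih =>
    rw [Multiset.map_cons, Multiset.sum_cons, Multiset.map_cons, Multiset.prod_cons, norm_mul, Real.exp_add]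
    exact mul_le_mul (hg a (Multiset.mem_cons_self a R))
      (ih (fun w hw => hg w (Multiset.mem_cons_of_mem hw))) (Real.exp_pos _).le (norm_nonneg _)

lemma factor_lower {ρ s : ℝ} (hρ : 0 ≤ ρ) (hs : 0 ≤ s) {w : ℂ} (hw : 0 < w.re) :
    Real.exp (s * w.re) * (1 + ρ / 2 * (1 - Real.exp (-(s * w.re)))) ≤
      ‖1 + (((1 + ρ / 2 : ℝ)) : ℂ) * (Complex.exp (s * w) - 1)‖ := by
  have h1 : 1 + (((1 + ρ / 2 : ℝ)) : ℂ) * (Complex.exp (s * w) - 1) =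
    (((1 + ρ / 2 : ℝ)) : ℂ) * Complex.exp (s * w) - ((ρ / 2 : ℝ) : ℂ) := by push_cast; ring
  rw [h1]
  have h2 := norm_sub_norm_le ((((1 + ρ / 2 : ℝ)) : ℂ) * Complex.exp (s * w)) ((ρ / 2 : ℝ) : ℂ)
  rw [norm_mul, Complex.norm_real, Complex.norm_real, Complex.norm_exp, Real.norm_of_nonneg (by positivity),
    Real.norm_of_nonneg (by positivity)] at h2
  have h3 : ((s : ℂ) * w).re = s * w.re := by simp
  rw [h3] at h2
  refine le_trans (le_of_eq ?_) h2
  have : Real.exp (s * w.re) * Real.exp (-(s * w.re)) = 1 := by rw [← Real.exp_add]; simp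
  linear_combination (-(ρ / 2)) * this

lemma det_proj_lower (M : Matrix ι ι ℂ) (h : Polynomial ℂ)
    (hh : ∀ w ∈ M.charpoly.roots, h.eval w = if 0 < w.re then 1 else 0)
    {w0 : ℂ} (hw0 : w0 ∈ M.charpoly.roots) (hw0' : 0 < w0.re) {ρ s : ℝ} (hρ : 0 ≤ ρ) (hs : 0 ≤ s) :
    Real.exp (s * growth M) * (1 + ρ / 2 * (1 - Real.exp (-(s * w0.re)))) ≤
     ‖(1 + ((((1 + ρ / 2 : ℝ)) : ℂ) • Polynomial.aeval M h) * (NormedSpace.exp ((s : ℂ) • M) - 1)).det‖ := by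
  obtain ⟨q, hq, hqe⟩ := exists_poly_exp M (s : ℂ)
  have e : (1 + ((((1 + ρ / 2 : ℝ)) : ℂ) • Polynomial.aeval M h) * (NormedSpace.exp ((s : ℂ) • M) - 1)) =
      Polynomial.aeval M (1 + (Polynomial.C (((1 + ρ / 2 : ℝ)) : ℂ) * h) * (q - 1)) := by
    rw [hq]
    simp only [map_add, map_one, map_mul, map_sub, Polynomial.aeval_C, Algebra.algebraMap_eq_smul_one,
      smul_mul_assoc, one_mul]
  rw [e, det_aeval_eq_prod]
  set f : ℂ → ℂ := fun w => Polynomial.eval w (1 + (Polynomial.C (((1 + ρ / 2 : ℝ)) : ℂ) * h) * (q - 1)) with hf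
  have hfw : ∀ w ∈ M.charpoly.roots, 0 < w.re → f w = 1 + (((1 + ρ / 2 : ℝ)) : ℂ) * (Complex.exp (s * w) - 1) := by
    intro w hw hwr
    simp [hf, hh w hw, hqe w hw, hwr]
  have hfw' : ∀ w ∈ M.charpoly.roots, ¬ 0 < w.re → f w = 1 := by
    intro w hw hwr
    simp [hf, hh w hw, hwr]
  have hstep : ∀ w ∈ M.charpoly.roots, Real.exp (s * max w.re 0) ≤ ‖f w‖ := by
    intro w hw
    by_cases hwr : 0 < w.re
    · rw [hfw w hw hwr, max_eq_left hwr.le]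
      refine le_trans ?_ (factor_lower hρ hs hwr)
      have : Real.exp (-(s * w.re)) ≤ 1 := by
        rw [Real.exp_le_one_iff]; have := mul_nonneg hs hwr.le; linarith
      have h2 : 0 ≤ ρ / 2 * (1 - Real.exp (-(s * w.re))) := mul_nonneg (by positivity) (by linarith)
      nlinarith [Real.exp_pos (s * w.re)]
    · rw [hfw' w hw hwr, max_eq_right (not_lt.1 hwr)]; simp
  obtain ⟨R, hR⟩ := Multiset.exists_cons_of_mem hw0
  have hg : s * growth M = s * w0.re + (R.map (fun w => s * max w.re 0)).sum := by
    rw [growth, hR, Multiset.map_cons, Multiset.sum_cons, mul_add, max_eq_left hw0'.le,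
      Multiset.sum_map_mul_left]
  have h1 : ‖f w0‖ * ‖(R.map f).prod‖ = ‖(M.charpoly.roots.map f).prod‖ := by
    rw [hR, Multiset.map_cons, Multiset.prod_cons, norm_mul]
  rw [← h1, hg, Real.exp_add, hfw w0 hw0 hw0']
  have h2 := factor_lower (ρ := ρ) hρ hs hw0'
  have h3 := prod_lower f (fun w => s * max w.re 0) R (fun w hw => hstep w (by rw [hR]; exact Multiset.mem_cons_of_mem hw))
  calc _ = (Real.exp (s * w0.re) * (1 + ρ / 2 * (1 - Real.exp (-(s * w0.re))))) *
        Real.exp ((R.map (fun w => s * max w.re 0)).sum) := by ring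
    _ ≤ _ := mul_le_mul h2 h3 (Real.exp_pos _).le (norm_nonneg _)

lemma gain_lower {κ ρ s : ℝ} (hκ : 0 < κ) (hρ : 0 ≤ ρ) (hs : 0 ≤ s) :
    (κ / (2 * (1 + κ))) * (ρ * (s / (1 + s))) ≤ 1 + ρ / 2 * (1 - Real.exp (-(s * κ))) := by
  have hsk : 0 ≤ s * κ := by positivity
  have h1 : Real.exp (-(s * κ)) ≤ 1 / (1 + s * κ) := by
    rw [Real.exp_neg, ← one_div]
    exact one_div_le_one_div_of_le (by positivity) (by linarith [Real.add_one_le_exp (s * κ)])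
  have h2 : κ / (1 + κ) * (s / (1 + s)) ≤ 1 - 1 / (1 + s * κ) := by
    have : 1 - 1 / (1 + s * κ) = (s * κ) / (1 + s * κ) := by field_simp; ring
    rw [this, div_mul_div_comm, mul_comm κ s]
    apply div_le_div_of_nonneg_left hsk (by positivity)
    nlinarith
  have h3 : ρ / 2 * (κ / (1 + κ) * (s / (1 + s))) ≤ ρ / 2 * (1 - Real.exp (-(s * κ))) :=
    mul_le_mul_of_nonneg_left (by linarith) (by positivity)
  have h4 : (κ / (2 * (1 + κ))) * (ρ * (s / (1 + s))) = ρ / 2 * (κ / (1 + κ) * (s / (1 + s))) := by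
    field_simp
  rw [h4]; linarith

/-- entrywise bound -/
lemma exists_entry_bound (M : Matrix ι ι ℂ) : ∃ C : ℝ, 0 ≤ C ∧ ∀ i j, ‖M i j‖ ≤ C := by
  refine ⟨∑ i, ∑ j, ‖M i j‖, by positivity, fun i j => ?_⟩
  refine le_trans ?_ (Finset.single_le_sum (f := fun i => ∑ j, ‖M i j‖) (fun i _ => by positivity) (Finset.mem_univ i))
  exact Finset.single_le_sum (f := fun j => ‖M i j‖) (fun i _ => by positivity) (Finset.mem_univ j)

lemma mul_entry_bound {M N : Matrix ι ι ℂ} {a b : ℝ} (ha : 0 ≤ a) (hM : ∀ i j, ‖M i j‖ ≤ a) (hN : ∀ i j, ‖N i j‖ ≤ b)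
    (i j : ι) : ‖(M * N) i j‖ ≤ Fintype.card ι * (a * b) := by
  rw [Matrix.mul_apply]
  refine (norm_sum_le _ _).trans ?_
  calc _ ≤ ∑ k : ι, a * b := Finset.sum_le_sum fun k _ => by
        rw [norm_mul]; exact mul_le_mul (hM i k) (hN k j) (norm_nonneg _) ha
    _ = _ := by simp

theorem detN_lower (hK2 : K * K = 1) (hKh : Kᴴ = K)
    (hAp : ∀ x : ι → ℂ, 0 ≤ (star x ⬝ᵥ A *ᵥ x).re) (hgr : 0 < growth ((2 : ℂ) • (K * A))) :
    ∃ c : ℝ, 0 < c ∧ ∀ ρ ε s : ℝ, 0 < ρ → 0 ≤ ε → 0 ≤ s →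
      c * (ρ / (1 + ρ)) ^ (Fintype.card ι) * (Real.exp (s * growth ((2 : ℂ) • (K * A))) * (ρ * (s / (1 + s)))) ≤
        ‖(Nmat K A ρ ε s).det‖ := by
  set M := (2 : ℂ) • (K * A) with hM
  obtain ⟨w0, hw0, hw0'⟩ : ∃ w0 ∈ M.charpoly.roots, 0 < w0.re := by
    by_contra hcon
    push Not at hcon
    have : growth M = 0 := by
      rw [growth]
      apply Multiset.sum_eq_zero
      intro x hx
      obtain ⟨w, hw, rfl⟩ := Multiset.mem_map.1 hx
      exact max_eq_right (hcon w hw)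
    linarith
  obtain ⟨h, hh⟩ := exists_proj_poly M.charpoly.roots.toFinset
  have hh' : ∀ w ∈ M.charpoly.roots, h.eval w = if 0 < w.re then 1 else 0 :=
    fun w hw => hh w (Multiset.mem_toFinset.2 hw)
  obtain ⟨CK, hCK0, hCK⟩ := exists_entry_bound K
  obtain ⟨Ch, hCh0, hCh⟩ := exists_entry_bound (Polynomial.aeval M h * K)
  set d := Fintype.card ι with hd
  set C1 : ℝ := 2 * Ch + CK + 1 with hC1
  set C2 : ℝ := 1 + d * C1 with hC2
  have hC1' : 0 ≤ C1 := by positivity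
  have hC2' : 0 < C2 := by positivity
  set c : ℝ := (w0.re / (2 * (1 + w0.re))) / ((d.factorial : ℝ) * C2 ^ d) with hc
  have hfac : (0 : ℝ) < d.factorial := by exact_mod_cast d.factorial_pos
  have hc0 : 0 < c := by positivity
  refine ⟨c, hc0, fun ρ ε s hρ hε hs => ?_⟩
  refine le_trans ?_ (Nmat_eps hK2 hKh hAp hρ hε hs)
  have hdet := Nmat_inj hK2 hKh hAp hρ hs
  set X : Matrix ι ι ℂ := (((1 + ρ / 2 : ℝ)) : ℂ) • Polynomial.aeval M h with hX
  set Z : Matrix ι ι ℂ := (2 : ℂ) • (X * K) - K - (ρ : ℂ) • 1 with hZ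
  set T := ((1/2 : ℂ) • (K * (flowE K A s - 1))) * (Nmat K A ρ 0 s)⁻¹ with hT
  have key : 1 + X * (flowE K A s - 1) = (1 + Z * T) * Nmat K A ρ 0 s := by
    have e1 : T * Nmat K A ρ 0 s = (1/2 : ℂ) • (K * (flowE K A s - 1)) := by
      rw [hT, Matrix.mul_assoc, Matrix.nonsing_inv_mul _ (isUnit_iff_ne_zero.2 hdet), Matrix.mul_one]
    rw [Matrix.add_mul, Matrix.mul_assoc, e1, Matrix.one_mul, hZ, Nmat]
    obtain ⟨D, hD⟩ : ∃ D, flowE K A s = D + 1 := ⟨flowE K A s - 1, by simp⟩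
    rw [hD, add_sub_cancel_right]
    have e2 : X * K * (K * D) = X * D := by
      rw [Matrix.mul_assoc, ← Matrix.mul_assoc K K, hK2, Matrix.one_mul]
    have e3 : K * (K * D) = D := by
      rw [← Matrix.mul_assoc, hK2, Matrix.one_mul]
    simp only [Matrix.mul_smul, Matrix.sub_mul, Matrix.smul_mul, e2, e3, Matrix.one_mul, Matrix.add_mul,
      Complex.ofReal_zero, zero_smul, add_zero, sub_zero, Matrix.mul_one, Matrix.mul_add]
    module
  have hTb := fun i j => Tprime_bound hK2 hKh hAp hρ hs i j
  have hZb : ∀ i j, ‖Z i j‖ ≤ C1 * (1 + ρ) := by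
    intro i j
    have e : Z i j = ((2 * (1 + ρ / 2) : ℝ) : ℂ) * (Polynomial.aeval M h * K) i j - K i j - (ρ : ℂ) * (1 : Matrix ι ι ℂ) i j := by
      rw [hZ, hX, Matrix.smul_mul]; simp; ring
    rw [e]
    have h1 : ‖(1 : Matrix ι ι ℂ) i j‖ ≤ 1 := by
      rw [Matrix.one_apply]; split_ifs <;> simp
    have n1 := norm_sub_le (((2 * (1 + ρ / 2) : ℝ) : ℂ) * (Polynomial.aeval M h * K) i j - K i j) ((ρ : ℂ) * (1 : Matrix ι ι ℂ) i j)
    have n2 := norm_sub_le (((2 * (1 + ρ / 2) : ℝ) : ℂ) * (Polynomial.aeval M h * K) i j) (K i j)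
    rw [norm_mul, Complex.norm_real, Real.norm_of_nonneg (by positivity)] at n1 n2
    have m1 := mul_le_mul_of_nonneg_left (hCh i j) (by positivity : 0 ≤ 2 * (1 + ρ / 2))
    have m2 := mul_le_mul_of_nonneg_left h1 hρ.le
    have m3 := hCK i j
    rw [hC1]
    nlinarith
  have hE : ∀ i j, ‖(1 + Z * T) i j‖ ≤ C2 * ((1 + ρ) / ρ) := by
    intro i j
    have h1 : ‖(1 : Matrix ι ι ℂ) i j‖ ≤ 1 := by
      rw [Matrix.one_apply]; split_ifs <;> simp
    have h2 := mul_entry_bound (by positivity) hZb hTb i j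
    have h3 : (1 : ℝ) ≤ (1 + ρ) / ρ := by rw [le_div_iff₀ hρ]; linarith
    rw [Matrix.add_apply]
    refine (norm_add_le _ _).trans ?_
    have h4 : (d : ℝ) * (C1 * (1 + ρ) * (1 / ρ)) = d * C1 * ((1 + ρ) / ρ) := by ring
    rw [← hd, h4] at h2
    rw [hC2, add_mul, one_mul]
    linarith
  have hdle : ‖(1 + Z * T).det‖ ≤ (d.factorial : ℝ) * (C2 * ((1 + ρ) / ρ)) ^ d := by
    have := Matrix.det_le (A := 1 + Z * T) (abv := (NormedField.toAbsoluteValue ℂ)) (x := C2 * ((1 + ρ) / ρ)) hE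
    refine le_trans (le_of_eq rfl) (this.trans (le_of_eq ?_))
    rw [nsmul_eq_mul]
  have hlow := det_proj_lower M h hh' hw0 hw0' (ρ := ρ) hρ.le hs
  have hfl : NormedSpace.exp ((s : ℂ) • M) = flowE K A s := rfl
  rw [hfl, ← hX, key, Matrix.det_mul, norm_mul] at hlow
  have hgain := gain_lower (κ := w0.re) (ρ := ρ) (s := s) hw0' hρ.le hs
  set G := Real.exp (s * growth M)
  have hG : 0 < G := Real.exp_pos _
  have h5 : (w0.re / (2 * (1 + w0.re))) * (G * (ρ * (s / (1 + s)))) ≤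
      (d.factorial : ℝ) * (C2 * ((1 + ρ) / ρ)) ^ d * ‖(Nmat K A ρ 0 s).det‖ := by
    calc _ = G * ((w0.re / (2 * (1 + w0.re))) * (ρ * (s / (1 + s)))) := by ring
      _ ≤ G * (1 + ρ / 2 * (1 - Real.exp (-(s * w0.re)))) := mul_le_mul_of_nonneg_left hgain hG.le
      _ ≤ _ := hlow
      _ ≤ _ := mul_le_mul_of_nonneg_right hdle (norm_nonneg _)
  have h6 : c * (ρ / (1 + ρ)) ^ d * (G * (ρ * (s / (1 + s)))) =
      (w0.re / (2 * (1 + w0.re))) * (G * (ρ * (s / (1 + s)))) / ((d.factorial : ℝ) * (C2 * ((1 + ρ) / ρ)) ^ d) := by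
    rw [hc, div_pow, mul_pow, div_pow]
    field_simp
  rw [h6, div_le_iff₀ (by positivity)]
  linarith
end DetBound2

section Gauss
variable {ι : Type*} [Fintype ι] [DecidableEq ι]

/-- real vectors as complex vectors -/
def toC (v : ι → ℝ) : ι → ℂ := fun i => (v i : ℂ)

lemma spec_real (M1 : Matrix ι ι ℝ) (hH : M1.IsHermitian) :
    ∃ (U : Matrix ι ι ℝ) (l : ι → ℝ), Uᵀ * U = 1 ∧ M1 = U * diagonal l * Uᵀ ∧ l = hH.eigenvalues := by
  have hsp := hH.spectral_theorem
  refine ⟨(hH.eigenvectorUnitary : Matrix ι ι ℝ), hH.eigenvalues, ?_, ?_, rfl⟩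
  · have := (Matrix.mem_unitaryGroup_iff' (A := (hH.eigenvectorUnitary : Matrix ι ι ℝ))).1
      hH.eigenvectorUnitary.2
    simpa [star_eq_conjTranspose] using this
  · rw [Unitary.conjStarAlgAut_apply] at hsp
    simpa [star_eq_conjTranspose, Function.comp_def] using hsp

lemma simul_diag (M1 M2 : Matrix ι ι ℝ) (h1 : M1.PosDef) (h2 : M2.IsSymm) :
    ∃ (C : Matrix ι ι ℝ) (d : ι → ℝ), C.det ≠ 0 ∧ Cᵀ * M1 * C = 1 ∧ Cᵀ * M2 * C = diagonal d := by
  obtain ⟨U, l, hUU, hM1, hl⟩ := spec_real M1 h1.isHermitian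
  have hpos : ∀ i, 0 < l i := fun i => by rw [hl]; exact h1.eigenvalues_pos i
  clear hl
  set g : ι → ℝ := fun i => (Real.sqrt (l i))⁻¹
  set C1 := U * diagonal g with hC1
  have hC1M : C1ᵀ * M1 * C1 = 1 := by
    have : C1ᵀ * M1 * C1 = diagonal g * (Uᵀ * U) * diagonal l * (Uᵀ * U) * diagonal g := by
      rw [hC1, hM1]
      simp only [transpose_mul, diagonal_transpose, Matrix.mul_assoc]
    rw [this, hUU]
    simp only [Matrix.mul_one, diagonal_mul_diagonal]
    rw [← diagonal_one]
    congr 1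
    ext i
    have h := hpos i
    have h3 : Real.sqrt (l i) ≠ 0 := (Real.sqrt_pos.2 h).ne'
    simp only [g]
    field_simp
    rw [Real.sq_sqrt h.le]
  set B := C1ᵀ * M2 * C1 with hB
  have hBs : B.IsHermitian := by
    rw [Matrix.IsHermitian, conjTranspose_eq_transpose_of_trivial, hB]
    simp only [transpose_mul, transpose_transpose, Matrix.mul_assoc]
    rw [h2.eq]
  obtain ⟨V, d, hVV, hBd, -⟩ := spec_real B hBs
  have e1 : (C1 * V)ᵀ * M1 * (C1 * V) = 1 := by
    have : (C1 * V)ᵀ * M1 * (C1 * V) = Vᵀ * (C1ᵀ * M1 * C1) * V := by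
      simp only [transpose_mul, Matrix.mul_assoc]
    rw [this, hC1M, Matrix.mul_one, hVV]
  refine ⟨C1 * V, d, ?_, e1, ?_⟩
  · intro h0
    have := congrArg Matrix.det e1
    rw [Matrix.det_mul, h0] at this
    simp at this
  · have : (C1 * V)ᵀ * M2 * (C1 * V) = Vᵀ * B * V := by
      simp only [hB, transpose_mul, Matrix.mul_assoc]
    rw [this, hBd]
    have : Vᵀ * (V * diagonal d * Vᵀ) * V = (Vᵀ * V) * diagonal d * (Vᵀ * V) := by
      simp only [Matrix.mul_assoc]
    rw [this, hVV]; simp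

lemma toC_dot (v w : ι → ℝ) : toC v ⬝ᵥ toC w = ((v ⬝ᵥ w : ℝ) : ℂ) := by
  simp [toC, dotProduct]

lemma toC_mulVec (C : Matrix ι ι ℝ) (w : ι → ℝ) : toC (C *ᵥ w) = (C.map (fun x : ℝ => (x : ℂ))) *ᵥ toC w := by
  ext i; simp [toC, mulVec, dotProduct]

lemma quad_re (M : Matrix ι ι ℂ) (v : ι → ℝ) :
    (toC v ⬝ᵥ M *ᵥ toC v).re = v ⬝ᵥ (M.map Complex.re) *ᵥ v := by
  simp [toC, mulVec, dotProduct, Complex.re_sum]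

lemma gauss_cont (M : Matrix ι ι ℂ) (b : ι → ℝ) : Continuous (fun v : ι → ℝ =>
    cexp (-(1/2 : ℂ) * (toC v ⬝ᵥ M *ᵥ toC v) + I * ((b ⬝ᵥ v : ℝ) : ℂ))) := by
  unfold toC mulVec dotProduct
  fun_prop

lemma gauss_bound (M : Matrix ι ι ℂ) (hM : Mᵀ = M)
    (hpos : ∀ x : ι → ℝ, x ≠ 0 → 0 < (toC x ⬝ᵥ M *ᵥ toC x).re) (b : ι → ℝ) :
    ‖∫ v : ι → ℝ, cexp (-(1/2 : ℂ) * (toC v ⬝ᵥ M *ᵥ toC v) + I * ((b ⬝ᵥ v : ℝ) : ℂ))‖ ^ 2 * ‖M.det‖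
      ≤ (2 * Real.pi) ^ (Fintype.card ι) := by
  set M1 : Matrix ι ι ℝ := M.map Complex.re with hM1
  set M2 : Matrix ι ι ℝ := M.map Complex.im with hM2
  have s1 : M1.IsSymm := by
    rw [Matrix.IsSymm, hM1, ← Matrix.transpose_map, hM]
  have s2 : M2.IsSymm := by
    rw [Matrix.IsSymm, hM2, ← Matrix.transpose_map, hM]
  have p1 : M1.PosDef := by
    refine Matrix.PosDef.of_dotProduct_mulVec_pos ?_ ?_
    · rw [Matrix.IsHermitian, conjTranspose_eq_transpose_of_trivial, s1.eq]
    · intro x hx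
      have := hpos x hx
      rw [quad_re] at this
      simpa using this
  obtain ⟨C, d, hC, e1, e2⟩ := simul_diag M1 M2 p1 s2
  set Cc : Matrix ι ι ℂ := C.map (fun x : ℝ => (x : ℂ)) with hCc
  have hMdec : M = M1.map (fun x : ℝ => (x : ℂ)) + I • M2.map (fun x : ℝ => (x : ℂ)) := by
    ext i j
    simp only [hM1, hM2, Matrix.add_apply, Matrix.smul_apply, Matrix.map_apply, smul_eq_mul]
    rw [mul_comm, Complex.re_add_im]
  have mapmul : ∀ X Y : Matrix ι ι ℝ, (X * Y).map (fun x : ℝ => (x : ℂ)) =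
      X.map (fun x : ℝ => (x : ℂ)) * Y.map (fun x : ℝ => (x : ℂ)) := fun X Y => by
    ext i j; simp [Matrix.mul_apply]
  have key : Ccᵀ * M * Cc = diagonal (fun i => 1 + I * (d i : ℂ)) := by
    have f1 := congrArg (fun X : Matrix ι ι ℝ => X.map (fun x : ℝ => (x : ℂ))) e1
    have f2 := congrArg (fun X : Matrix ι ι ℝ => X.map (fun x : ℝ => (x : ℂ))) e2
    simp only [mapmul] at f1 f2
    rw [Matrix.transpose_map] at f1 f2
    rw [hMdec, Matrix.mul_add, Matrix.add_mul, hCc, Matrix.mul_smul, Matrix.smul_mul,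
      f1, f2]
    ext i j
    by_cases h : i = j
    · subst h; simp
    · simp [h, Matrix.diagonal_apply_ne _ h]
  have hdet : (C.det : ℂ) ^ 2 * M.det = ∏ i, (1 + I * (d i : ℂ)) := by
    have := congrArg Matrix.det key
    rw [det_mul, det_mul, det_transpose, det_diagonal] at this
    have h3 : Cc.det = (C.det : ℂ) := by
      rw [hCc]
      exact ((Complex.ofRealHom).map_det C).symm
    rw [← this, h3]; ring
  set f := (fun v : ι → ℝ => cexp (-(1/2 : ℂ) * (toC v ⬝ᵥ M *ᵥ toC v) + I * ((b ⬝ᵥ v : ℝ) : ℂ))) with hf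
  have hfc : Continuous f := gauss_cont M b
  have hch : ∫ w : ι → ℝ, f (C *ᵥ w) = ((|C.det|)⁻¹ : ℝ) • ∫ v, f v := by
    have h1 := Real.map_matrix_volume_pi_eq_smul_volume_pi hC
    have h2 := integral_map (μ := (volume : Measure (ι → ℝ))) (φ := Matrix.toLin' C)
      (LinearMap.continuous_of_finiteDimensional _).aemeasurable (f := f) hfc.aestronglyMeasurable
    rw [h1, integral_smul_measure] at h2
    rw [ENNReal.toReal_ofReal (abs_nonneg _), abs_inv] at h2
    simpa using h2.symm
  have hfC : ∀ w, f (C *ᵥ w) = cexp (-∑ i, ((1 + I * (d i : ℂ)) / 2) * (w i : ℂ) ^ 2 +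
      ∑ i, (I * (((Cᵀ *ᵥ b) i : ℝ) : ℂ)) * (w i : ℂ)) := by
    intro w
    rw [hf]
    simp only
    congr 2
    · rw [toC_mulVec, ← hCc, Matrix.mulVec_mulVec, Matrix.dotProduct_mulVec, Matrix.vecMul_mulVec,
        ]
      have : ((M * Cc)ᵀ * Cc) = (Ccᵀ * M * Cc) := by
        rw [transpose_mul, hM]
      rw [← Matrix.dotProduct_mulVec] at *
      rw [← Matrix.mul_assoc, key]
      simp only [mulVec_diagonal, dotProduct, toC]
      rw [← Finset.sum_neg_distrib, Finset.mul_sum]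
      refine Finset.sum_congr rfl fun i _ => ?_
      ring
    · have : b ⬝ᵥ C *ᵥ w = (Cᵀ *ᵥ b) ⬝ᵥ w := by
        rw [Matrix.dotProduct_mulVec, Matrix.mulVec_transpose]
      rw [this]
      simp only [dotProduct, Complex.ofReal_sum, Complex.ofReal_mul, Finset.mul_sum]
      refine Finset.sum_congr rfl fun i _ => ?_
      ring
  have hre : ∀ i, 0 < ((1 + I * (d i : ℂ)) / 2).re := fun i => by
    simp
  have hG := GaussianFourier.integral_cexp_neg_sum_mul_add (b := fun i => (1 + I * (d i : ℂ)) / 2) hre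
    (fun i => I * (((Cᵀ *ᵥ b) i : ℝ) : ℂ))
  have hch2 : ((|C.det|)⁻¹ : ℝ) * ‖∫ v, f v‖ ≤ ∏ i, Real.sqrt (2 * Real.pi / ‖1 + I * (d i : ℂ)‖) := by
    have := congrArg norm hch
    rw [norm_smul, Real.norm_of_nonneg (by positivity)] at this
    rw [← this]
    simp only [hfC]
    rw [hG, norm_prod]
    refine Finset.prod_le_prod (fun _ _ => norm_nonneg _) fun i _ => ?_
    rw [norm_mul]
    have h1 : ‖((Real.pi : ℂ) / ((1 + I * (d i : ℂ)) / 2)) ^ (1 / 2 : ℂ)‖ = Real.sqrt (2 * Real.pi / ‖1 + I * (d i : ℂ)‖) := by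
      rw [show (1 / 2 : ℂ) = ((1 / 2 : ℝ) : ℂ) by norm_num, Complex.norm_cpow_real, Real.sqrt_eq_rpow]
      congr 1
      rw [norm_div, norm_div, Complex.norm_real, Real.norm_of_nonneg Real.pi_pos.le]
      simp
      field_simp
    rw [h1]
    refine mul_le_of_le_one_right (Real.sqrt_nonneg _) ?_
    rw [Complex.norm_exp]
    refine Real.exp_le_one_iff.2 ?_
    have h2 : ((I * (((Cᵀ *ᵥ b) i : ℝ) : ℂ)) ^ 2 / (4 * ((1 + I * (d i : ℂ)) / 2))) =
        -(((((Cᵀ *ᵥ b) i) ^ 2 / 2 : ℝ) : ℂ) * (1 + I * (d i : ℂ))⁻¹) := by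
      rw [mul_pow, Complex.I_sq]
      push_cast
      rw [div_eq_mul_inv]
      rw [show (4 * ((1 + I * (d i : ℂ)) / 2)) = 2 * (1 + I * (d i : ℂ)) by ring, mul_inv]
      ring
    rw [h2, Complex.neg_re, Complex.re_ofReal_mul, Complex.inv_re]
    have h3 : 0 ≤ (1 + I * (d i : ℂ)).re / Complex.normSq (1 + I * (d i : ℂ)) := by
      refine div_nonneg ?_ (Complex.normSq_nonneg _)
      simp
    have := mul_nonneg (by positivity : 0 ≤ ((Cᵀ *ᵥ b) i) ^ 2 / 2) h3
    linarith
  have hn := congrArg norm hdet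
  rw [norm_mul, norm_prod, norm_pow, Complex.norm_real, Real.norm_eq_abs] at hn
  have hCp : 0 < |C.det| := abs_pos.2 hC
  have hprod : 0 < ∏ i, ‖1 + I * (d i : ℂ)‖ := Finset.prod_pos fun i _ => by
    rw [norm_pos_iff]
    intro h
    have := congrArg Complex.re h
    simp at this
  have hsq := pow_le_pow_left₀ (by positivity) hch2 2
  rw [← Finset.prod_pow] at hsq
  have hsq2 : ∏ i, Real.sqrt (2 * Real.pi / ‖1 + I * (d i : ℂ)‖) ^ 2 =
      (2 * Real.pi) ^ (Fintype.card ι) / ∏ i, ‖1 + I * (d i : ℂ)‖ := by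
    rw [← Finset.card_univ, ← Finset.prod_const, ← Finset.prod_div_distrib]
    refine Finset.prod_congr rfl fun i _ => ?_
    rw [Real.sq_sqrt (by positivity)]
  rw [hsq2, le_div_iff₀ hprod, ← hn, mul_pow] at hsq
  calc _ = (|C.det|⁻¹ ^ 2 * ‖∫ v, f v‖ ^ 2 * (|C.det| ^ 2 * ‖M.det‖)) := by
        field_simp
    _ ≤ _ := hsq
end Gauss

section WGauss
variable {ι : Type*} [Fintype ι] [DecidableEq ι]

/-- polynomial weight -/
def wt (v : ι → ℝ) : ℝ := 1 + (v ⬝ᵥ v) / 2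

lemma dot_self_nonneg' (v : ι → ℝ) : 0 ≤ v ⬝ᵥ v := by
  unfold dotProduct
  exact Finset.sum_nonneg fun i _ => mul_self_nonneg _

lemma one_le_wt (v : ι → ℝ) : 1 ≤ wt v := by
  have := dot_self_nonneg' v
  unfold wt; linarith

lemma wt_pos (v : ι → ℝ) : 0 < wt v := lt_of_lt_of_le one_pos (one_le_wt v)

lemma wt_cont : Continuous (wt : (ι → ℝ) → ℝ) := by
  unfold wt dotProduct; fun_prop

lemma norm_sq_le_dot (v : ι → ℝ) : ‖v‖ ^ 2 ≤ v ⬝ᵥ v := by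
  have h : ‖v‖ ≤ Real.sqrt (v ⬝ᵥ v) := by
    rw [pi_norm_le_iff_of_nonneg (Real.sqrt_nonneg _)]
    intro i
    refine Real.le_sqrt_of_sq_le ?_
    rw [Real.norm_eq_abs, sq_abs, sq]
    exact Finset.single_le_sum (f := fun i => v i * v i) (fun i _ => mul_self_nonneg _) (Finset.mem_univ i)
  calc ‖v‖ ^ 2 ≤ Real.sqrt (v ⬝ᵥ v) ^ 2 := by gcongr
    _ = _ := Real.sq_sqrt (dot_self_nonneg' v)

lemma wt_lower (v : ι → ℝ) : (1 + ‖v‖) / 2 ≤ wt v := by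
  have := norm_sq_le_dot v
  unfold wt
  nlinarith [sq_nonneg (‖v‖ - 1)]

lemma integrable_wt (k : ℕ) (hk : Fintype.card ι < k) :
    Integrable (fun v : ι → ℝ => ((wt v) ^ k)⁻¹) := by
  have h1 : Integrable (fun v : ι → ℝ => (2:ℝ) ^ k * (1 + ‖v‖) ^ (-(k:ℝ))) := by
    refine (integrable_one_add_norm ?_).const_mul _
    simpa using hk
  refine h1.mono ?_ (Filter.Eventually.of_forall fun v => ?_)
  · exact (Continuous.inv₀ (wt_cont.pow k) (fun v => (pow_pos (wt_pos v) k).ne')).aestronglyMeasurable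
  · have hp := wt_pos v
    rw [Real.norm_of_nonneg (by positivity), Real.norm_of_nonneg (by positivity),
      Real.rpow_neg (by positivity), Real.rpow_natCast]
    rw [inv_le_comm₀ (by positivity) (by positivity), mul_inv, inv_inv, ← inv_pow, ← mul_pow]
    refine pow_le_pow_left₀ (by positivity) ?_ k
    have := wt_lower v
    linarith

lemma gamma_rep (k : ℕ) {x : ℝ} (hx : 0 < x) :
    ∫ r in Set.Ioi (0:ℝ), r ^ (k+1) * Real.exp (-(x * r)) = Real.Gamma (k+2) * (x ^ (k+2))⁻¹ := by
  have := Real.integral_rpow_mul_exp_neg_mul_Ioi (a := (k:ℝ)+2) (by positivity) hx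
  rw [one_div, Real.inv_rpow hx.le, mul_comm] at this
  have h2 : x ^ ((k:ℝ)+2) = x ^ (k+2) := by
    rw [← Real.rpow_natCast]; norm_num
  rw [h2] at this
  rw [← this]
  refine setIntegral_congr_fun measurableSet_Ioi fun r hr => ?_
  congr 1
  rw [← Real.rpow_natCast]
  congr 1
  push_cast
  ring

lemma gamma_integrable (k : ℕ) {x : ℝ} (hx : 0 < x) :
    IntegrableOn (fun r : ℝ => r ^ (k+1) * Real.exp (-(x * r))) (Set.Ioi (0:ℝ)) := by
  have := integrableOn_rpow_mul_exp_neg_mul_rpow (s := ((k+1 : ℕ):ℝ)) (p := 1) (b := x) (by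
    have : (0:ℝ) ≤ ((k+1 : ℕ):ℝ) := by positivity
    linarith) one_pos hx
  refine this.congr_fun (fun r hr => ?_) measurableSet_Ioi
  simp only [Real.rpow_natCast, Real.rpow_one, neg_mul]

lemma poly_exp_integrable (k : ℕ) :
    IntegrableOn (fun r : ℝ => (1 + r) ^ k * Real.exp (-r)) (Set.Ioi (0:ℝ)) := by
  have h : IntegrableOn (fun r : ℝ => (2:ℝ)^k * (Real.exp (-r) + r ^ (k+1) * Real.exp (-(1*r)))) (Set.Ioi (0:ℝ)) := by
    refine Integrable.const_mul (Integrable.add ?_ (gamma_integrable k one_pos)) _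
    exact integrableOn_exp_neg_Ioi 0
  refine Integrable.mono' h (by fun_prop) ?_
  refine (ae_restrict_iff' measurableSet_Ioi).2 (Filter.Eventually.of_forall fun r hr => ?_)
  have hr0 : (0:ℝ) < r := hr
  rw [Real.norm_of_nonneg (by positivity), one_mul, ← one_add_mul, ← mul_assoc]
  refine mul_le_mul_of_nonneg_right ?_ (Real.exp_pos _).le
  by_cases h1 : r ≤ 1
  · calc (1 + r) ^ k ≤ 2 ^ k := pow_le_pow_left₀ (by positivity) (by linarith) k
      _ ≤ _ := le_mul_of_one_le_right (by positivity) (by have : 0 ≤ r^(k+1) := by positivity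
                                                          linarith)
  · push Not at h1
    calc (1 + r) ^ k ≤ (2 * r) ^ k := pow_le_pow_left₀ (by positivity) (by linarith) k
      _ = 2 ^ k * r ^ k := mul_pow _ _ _
      _ ≤ _ := by
        refine mul_le_mul_of_nonneg_left ?_ (by positivity)
        have : r ^ k ≤ r ^ (k+1) := pow_le_pow_right₀ h1.le (by omega)
        linarith

lemma wgauss_integrable (Z : Matrix ι ι ℂ) (hpos : ∀ x : ι → ℝ, 0 ≤ (toC x ⬝ᵥ Z *ᵥ toC x).re) (b : ι → ℝ) :
    Integrable (fun v : ι → ℝ => cexp (-(1/2 : ℂ) * (toC v ⬝ᵥ Z *ᵥ toC v) + I * ((b ⬝ᵥ v : ℝ) : ℂ)) *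
      (((wt v ^ (Fintype.card ι + 2))⁻¹ : ℝ) : ℂ)) := by
  refine (integrable_wt (ι := ι) (Fintype.card ι + 2) (by omega)).mono ?_ (Filter.Eventually.of_forall fun v => ?_)
  · refine ((gauss_cont Z b).mul (Complex.continuous_ofReal.comp ?_)).aestronglyMeasurable
    exact (Continuous.inv₀ (wt_cont.pow _) (fun v => (pow_pos (wt_pos v) _).ne'))
  · rw [norm_mul, Complex.norm_real]
    refine mul_le_of_le_one_left (norm_nonneg _) ?_
    rw [Complex.norm_exp]
    refine Real.exp_le_one_iff.2 ?_
    have := hpos v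
    rw [Complex.add_re, show (-(1/2 : ℂ)) = ((-(1/2) : ℝ) : ℂ) by push_cast; ring, Complex.re_ofReal_mul]
    simp
    linarith

lemma wgauss (ι : Type*) [Fintype ι] [DecidableEq ι] : ∃ C : ℝ, 0 < C ∧ ∀ (Z : Matrix ι ι ℂ) (κ : ℝ), Zᵀ = Z →
    (∀ x : ι → ℝ, 0 ≤ (toC x ⬝ᵥ Z *ᵥ toC x).re) → 0 < κ →
    (∀ r : ℝ, 0 < r → κ * (r ^ (Fintype.card ι + 1) / (1 + r) ^ (Fintype.card ι)) ≤ ‖(Z + (r : ℂ) • (1 : Matrix ι ι ℂ)).det‖) →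
    ∀ b : ι → ℝ, ‖∫ v : ι → ℝ, cexp (-(1/2 : ℂ) * (toC v ⬝ᵥ Z *ᵥ toC v) + I * ((b ⬝ᵥ v : ℝ) : ℂ)) *
      (((wt v ^ (Fintype.card ι + 2))⁻¹ : ℝ) : ℂ)‖ ≤ C * (Real.sqrt κ)⁻¹ := by
  set D := Fintype.card ι with hD
  set C0 : ℝ := ∫ r in Set.Ioi (0:ℝ), (1 + r) ^ (D+1) * Real.exp (-r) with hC0
  have hG : 0 < Real.Gamma (D+2) := Real.Gamma_pos_of_pos (by positivity)
  have hC0n : 0 ≤ C0 := setIntegral_nonneg measurableSet_Ioi fun r hr => by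
    have : (0:ℝ) < r := hr
    positivity
  refine ⟨(Real.Gamma (D+2))⁻¹ * Real.sqrt ((2 * Real.pi) ^ D) * (C0 + 1), by positivity, ?_⟩
  intro Z κ hZ hpos hκ hdet b
  set g : (ι → ℝ) → ℂ := fun v => cexp (-(1/2 : ℂ) * (toC v ⬝ᵥ Z *ᵥ toC v) + I * ((b ⬝ᵥ v : ℝ) : ℂ)) with hg
  set F : (ι → ℝ) → ℝ → ℂ := fun v r => g v * ((r ^ (D+1) * Real.exp (-(wt v * r)) : ℝ) : ℂ) with hF
  have hFi : ∀ v, ∫ r in Set.Ioi (0:ℝ), F v r = (Real.Gamma (D+2) : ℂ) * (g v * (((wt v ^ (D + 2))⁻¹ : ℝ) : ℂ)) := by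
    intro v
    simp only [hF]
    rw [integral_const_mul, integral_complex_ofReal, gamma_rep D (wt_pos v)]
    push_cast
    ring
  have hInt : Integrable (Function.uncurry F) (volume.prod (volume.restrict (Set.Ioi (0:ℝ)))) := by
    have hcont : Continuous (Function.uncurry F) := by
      have h1 : Continuous g := gauss_cont Z b
      have h2 := wt_cont (ι := ι)
      simp only [hF, Function.uncurry_def]
      fun_prop
    rw [integrable_prod_iff hcont.aestronglyMeasurable]
    refine ⟨Filter.Eventually.of_forall fun v => ?_, ?_⟩
    · exact (Complex.ofRealCLM.integrable_comp (gamma_integrable D (wt_pos v))).const_mul (g v)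
    · have := (wgauss_integrable Z hpos b).norm.const_mul (Real.Gamma (D+2))
      refine this.congr (Filter.Eventually.of_forall fun v => ?_)
      simp only [Function.uncurry, hF]
      have : ∀ r ∈ Set.Ioi (0:ℝ), ‖g v * ((r ^ (D+1) * Real.exp (-(wt v * r)) : ℝ) : ℂ)‖ =
          ‖g v‖ * (r ^ (D+1) * Real.exp (-(wt v * r))) := by
        intro r hr
        have : (0:ℝ) < r := hr
        rw [norm_mul, Complex.norm_real, Real.norm_of_nonneg (by positivity)]
      rw [setIntegral_congr_fun measurableSet_Ioi this, integral_const_mul, gamma_rep D (wt_pos v), norm_mul,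
        Complex.norm_real, Real.norm_of_nonneg (by have := wt_pos v; positivity)]
      ring
  have hswap := integral_integral_swap hInt
  simp only [hFi] at hswap
  rw [integral_const_mul] at hswap
  have hbd : ‖∫ r in Set.Ioi (0:ℝ), ∫ v, F v r‖ ≤ ∫ r in Set.Ioi (0:ℝ),
      (Real.sqrt ((2 * Real.pi) ^ D) * (Real.sqrt κ)⁻¹) * ((1 + r) ^ (D+1) * Real.exp (-r)) := by
    refine norm_integral_le_of_norm_le ((poly_exp_integrable (D+1)).const_mul _) ?_
    refine (ae_restrict_iff' measurableSet_Ioi).2 (Filter.Eventually.of_forall fun r hr => ?_)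
    have hr0 : (0:ℝ) < r := hr
    have hM := gauss_bound (Z + (r : ℂ) • (1 : Matrix ι ι ℂ)) (by simp [hZ]) ?_ b
    swap
    · intro x hx
      have h1 := hpos x
      rw [Matrix.add_mulVec, dotProduct_add, Complex.add_re, Matrix.smul_mulVec, Matrix.one_mulVec,
        dotProduct_smul, toC_dot, smul_eq_mul, Complex.re_ofReal_mul, Complex.ofReal_re]
      have h2 : 0 < ‖x‖ := norm_pos_iff.2 hx
      have h3 := norm_sq_le_dot x
      have : 0 < x ⬝ᵥ x := by nlinarith
      nlinarith [mul_pos hr0 this]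
    have e1 : ∫ v, F v r = ((r ^ (D+1) * Real.exp (-r) : ℝ) : ℂ) *
        ∫ v : ι → ℝ, cexp (-(1/2 : ℂ) * (toC v ⬝ᵥ (Z + (r : ℂ) • (1 : Matrix ι ι ℂ)) *ᵥ toC v) + I * ((b ⬝ᵥ v : ℝ) : ℂ)) := by
      rw [← integral_const_mul]
      refine integral_congr_ae (Filter.Eventually.of_forall fun v => ?_)
      simp only [hF, hg]
      rw [Matrix.add_mulVec, dotProduct_add, Matrix.smul_mulVec, Matrix.one_mulVec,
        dotProduct_smul, toC_dot, smul_eq_mul]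
      push_cast
      have e : ∀ x y z w s : ℂ, cexp x * (z * cexp y) = z * cexp (x + y) := fun x y z w s => by
        rw [Complex.exp_add]; ring
      rw [e _ _ _ 0 0, mul_assoc, ← Complex.exp_add]
      congr 2
      unfold wt
      push_cast
      ring
    rw [e1, norm_mul, Complex.norm_real, Real.norm_of_nonneg (by positivity)]
    set T := ‖∫ v : ι → ℝ, cexp (-(1/2 : ℂ) * (toC v ⬝ᵥ (Z + (r : ℂ) • (1 : Matrix ι ι ℂ)) *ᵥ toC v) + I * ((b ⬝ᵥ v : ℝ) : ℂ))‖ with hT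
    have hdr := hdet r hr0
    have hT0 : 0 ≤ T := norm_nonneg _
    have h4 : T ^ 2 * (κ * (r ^ (D + 1) / (1 + r) ^ D)) ≤ (2 * Real.pi) ^ D :=
      (mul_le_mul_of_nonneg_left hdr (by positivity)).trans hM
    have h5 : r ^ (D+1) * T ≤ Real.sqrt ((2 * Real.pi) ^ D) * (Real.sqrt κ)⁻¹ * (1 + r) ^ (D+1) := by
      have hsk : 0 < Real.sqrt κ := Real.sqrt_pos.2 hκ
      refine le_of_sq_le_sq ?_ (by positivity)
      rw [mul_pow, mul_pow, mul_pow, inv_pow, Real.sq_sqrt hκ.le, Real.sq_sqrt (by positivity)]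
      rw [← sub_nonneg] at h4 ⊢
      have h6 : r ^ (D+1) ≤ (1+r)^(D+1) := pow_le_pow_left₀ hr0.le (by linarith) _
      have h7 : T ^ 2 * r ^ (D+1) ≤ (2 * Real.pi) ^ D * κ⁻¹ * (1+r)^D := by
        rw [sub_nonneg] at h4
        rw [← mul_div_assoc, ← mul_div_assoc, div_le_iff₀ (by positivity)] at h4
        have : T ^ 2 * r ^ (D+1) = (T^2 * (κ * r^(D+1))) * κ⁻¹ := by field_simp
        rw [this]
        calc _ ≤ ((2 * Real.pi) ^ D * (1 + r) ^ D) * κ⁻¹ := by gcongr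
          _ = _ := by ring
      have h8 : (1+r)^D ≤ (1+r)^(D+1) := pow_le_pow_right₀ (by linarith) (by omega)
      rw [sub_nonneg]
      calc (r ^ (D+1))^2 * T^2 = (T ^ 2 * r ^ (D+1)) * r ^ (D+1) := by ring
        _ ≤ ((2 * Real.pi) ^ D * κ⁻¹ * (1+r)^(D+1)) * (1+r)^(D+1) := by
          have := h7.trans (mul_le_mul_of_nonneg_left h8 (by positivity : 0 ≤ (2 * Real.pi) ^ D * κ⁻¹))
          gcongr
        _ = _ := by ring
    calc r ^ (D + 1) * Real.exp (-r) * T = (r ^ (D+1) * T) * Real.exp (-r) := by ring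
      _ ≤ (Real.sqrt ((2 * Real.pi) ^ D) * (Real.sqrt κ)⁻¹ * (1 + r) ^ (D+1)) * Real.exp (-r) := by gcongr
      _ = _ := by ring
  rw [← hswap, norm_mul, Complex.norm_real, Real.norm_of_nonneg hG.le, integral_const_mul, ← hC0] at hbd
  have hsk : 0 < Real.sqrt κ := Real.sqrt_pos.2 hκ
  calc _ = (Real.Gamma (D+2))⁻¹ * (Real.Gamma (D+2) * ‖∫ v, g v * (((wt v ^ (D + 2))⁻¹ : ℝ) : ℂ)‖) := by
        rw [← mul_assoc, inv_mul_cancel₀ hG.ne', one_mul]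
    _ ≤ (Real.Gamma (D+2))⁻¹ * (Real.sqrt ((2 * Real.pi) ^ D) * (Real.sqrt κ)⁻¹ * C0) := by gcongr
    _ = (Real.Gamma (D+2))⁻¹ * Real.sqrt ((2 * Real.pi) ^ D) * C0 * (Real.sqrt κ)⁻¹ := by ring
    _ ≤ _ := by gcongr; linarith
end WGauss

section MDsec
variable {ι : Type*} [Fintype ι] [DecidableEq ι]

/-- entrywise derivative of a matrix valued curve -/
def MD (P : ℝ → Matrix ι ι ℂ) (P' : Matrix ι ι ℂ) (s : ℝ) : Prop :=
  ∀ i j, HasDerivAt (fun s => P s i j) (P' i j) s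

variable {P Q : ℝ → Matrix ι ι ℂ} {P' Q' : Matrix ι ι ℂ} {s : ℝ}

lemma MD.const (M : Matrix ι ι ℂ) : MD (fun _ => M) 0 s := fun i j => hasDerivAt_const s (M i j)

lemma MD.add (hP : MD P P' s) (hQ : MD Q Q' s) : MD (fun s => P s + Q s) (P' + Q') s :=
  fun i j => (hP i j).add (hQ i j)

lemma MD.sub (hP : MD P P' s) (hQ : MD Q Q' s) : MD (fun s => P s - Q s) (P' - Q') s :=
  fun i j => (hP i j).sub (hQ i j)

lemma MD.smul (c : ℂ) (hP : MD P P' s) : MD (fun s => c • P s) (c • P') s :=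
  fun i j => (hP i j).const_mul c

lemma MD.transpose (hP : MD P P' s) : MD (fun s => (P s)ᵀ) (P'ᵀ) s :=
  fun i j => hP j i

lemma MD.mul (hP : MD P P' s) (hQ : MD Q Q' s) : MD (fun s => P s * Q s) (P' * Q s + P s * Q') s := by
  intro i j
  have h := HasDerivAt.fun_sum (u := Finset.univ) (A := fun k s => P s i k * Q s k j)
    (A' := fun k => P' i k * Q s k j + P s i k * Q' k j) (x := s) (fun k _ => (hP i k).mul (hQ k j))
  refine HasDerivAt.congr_deriv (f := fun s => (P s * Q s) i j) h ?_
  simp [Matrix.mul_apply, Finset.sum_add_distrib]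

lemma MD.congr_deriv (hP : MD P P' s) (h : P' = Q') : MD P Q' s := h ▸ hP

lemma MD.continuousAt (hP : MD P P' s) (i j : ι) : ContinuousAt (fun s => P s i j) s := (hP i j).continuousAt

lemma MD.unique (hP : MD P P' s) (hQ : MD P Q' s) : P' = Q' := by
  ext i j; exact (hP i j).unique (hQ i j)

lemma MD_of_diff (h : ∀ i j, DifferentiableAt ℝ (fun s => P s i j) s) :
    MD P (fun i j => deriv (fun s => P s i j) s) s := fun i j => (h i j).hasDerivAt

lemma diff_det (h : ∀ i j, DifferentiableAt ℝ (fun s => P s i j) s) :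
    DifferentiableAt ℝ (fun s => (P s).det) s := by
  simp only [Matrix.det_apply']
  refine DifferentiableAt.fun_sum fun σ _ => DifferentiableAt.const_mul ?_ _
  exact DifferentiableAt.fun_finsetProd fun i _ => h _ _

lemma MD.inv (hP : MD P P' s) (hu : (P s).det ≠ 0) :
    MD (fun s => (P s)⁻¹) (-((P s)⁻¹ * P' * (P s)⁻¹)) s := by
  have hd : ∀ i j, DifferentiableAt ℝ (fun s => P s i j) s := fun i j => (hP i j).differentiableAt
  have hdet := diff_det hd
  have hadj : ∀ i j, DifferentiableAt ℝ (fun s => (P s).adjugate i j) s := by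
    intro i j
    simp only [Matrix.adjugate_apply]
    refine diff_det fun k l => ?_
    by_cases hk : k = j
    · subst hk; simp
    · simpa [Matrix.updateRow_ne hk] using hd k l
  have hinv : ∀ i j, DifferentiableAt ℝ (fun s => (P s)⁻¹ i j) s := by
    intro i j
    have : (fun s => (P s)⁻¹ i j) = fun s => ((P s).det)⁻¹ * (P s).adjugate i j := by
      ext s; rw [Matrix.inv_def, Ring.inverse_eq_inv']; simp
    rw [this]
    exact (hdet.inv hu).mul (hadj i j)
  have h1 := MD_of_diff hinv
  set X : Matrix ι ι ℂ := fun i j => deriv (fun s => (P s)⁻¹ i j) s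
  have h2 := h1.mul hP
  have hev : ∀ᶠ t in nhds s, (P t)⁻¹ * P t = 1 := by
    have := hdet.continuousAt.eventually_ne hu
    filter_upwards [this] with t ht
    exact Matrix.nonsing_inv_mul _ (Ne.isUnit ht)
  have h3 : MD (fun t => (P t)⁻¹ * P t) 0 s := fun i j => by
    have : HasDerivAt (fun _ : ℝ => (1 : Matrix ι ι ℂ) i j) 0 s := hasDerivAt_const _ _
    refine this.congr_of_eventuallyEq ?_
    filter_upwards [hev] with t ht
    rw [ht]
  have h4 := h2.unique h3
  have h5 : X = -((P s)⁻¹ * P' * (P s)⁻¹) := by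
    have h6 : X * P s = -((P s)⁻¹ * P') := eq_neg_of_add_eq_zero_left h4
    have h7 := congrArg (· * (P s)⁻¹) h6
    simp only [Matrix.mul_assoc, Matrix.neg_mul] at h7
    rw [Matrix.mul_nonsing_inv _ (Ne.isUnit hu), Matrix.mul_one] at h7
    rw [h7, Matrix.mul_assoc]
  exact h1.congr_deriv h5

lemma hasDerivAt_det_one (hP : MD P P' s) (h1 : P s = 1) : HasDerivAt (fun s => (P s).det) P'.trace s := by
  simp only [Matrix.det_apply']
  have h := HasDerivAt.fun_sum (u := Finset.univ) (x := s)
    (A := fun (σ : Equiv.Perm ι) (t : ℝ) => ((Equiv.Perm.sign σ : ℤ) : ℂ) * ∏ i, P t (σ i) i)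
    (A' := fun σ => ((Equiv.Perm.sign σ : ℤ) : ℂ) * ∑ i, (∏ j ∈ Finset.univ.erase i, P s (σ j) j) • P' (σ i) i)
    (fun σ _ => (HasDerivAt.fun_finsetProd (u := Finset.univ) (f := fun i t => P t (σ i) i) (fun i _ => hP (σ i) i)).const_mul _)
  refine h.congr_deriv ?_
  rw [Finset.sum_eq_single 1]
  · simp [h1, Matrix.trace]
  · intro σ _ hσ
    refine mul_eq_zero_of_right _ (Finset.sum_eq_zero fun i _ => ?_)
    have : ∃ j ∈ Finset.univ.erase i, σ j ≠ j := by
      by_contra hcon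
      push Not at hcon
      apply hσ
      have h2 : ∀ j, j ≠ i → σ j = j := fun j hj => hcon j (Finset.mem_erase.2 ⟨hj, Finset.mem_univ j⟩)
      ext j
      by_cases hj : j = i
      · subst hj
        by_contra hne
        have hne' : σ j ≠ j := by simpa using hne
        exact hne' (σ.injective (h2 _ hne'))
      · simp [h2 j hj]
    obtain ⟨j, hj, hne⟩ := this
    rw [Finset.prod_eq_zero hj (by rw [h1, Matrix.one_apply_ne hne]), zero_smul]
  · simp

lemma hasDerivAt_det (hP : MD P P' s) (hu : (P s).det ≠ 0) :
    HasDerivAt (fun s => (P s).det) ((P s).det * ((P s)⁻¹ * P').trace) s := by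
  have h1 : MD (fun t => (P s)⁻¹ * P t) ((P s)⁻¹ * P') s :=
    ((MD.const ((P s)⁻¹)).mul hP).congr_deriv (by simp)
  have h2 := hasDerivAt_det_one h1 (Matrix.nonsing_inv_mul _ (Ne.isUnit hu))
  have h3 := h2.const_mul (P s).det
  refine h3.congr_of_eventuallyEq (Filter.Eventually.of_forall fun t => ?_)
  simp only
  rw [← Matrix.det_mul, ← Matrix.mul_assoc, Matrix.mul_nonsing_inv _ (Ne.isUnit hu), Matrix.one_mul]
end MDsec

section Evol
variable {ι : Type*} [Fintype ι] [DecidableEq ι] {K A : Matrix ι ι ℂ}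

def rM (K A : Matrix ι ι ℂ) (ε s : ℝ) : Matrix ι ι ℂ := flowE K A s * (1 + (ε : ℂ) • K)
def pM (K A : Matrix ι ι ℂ) (ε s : ℝ) : Matrix ι ι ℂ := (1/2 : ℂ) • (rM K A ε s + (1 - (ε : ℂ) • K))
def qM (K A : Matrix ι ι ℂ) (ε s : ℝ) : Matrix ι ι ℂ := (1/2 : ℂ) • (K * (rM K A ε s - (1 - (ε : ℂ) • K)))

lemma Nmat_eq (ρ ε s : ℝ) : Nmat K A ρ ε s = pM K A ε s + (ρ : ℂ) • qM K A ε s := by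
  simp only [Nmat, pM, qM, Matrix.mul_assoc]
  rw [← rM]
  simp only [Matrix.add_mul, Matrix.sub_mul, Matrix.mul_sub, Matrix.smul_mul, Matrix.one_mul]
  module

lemma rM_eq (hK2 : K * K = 1) (ε s : ℝ) : rM K A ε s = pM K A ε s + K * qM K A ε s := by
  simp only [pM, qM, Matrix.mul_smul, ← Matrix.mul_assoc, hK2, Matrix.one_mul]
  module

lemma pM_zero (ε : ℝ) : pM K A ε 0 = 1 := by
  simp only [pM, rM, flowE_zero, Matrix.one_mul]
  module

lemma qM_zero (hK2 : K * K = 1) (ε : ℝ) : qM K A ε 0 = (ε : ℂ) • 1 := by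
  simp only [qM, rM, flowE_zero, Matrix.one_mul]
  rw [show (1 + (ε : ℂ) • K - (1 - (ε : ℂ) • K)) = (2 * ε : ℂ) • K by module, Matrix.mul_smul, hK2]
  module

lemma rM_deriv (ε s : ℝ) : MD (rM K A ε) ((2 : ℂ) • (K * A * rM K A ε s)) s := by
  have h : MD (flowE K A) ((2 : ℂ) • (K * A * flowE K A s)) s := fun i j => flowE_deriv K A s i j
  refine (h.mul (MD.const (1 + (ε : ℂ) • K))).congr_deriv ?_
  simp [rM, Matrix.mul_assoc]

lemma pM_deriv (ε s : ℝ) : MD (pM K A ε) (K * A * rM K A ε s) s := by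
  refine (((rM_deriv ε s).add (MD.const (1 - (ε : ℂ) • K))).smul (1/2)).congr_deriv ?_
  module

lemma qM_deriv (hK2 : K * K = 1) (ε s : ℝ) : MD (qM K A ε) (A * rM K A ε s) s := by
  refine (((MD.const K).mul ((rM_deriv ε s).sub (MD.const (1 - (ε : ℂ) • K)))).smul (1/2)).congr_deriv ?_
  rw [Matrix.zero_mul, zero_add, sub_zero, Matrix.mul_smul, ← Matrix.mul_assoc, ← Matrix.mul_assoc, hK2, Matrix.one_mul]
  module

lemma qp_symm (hK2 : K * K = 1) (hKt : Kᵀ = -K) (hA : Aᵀ = A) (ε s : ℝ) :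
    (qM K A ε s)ᵀ * pM K A ε s = (pM K A ε s)ᵀ * qM K A ε s := by
  have h : ∀ s, MD (fun s => (qM K A ε s)ᵀ * pM K A ε s - (pM K A ε s)ᵀ * qM K A ε s) 0 s := by
    intro s
    have h1 := (qM_deriv (A := A) hK2 ε s).transpose.mul (pM_deriv (K := K) (A := A) ε s)
    have h2 := (pM_deriv (K := K) (A := A) ε s).transpose.mul (qM_deriv (A := A) hK2 ε s)
    refine (h1.sub h2).congr_deriv ?_
    have hr : (rM K A ε s)ᵀ = (pM K A ε s)ᵀ - (qM K A ε s)ᵀ * K := by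
      rw [rM_eq hK2, transpose_add, transpose_mul, hKt]; simp [sub_eq_add_neg]
    simp only [transpose_mul, hA, hKt, hr]
    rw [rM_eq hK2]
    generalize pM K A ε s = p
    generalize qM K A ε s = q
    simp only [Matrix.mul_add, Matrix.add_mul, Matrix.sub_mul, Matrix.mul_sub, Matrix.mul_assoc, Matrix.neg_mul, Matrix.mul_neg]
    abel
  ext i j
  have hc := is_const_of_deriv_eq_zero (f := fun s => ((qM K A ε s)ᵀ * pM K A ε s - (pM K A ε s)ᵀ * qM K A ε s) i j)
    (fun s => (h s i j).differentiableAt) (fun s => (h s i j).deriv) s 0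
  simp only [pM_zero, qM_zero hK2] at hc
  simp at hc
  exact sub_eq_zero.1 hc

lemma pM_mulVec (ε s : ℝ) (x : ι → ℂ) : pM K A ε s *ᵥ x = stP K A s x ((ε : ℂ) • x) := by
  have h := Nmat_mulVec K A 0 ε s x
  rw [Nmat_eq] at h
  simpa using h

lemma qM_mulVec (ε s : ℝ) (x : ι → ℂ) : qM K A ε s *ᵥ x = stQ K A s x ((ε : ℂ) • x) := by
  have h := Nmat_mulVec K A 1 ε s x
  rw [Nmat_eq, Matrix.add_mulVec, pM_mulVec] at h
  simpa using h

lemma qp_mono (hK2 : K * K = 1) (hKh : Kᴴ = K) (hAp : ∀ x : ι → ℂ, 0 ≤ (star x ⬝ᵥ A *ᵥ x).re)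
    (ε : ℝ) {s : ℝ} (hs : 0 ≤ s) (x : ι → ℂ) :
    ε * (star x ⬝ᵥ x).re ≤ (star (qM K A ε s *ᵥ x) ⬝ᵥ (pM K A ε s *ᵥ x)).re := by
  have := state_mono hK2 hKh hAp x ((ε : ℂ) • x) hs
  rw [pM_mulVec, qM_mulVec]
  refine le_trans (le_of_eq ?_) this
  rw [star_smul, smul_dotProduct]
  simp

lemma qM_det (hK2 : K * K = 1) (hKh : Kᴴ = K) (hAp : ∀ x : ι → ℂ, 0 ≤ (star x ⬝ᵥ A *ᵥ x).re)
    {ε : ℝ} (hε : 0 < ε) {s : ℝ} (hs : 0 ≤ s) : (qM K A ε s).det ≠ 0 := by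
  intro h
  obtain ⟨x, hx, h0⟩ := Matrix.exists_mulVec_eq_zero_iff.2 h
  have := qp_mono hK2 hKh hAp ε hs x
  rw [h0] at this
  simp at this
  apply hx
  apply eq_zero_of_star_dot_self
  by_contra hc
  push Not at hc
  nlinarith [mul_pos hε hc]

def ZM (K A : Matrix ι ι ℂ) (μ ε s : ℝ) : Matrix ι ι ℂ := (μ : ℂ) • (pM K A ε s * (qM K A ε s)⁻¹)
def WM (K A : Matrix ι ι ℂ) (μ ε s : ℝ) : Matrix ι ι ℂ := ZM K A μ ε s + (μ : ℂ) • K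

lemma WM_eq (hK2 : K * K = 1) (hKh : Kᴴ = K)
    (hAp : ∀ x : ι → ℂ, 0 ≤ (star x ⬝ᵥ A *ᵥ x).re)
    (μ : ℝ) {ε s : ℝ} (hε : 0 < ε) (hs : 0 ≤ s) :
    WM K A μ ε s = (μ : ℂ) • (rM K A ε s * (qM K A ε s)⁻¹) := by
  rw [WM, ZM, rM_eq hK2, Matrix.add_mul, Matrix.mul_assoc, Matrix.mul_nonsing_inv _
    (Ne.isUnit (qM_det hK2 hKh hAp hε hs)), Matrix.mul_one, smul_add]

lemma ZM_zero (hK2 : K * K = 1) (hKh : Kᴴ = K)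
    (hAp : ∀ x : ι → ℂ, 0 ≤ (star x ⬝ᵥ A *ᵥ x).re)
    (μ : ℝ) {ε : ℝ} (hε : 0 < ε) : ZM K A μ ε 0 = ((μ / ε : ℝ) : ℂ) • 1 := by
  rw [ZM, pM_zero, qM_zero hK2, Matrix.one_mul]
  have : ((ε : ℂ) • (1 : Matrix ι ι ℂ))⁻¹ = (ε : ℂ)⁻¹ • 1 := by
    apply Matrix.inv_eq_right_inv
    rw [Matrix.smul_mul, Matrix.mul_smul, smul_smul, mul_inv_cancel₀ (by exact_mod_cast hε.ne')]
    simp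
  rw [this, smul_smul]
  push_cast
  rfl

lemma ZM_re (hK2 : K * K = 1) (hKh : Kᴴ = K)
    (hAp : ∀ x : ι → ℂ, 0 ≤ (star x ⬝ᵥ A *ᵥ x).re)
    (μ : ℝ) (hμ : 0 < μ) {ε s : ℝ} (hε : 0 < ε) (hs : 0 ≤ s) (x : ι → ℝ) :
    0 ≤ (toC x ⬝ᵥ ZM K A μ ε s *ᵥ toC x).re := by
  have hd := qM_det hK2 hKh hAp hε hs
  set y := (qM K A ε s)⁻¹ *ᵥ toC x with hy
  have hxy : qM K A ε s *ᵥ y = toC x := by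
    rw [hy, Matrix.mulVec_mulVec, Matrix.mul_nonsing_inv _ (Ne.isUnit hd), Matrix.one_mulVec]
  have h := qp_mono hK2 hKh hAp ε hs y
  have hst : star (toC x) = toC x := by ext i; simp [toC]
  rw [hxy, hst] at h
  rw [ZM, Matrix.smul_mulVec, ← Matrix.mulVec_mulVec, ← hy, dotProduct_smul, smul_eq_mul, Complex.re_ofReal_mul]
  have := star_dot_self_nonneg y
  have : 0 ≤ ε * (star y ⬝ᵥ y).re := by positivity
  exact mul_nonneg hμ.le (this.trans h)

lemma det_ZM (hK2 : K * K = 1) (hKh : Kᴴ = K)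
    (hAp : ∀ x : ι → ℂ, 0 ≤ (star x ⬝ᵥ A *ᵥ x).re)
    (μ : ℝ) (hμ : 0 < μ) {ε s : ℝ} (hε : 0 < ε) (hs : 0 ≤ s) (r : ℝ) :
    (ZM K A μ ε s + (r : ℂ) • 1).det * (qM K A ε s).det = (μ : ℂ) ^ (Fintype.card ι) * (Nmat K A (r / μ) ε s).det := by
  have hd := qM_det hK2 hKh hAp hε hs
  rw [← Matrix.det_mul, ← Matrix.det_smul, Nmat_eq, Matrix.add_mul, ZM, Matrix.smul_mul, Matrix.mul_assoc,
    Matrix.nonsing_inv_mul _ (Ne.isUnit hd), Matrix.mul_one, Matrix.smul_mul, Matrix.one_mul, smul_add, smul_smul]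
  congr 3
  push_cast
  field_simp [hμ.ne']

lemma ZM_symm (hK2 : K * K = 1) (hKh : Kᴴ = K) (hKt : Kᵀ = -K) (hA : Aᵀ = A)
    (hAp : ∀ x : ι → ℂ, 0 ≤ (star x ⬝ᵥ A *ᵥ x).re)
    (μ : ℝ) {ε s : ℝ} (hε : 0 < ε) (hs : 0 ≤ s) : (ZM K A μ ε s)ᵀ = ZM K A μ ε s := by
  have hd := qM_det hK2 hKh hAp hε hs
  have hu := Ne.isUnit hd
  rw [ZM, transpose_smul, transpose_mul, Matrix.transpose_nonsing_inv]
  congr 1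
  have h := qp_symm hK2 hKt hA ε s
  have hut : IsUnit ((qM K A ε s)ᵀ).det := by rwa [det_transpose]
  calc (qM K A ε s)ᵀ⁻¹ * (pM K A ε s)ᵀ = (qM K A ε s)ᵀ⁻¹ * ((pM K A ε s)ᵀ * qM K A ε s) * (qM K A ε s)⁻¹ := by
        rw [Matrix.mul_assoc, Matrix.mul_assoc, Matrix.mul_nonsing_inv _ hu, Matrix.mul_one]
    _ = _ := by
        rw [← h, ← Matrix.mul_assoc, Matrix.nonsing_inv_mul _ hut, Matrix.one_mul]

lemma ZM_deriv (hK2 : K * K = 1) (hKh : Kᴴ = K) (hKt : Kᵀ = -K) (hA : Aᵀ = A)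
    (hAp : ∀ x : ι → ℂ, 0 ≤ (star x ⬝ᵥ A *ᵥ x).re)
    (μ : ℝ) (hμ : 0 < μ) {ε s : ℝ} (hε : 0 < ε) (hs : 0 ≤ s) :
    MD (ZM K A μ ε) (-(μ : ℂ)⁻¹ • ((WM K A μ ε s)ᵀ * A * WM K A μ ε s)) s := by
  have hd := qM_det hK2 hKh hAp hε hs
  have h1 := ((pM_deriv (K := K) (A := A) ε s).mul ((qM_deriv hK2 ε s).inv hd)).smul (μ : ℂ)
  refine h1.congr_deriv ?_
  have hWt : (WM K A μ ε s)ᵀ = (μ : ℂ) • (pM K A ε s * (qM K A ε s)⁻¹) - (μ : ℂ) • K := by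
    rw [WM, transpose_add, ZM_symm hK2 hKh hKt hA hAp μ hε hs, transpose_smul, hKt, ZM]
    module
  have hμ' : (μ : ℂ) ≠ 0 := by exact_mod_cast hμ.ne'
  rw [hWt, WM_eq hK2 hKh hAp μ hε hs]
  generalize (qM K A ε s)⁻¹ = q
  generalize pM K A ε s = p
  generalize rM K A ε s = r
  simp only [Matrix.sub_mul, Matrix.mul_smul, Matrix.smul_mul, Matrix.mul_neg, Matrix.mul_assoc, smul_sub, smul_smul]
  rw [show -(μ : ℂ)⁻¹ * ((μ : ℂ) * (μ : ℂ)) = -μ by field_simp]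
  module

lemma qdet_deriv (hK2 : K * K = 1) (hKh : Kᴴ = K) (hKt : Kᵀ = -K) (hA : Aᵀ = A)
    (hAp : ∀ x : ι → ℂ, 0 ≤ (star x ⬝ᵥ A *ᵥ x).re)
    (μ : ℝ) (hμ : 0 < μ) {ε s : ℝ} (hε : 0 < ε) (hs : 0 ≤ s) :
    HasDerivAt (fun s => (qM K A ε s).det) ((qM K A ε s).det * ((μ : ℂ)⁻¹ * (A * WM K A μ ε s).trace)) s := by
  have hd := qM_det hK2 hKh hAp hε hs
  refine (hasDerivAt_det (qM_deriv hK2 ε s) hd).congr_deriv ?_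
  have hμ' : (μ : ℂ) ≠ 0 := by exact_mod_cast hμ.ne'
  rw [WM_eq hK2 hKh hAp μ hε hs, Matrix.mul_smul, Matrix.trace_smul, smul_eq_mul, ← mul_assoc (μ : ℂ)⁻¹,
    inv_mul_cancel₀ hμ', one_mul, Matrix.trace_mul_comm, Matrix.mul_assoc]

end Evol

section Evol2
variable {ι : Type*} [Fintype ι] [DecidableEq ι] {K A : Matrix ι ι ℂ}

/-- amplitude of the Gaussian evolution -/
def aM (K A : Matrix ι ι ℂ) (μ ε s : ℝ) : ℂ :=
  (Real.sqrt ((μ / (2 * Real.pi * ε)) ^ (Fintype.card ι)) : ℂ) *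
    cexp (-(2 * (μ : ℂ))⁻¹ * ∫ x in (0:ℝ)..s, (A * WM K A μ ε (max x 0)).trace)

lemma aM_zero (μ ε : ℝ) : aM K A μ ε 0 = (Real.sqrt ((μ / (2 * Real.pi * ε)) ^ (Fintype.card ι)) : ℂ) := by
  simp [aM]

lemma aM_deriv (hK2 : K * K = 1) (hKh : Kᴴ = K) (hKt : Kᵀ = -K) (hA : Aᵀ = A)
    (hAp : ∀ x : ι → ℂ, 0 ≤ (star x ⬝ᵥ A *ᵥ x).re) (μ : ℝ) (hμ : 0 < μ) {ε s : ℝ} (hε : 0 < ε) (hs : 0 ≤ s) :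
    HasDerivAt (aM K A μ ε) (-(2 * (μ : ℂ))⁻¹ * (A * WM K A μ ε s).trace * aM K A μ ε s) s := by
  have hZc : ∀ i j, Continuous (fun x : ℝ => ZM K A μ ε (max x 0) i j) := by
    intro i j
    rw [continuous_iff_continuousAt]
    intro x
    have h1 := (ZM_deriv hK2 hKh hKt hA hAp μ hμ hε (le_max_right x 0)) i j
    exact ContinuousAt.comp (g := fun s => ZM K A μ ε s i j) (f := fun x : ℝ => max x 0) h1.continuousAt (by fun_prop)
  have hc : Continuous (fun x : ℝ => (A * WM K A μ ε (max x 0)).trace) := by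
    simp only [Matrix.trace, Matrix.diag, Matrix.mul_apply, WM, Matrix.add_apply]
    fun_prop
  have h2 := intervalIntegral.integral_hasDerivAt_right (hc.intervalIntegrable 0 s)
    (hc.stronglyMeasurableAtFilter _ _) hc.continuousAt
  rw [max_eq_left hs] at h2
  have h3 := ((h2.const_mul (-(2 * (μ : ℂ))⁻¹)).cexp).const_mul
    (Real.sqrt ((μ / (2 * Real.pi * ε)) ^ (Fintype.card ι)) : ℂ)
  refine HasDerivAt.congr_deriv (f := aM K A μ ε) h3 ?_
  simp only [aM]
  ring

lemma aM_sq (hK2 : K * K = 1) (hKh : Kᴴ = K) (hKt : Kᵀ = -K) (hA : Aᵀ = A)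
    (hAp : ∀ x : ι → ℂ, 0 ≤ (star x ⬝ᵥ A *ᵥ x).re) (μ : ℝ) (hμ : 0 < μ) {ε s : ℝ} (hε : 0 < ε) (hs : 0 ≤ s) :
    ‖aM K A μ ε s‖ ^ 2 * ‖(qM K A ε s).det‖ = (μ / (2 * Real.pi)) ^ (Fintype.card ι) := by
  have hd : ∀ x, 0 ≤ x → HasDerivAt (fun s => aM K A μ ε s ^ 2 * (qM K A ε s).det) 0 x := by
    intro x hx
    refine (((aM_deriv hK2 hKh hKt hA hAp μ hμ hε hx).pow 2).mul
      (qdet_deriv hK2 hKh hKt hA hAp μ hμ hε hx)).congr_deriv ?_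
    have hμ' : (μ : ℂ) ≠ 0 := by exact_mod_cast hμ.ne'
    simp
    field_simp
    ring
  have h := constant_of_has_deriv_right_zero (f := fun s => aM K A μ ε s ^ 2 * (qM K A ε s).det) (a := 0) (b := s)
    (fun x hx => (hd x hx.1).continuousAt.continuousWithinAt) (fun x hx => (hd x hx.1).hasDerivWithinAt) s ⟨hs, le_rfl⟩
  simp only [aM_zero, qM_zero hK2] at h
  have h2 := congrArg norm h
  rw [norm_mul, norm_pow] at h2
  rw [h2]
  rw [← Complex.ofReal_pow, Real.sq_sqrt (by positivity), det_smul, det_one, mul_one, norm_mul, Complex.norm_real,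
    norm_pow, norm_pow, Complex.norm_real, Real.norm_of_nonneg (by positivity), Real.norm_of_nonneg hε.le, ← mul_pow]
  congr 1
  field_simp

lemma aM_ne (μ : ℝ) (hμ : 0 < μ) {ε s : ℝ} (hε : 0 < ε) : 0 < ‖aM K A μ ε s‖ := by
  rw [norm_pos_iff, aM]
  refine mul_ne_zero ?_ (Complex.exp_ne_zero _)
  have : 0 < Real.sqrt ((μ / (2 * Real.pi * ε)) ^ (Fintype.card ι)) := Real.sqrt_pos.2 (by positivity)
  exact_mod_cast this.ne'

lemma sqrt_aux {a X Y m E T : ℝ} (ha : 0 < a) (hX : 0 < X) (hY : 0 < Y) (hm : 0 < m) (hE : 0 < E) (hT : 0 < T) :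
    Real.sqrt (a ^ 2 * X * (Y⁻¹ * m⁻¹ * (E ^ 2 * T⁻¹))) = a * Real.sqrt X * ((Real.sqrt Y)⁻¹ * (Real.sqrt m)⁻¹ *
        (E * (Real.sqrt T)⁻¹)) := by
  have := Real.sqrt_pos.2 hX
  have := Real.sqrt_pos.2 hY
  have := Real.sqrt_pos.2 hm
  have := Real.sqrt_pos.2 hT
  rw [Real.sqrt_eq_iff_mul_self_eq (by positivity) (by positivity)]
  have e : ∀ x, 0 < x → Real.sqrt x ^ 2 = x := fun x hx => Real.sq_sqrt hx.le
  field_simp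
  rw [e X hX, e Y hY, e m hm, e T hT]
  ring

lemma evol_bound (hK2 : K * K = 1) (hKh : Kᴴ = K) (hKt : Kᵀ = -K) (hA : Aᵀ = A)
    (hAp : ∀ x : ι → ℂ, 0 ≤ (star x ⬝ᵥ A *ᵥ x).re) (hgr : 0 < growth ((2:ℂ)•(K*A))) :
    ∃ C : ℝ, 0 < C ∧ ∀ μ ε s : ℝ, 0 < μ → 0 < ε → 0 < s → ∀ b : ι → ℝ,
    ‖aM K A μ ε s‖ * ‖∫ v : ι → ℝ, cexp (-(1/2 : ℂ) * (toC v ⬝ᵥ ZM K A μ ε s *ᵥ toC v) + I * ((b ⬝ᵥ v : ℝ) : ℂ)) *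
      (((wt v ^ (Fintype.card ι + 2))⁻¹ : ℝ) : ℂ)‖ ≤
      C * ((1 + μ) ^ (Fintype.card ι) * Real.sqrt μ * (Real.exp (-(s * (growth ((2:ℂ)•(K*A)) / 2))) * Real.sqrt ((1 + s) / s))) := by
  obtain ⟨c, hc, hN⟩ := detN_lower hK2 hKh hAp hgr
  obtain ⟨C, hC, hw⟩ := wgauss ι
  set D := Fintype.card ι with hD
  set γ := growth ((2:ℂ)•(K*A)) with hγ
  refine ⟨C * (Real.sqrt ((2 * Real.pi) ^ D * c))⁻¹, by
    have : 0 < Real.sqrt ((2 * Real.pi) ^ D * c) := Real.sqrt_pos.2 (by positivity)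
    positivity, ?_⟩
  intro μ ε s hμ hε hs b
  have ha := aM_ne (K := K) (A := A) μ hμ (s := s) hε
  set a := ‖aM K A μ ε s‖ with had
  set κ := a ^ 2 * ((2 * Real.pi) ^ D * c) * (((1 + μ) ^ D)⁻¹ * μ⁻¹ * (Real.exp (s * γ) * (s / (1 + s)))) with hκ
  have hκ0 : 0 < κ := by positivity
  have hsq := aM_sq hK2 hKh hKt hA hAp μ hμ hε hs.le
  have h := hw (ZM K A μ ε s) κ (ZM_symm hK2 hKh hKt hA hAp μ hε hs.le) (ZM_re hK2 hKh hAp μ hμ hε hs.le) hκ0 ?_ b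
  · refine (mul_le_mul_of_nonneg_left h ha.le).trans ?_
    have e1 : Real.sqrt κ = a * Real.sqrt ((2 * Real.pi) ^ D * c) * ((Real.sqrt ((1+μ)^D))⁻¹ * (Real.sqrt μ)⁻¹ *
        (Real.exp (s * (γ / 2)) * (Real.sqrt ((1+s)/s))⁻¹)) := by
      have e0 : κ = a ^ 2 * ((2 * Real.pi) ^ D * c) * (((1 + μ) ^ D)⁻¹ * μ⁻¹ * (Real.exp (s * (γ / 2)) ^ 2 * ((1 + s) / s)⁻¹)) := by
        rw [hκ, ← Real.exp_nat_mul, inv_div]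
        congr 4
        push_cast; ring
      rw [e0]
      exact sqrt_aux ha (by positivity) (by positivity) hμ (Real.exp_pos _) (by positivity)
    rw [e1]
    have hp1 : 0 < Real.sqrt ((2 * Real.pi) ^ D * c) := Real.sqrt_pos.2 (by positivity)
    have hp2 : 0 < Real.sqrt ((1+μ)^D) := Real.sqrt_pos.2 (by positivity)
    have hp3 : 0 < Real.sqrt μ := Real.sqrt_pos.2 (by positivity)
    have hp4 : 0 < Real.sqrt ((1+s)/s) := Real.sqrt_pos.2 (by positivity)
    have e2 : a * (C * (a * Real.sqrt ((2 * Real.pi) ^ D * c) * ((Real.sqrt ((1+μ)^D))⁻¹ * (Real.sqrt μ)⁻¹ *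
        (Real.exp (s * (γ / 2)) * (Real.sqrt ((1+s)/s))⁻¹)))⁻¹) =
        C * (Real.sqrt ((2 * Real.pi) ^ D * c))⁻¹ * (Real.sqrt ((1+μ)^D) * Real.sqrt μ * (Real.exp (-(s * (γ / 2))) * Real.sqrt ((1 + s) / s))) := by
      rw [Real.exp_neg]
      field_simp
    rw [e2]
    have h5 : Real.sqrt ((1+μ)^D) ≤ (1+μ)^D := by
      rw [Real.sqrt_le_left (by positivity)]
      have : 1 ≤ (1+μ)^D := one_le_pow₀ (by linarith)
      nlinarith
    gcongr
  · intro r hr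
    have hdz := congrArg norm (det_ZM hK2 hKh hAp μ hμ hε hs.le r)
    rw [norm_mul, norm_mul, norm_pow, Complex.norm_real, Real.norm_of_nonneg hμ.le] at hdz
    have hq : 0 < ‖(qM K A ε s).det‖ := norm_pos_iff.2 (qM_det hK2 hKh hAp hε hs.le)
    have hn := hN (r/μ) ε s (by positivity) hε.le hs.le
    have e3 : ‖(ZM K A μ ε s + (r : ℂ) • 1).det‖ = a ^ 2 * (2 * Real.pi) ^ D * ‖(Nmat K A (r / μ) ε s).det‖ := by
      have : ‖(ZM K A μ ε s + (r : ℂ) • 1).det‖ * ‖(qM K A ε s).det‖ =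
          (a ^ 2 * (2 * Real.pi) ^ D * ‖(Nmat K A (r / μ) ε s).det‖) * ‖(qM K A ε s).det‖ := by
        rw [hdz]
        calc μ ^ D * ‖(Nmat K A (r / μ) ε s).det‖ = (μ / (2 * Real.pi)) ^ D * ((2 * Real.pi) ^ D * ‖(Nmat K A (r / μ) ε s).det‖) := by
              rw [← mul_assoc, ← mul_pow]; congr 2; field_simp
          _ = _ := by rw [← hsq]; ring
      exact mul_right_cancel₀ hq.ne' this
    rw [e3]
    refine le_trans ?_ (mul_le_mul_of_nonneg_left hn (by positivity))
    have e4 : r / ((1 + μ) * (1 + r)) ≤ r / μ / (1 + r / μ) := by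
      rw [div_div, mul_add μ, mul_one, mul_div_cancel₀ _ hμ.ne']
      apply div_le_div_of_nonneg_left hr.le (by positivity)
      nlinarith
    have e5 : (r / ((1 + μ) * (1 + r))) ^ D ≤ (r / μ / (1 + r / μ)) ^ D := pow_le_pow_left₀ (by positivity) e4 D
    calc κ * (r ^ (D+1) / (1 + r) ^ D) = a ^ 2 * (2 * Real.pi) ^ D * (c * (r / ((1 + μ) * (1 + r))) ^ D * (Real.exp (s * γ) * (r / μ * (s / (1 + s))))) := by
          rw [hκ, div_pow, mul_pow]
          field_simp
          rw [mul_pow]; ring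
      _ ≤ _ := by gcongr
end Evol2

section Inst
variable {ι : Type*} [Fintype ι] [DecidableEq ι]

lemma roots_smul_charpoly (M : Matrix ι ι ℂ) (c : ℂ) :
    (c • M).charpoly.roots = M.charpoly.roots.map (fun z => c * z) := by
  have h : (c • M).charpoly = ((M.charpoly.roots.map (fun z => c * z)).map (fun a => Polynomial.X - Polynomial.C a)).prod := by
    apply Polynomial.funext
    intro a
    rw [Polynomial.eval_multiset_prod, Matrix.eval_charpoly, Multiset.map_map, Multiset.map_map]
    have h1 := det_aeval_eq_prod M (Polynomial.C a - Polynomial.C c * Polynomial.X)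
    have e : Polynomial.aeval M (Polynomial.C a - Polynomial.C c * Polynomial.X) = scalar ι a - c • M := by
      simp [Algebra.algebraMap_eq_smul_one, Matrix.smul_one_eq_diagonal]
      rw [← Matrix.smul_one_eq_diagonal, Matrix.smul_mul, Matrix.one_mul]
    rw [e] at h1
    rw [h1]
    congr 1
    apply Multiset.map_congr rfl
    intro x hx
    simp
  rw [h, Polynomial.roots_multiset_prod_X_sub_C]

lemma Jmat_sq (n : ℕ) : Jmat n * Jmat n = -1 := by
  rw [Jmat, Matrix.fromBlocks_multiply]
  simp [← Matrix.fromBlocks_one, Matrix.fromBlocks_neg]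

lemma Jmat_tr (n : ℕ) : (Jmat n)ᵀ = -Jmat n := by
  rw [Jmat, Matrix.fromBlocks_transpose]
  simp [Matrix.fromBlocks_neg]

lemma Jmat_cj (n : ℕ) : (Jmat n)ᴴ = -Jmat n := by
  rw [Jmat, Matrix.fromBlocks_conjTranspose]
  simp [Matrix.fromBlocks_neg]

def Ke (n : ℕ) (e : ℝ) : Matrix (Idx n) (Idx n) ℂ := (I * (e : ℂ)) • Jmat n

lemma Ke_sq (n : ℕ) {e : ℝ} (he : e * e = 1) : Ke n e * Ke n e = 1 := by
  have he' : (e : ℂ) * e = 1 := by exact_mod_cast he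
  rw [Ke, Matrix.smul_mul, Matrix.mul_smul, Jmat_sq, smul_smul]
  rw [show I * (e : ℂ) * (I * e) = (I * I) * (e * e) by ring, he', I_mul_I]
  simp

lemma Ke_cj (n : ℕ) {e : ℝ} : (Ke n e)ᴴ = Ke n e := by
  rw [Ke, Matrix.conjTranspose_smul, Jmat_cj]
  simp

lemma Ke_tr (n : ℕ) {e : ℝ} : (Ke n e)ᵀ = -Ke n e := by
  rw [Ke, Matrix.transpose_smul, Jmat_tr, smul_neg]

lemma A_pos (n : ℕ) (A S : Matrix (Idx n) (Idx n) ℂ) (hA : Aᵀ = A) (hS : S = -(A * Jmat n))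
    (hpos : RePosQ n S) (x : Idx n → ℂ) : 0 ≤ (star x ⬝ᵥ A *ᵥ x).re := by
  have hreal : ∀ v : Idx n → ℝ, 0 ≤ (toC v ⬝ᵥ A *ᵥ toC v).re := by
    intro v
    set w : Idx n → ℝ := -(JmatR n *ᵥ v) with hw
    have hJ : Jmat n *ᵥ realVec n w = toC v := by
      funext i
      rcases i with i | i <;>
      simp [Jmat, JmatR, hw, realVec, toC, Matrix.fromBlocks_mulVec, Matrix.mulVec, dotProduct, Matrix.one_apply, Matrix.neg_apply]
    have h := hpos w
    have e : sigmaC n (realVec n w) (S *ᵥ realVec n w) = toC v ⬝ᵥ A *ᵥ toC v := by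
      rw [sigmaC, hS, Matrix.neg_mulVec, ← Matrix.mulVec_mulVec, hJ, Matrix.mulVec_neg,
        dotProduct_neg, Matrix.dotProduct_mulVec, ← Matrix.mulVec_transpose, Jmat_tr, Matrix.neg_mulVec, hJ, neg_dotProduct, neg_neg]
    rwa [e] at h
  set a : Idx n → ℝ := fun i => (x i).re
  set b : Idx n → ℝ := fun i => (x i).im
  have hx : x = toC a + I • toC b := by
    funext i; simp [toC, a, b]; rw [mul_comm]; exact (Complex.re_add_im (x i)).symm
  have hsx : star x = toC a - I • toC b := by
    funext i; simp only [toC, a, b, Pi.star_apply, Pi.sub_apply, Pi.smul_apply, smul_eq_mul]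
    apply Complex.ext <;> simp
  have hsym : toC b ⬝ᵥ A *ᵥ toC a = toC a ⬝ᵥ A *ᵥ toC b := by
    rw [Matrix.dotProduct_mulVec, ← Matrix.mulVec_transpose, hA, dotProduct_comm]
  have : star x ⬝ᵥ A *ᵥ x = toC a ⬝ᵥ A *ᵥ toC a + toC b ⬝ᵥ A *ᵥ toC b := by
    rw [hsx, hx]
    simp only [Matrix.mulVec_add, Matrix.mulVec_smul, sub_dotProduct, dotProduct_add, smul_dotProduct, dotProduct_smul, hsym, smul_eq_mul]
    linear_combination (-(toC b ⬝ᵥ A *ᵥ toC b)) * I_mul_I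
  rw [this, add_re]
  exact add_nonneg (hreal a) (hreal b)

lemma growth_eq (n : ℕ) (A S : Matrix (Idx n) (Idx n) ℂ) (hA : Aᵀ = A) (hS : S = -(A * Jmat n))
    (e : ℝ) (he : e = 1 ∨ e = -1) : growth ((2:ℂ) • (Ke n e * A)) = 2 * nuTotal n S := by
  have h1 : ((2:ℂ) • (Ke n e * A)).charpoly.roots = S.charpoly.roots.map (fun z => (-(2 * I * e)) * z) := by
    rw [← roots_smul_charpoly]
    congr 1
    have : (2:ℂ) • (Ke n e * A) = (((2:ℂ) * (I * e)) • Jmat n) * A := by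
      rw [Ke, ← Matrix.smul_mul, smul_smul]
    rw [this, Matrix.charpoly_mul_comm, hS]
    congr 1
    rw [Matrix.mul_smul, smul_neg, neg_smul, neg_neg]
    congr 1; ring
  rw [growth, h1, Multiset.map_map, nuTotal, ← Multiset.sum_map_mul_left]
  have hre : ∀ z : ℂ, (-(2 * I * e) * z).re = 2 * e * z.im := by
    intro z; simp
  simp only [Function.comp_def, hre]
  rcases he with rfl | rfl
  · congr 1; apply Multiset.map_congr rfl; intro z hz
    rw [mul_one, mul_max_of_nonneg _ _ (by norm_num : (0:ℝ) ≤ 2), mul_zero]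
  · have htr : S.trace = 0 := by
      have : (A * Jmat n).trace = - (A * Jmat n).trace := by
        conv_lhs => rw [← Matrix.trace_transpose, Matrix.transpose_mul, hA, Jmat_tr, Matrix.neg_mul, Matrix.trace_neg, Matrix.trace_mul_comm]
      rw [hS, Matrix.trace_neg, ← this]
      exact self_eq_neg.1 this
    have hsum : (S.charpoly.roots.map (fun z => z.im)).sum = 0 := by
      have := congrArg Complex.im (Matrix.trace_eq_sum_roots_charpoly S)
      rw [htr] at this
      have h2 := map_multiset_sum Complex.imCLM S.charpoly.roots
      exact h2.symm.trans (by rw [Complex.imCLM_apply, ← this]; simp)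
    have : ∀ z : ℂ, max (2 * (-1) * z.im) 0 = 2 * max z.im 0 - 2 * z.im := by
      intro z
      rcases le_total z.im 0 with h | h
      · rw [max_eq_right h, max_eq_left (by linarith)]; ring
      · rw [max_eq_left h, max_eq_right (by linarith)]; ring
    simp only [this]
    rw [Multiset.sum_map_sub, Multiset.sum_map_mul_left, Multiset.sum_map_mul_left, hsum]
    simp
end Inst

section Hana
variable {n : ℕ}

instance haarH1 (n : ℕ) : (volume : Measure ((Fin n → ℝ) × ℝ)).IsAddHaarMeasure :=
  inferInstanceAs (((volume : Measure (Fin n → ℝ)).prod (volume : Measure ℝ)).IsAddHaarMeasure)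

instance haarH (n : ℕ) : (volume : Measure (Hgrp n)).IsAddHaarMeasure :=
  Measure.prod.instIsAddHaarMeasure (volume : Measure (Fin n → ℝ)) (volume : Measure ((Fin n → ℝ) × ℝ))

/-- the horizontal part of a point -/
def hv (n : ℕ) : Hgrp n →L[ℝ] (Idx n → ℝ) := LinearMap.toContinuousLinearMap
  { toFun := fun p => Sum.elim p.1 p.2.1
    map_add' := by intro p q; funext i; rcases i with i | i <;> simp
    map_smul' := by intro c p; funext i; rcases i with i | i <;> simp }

lemma hv_apply (p : Hgrp n) : hv n p = Sum.elim p.1 p.2.1 := rfl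

def hd0 (n : ℕ) : Hgrp n := (0, 0, 1)

def hd1 (n : ℕ) : Idx n → Hgrp n
  | Sum.inl j => (Pi.single j 1, 0, 0)
  | Sum.inr j => (0, Pi.single j 1, 0)

def hc (n : ℕ) (j : Idx n) : Hgrp n →L[ℝ] ℝ := LinearMap.toContinuousLinearMap
  { toFun := fun p => -(1/2) * (JmatR n *ᵥ hv n p) j
    map_add' := by intro p q; rw [map_add, Matrix.mulVec_add]; simp; ring
    map_smul' := by intro c p; rw [map_smul, Matrix.mulVec_smul]; simp; ring }

lemma hc_apply (j : Idx n) (p : Hgrp n) : hc n j p = -(1/2) * (JmatR n *ᵥ hv n p) j := rfl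

lemma hv_hd0 : hv n (hd0 n) = 0 := by
  funext i; rcases i with i | i <;> simp [hv_apply, hd0]

lemma hv_hd1 (j : Idx n) : hv n (hd1 n j) = Pi.single j 1 := by
  funext i
  rcases j with j | j <;> rcases i with i | i <;> simp [hv_apply, hd1, Pi.single_apply]

lemma hd1_u (j : Idx n) : (hd1 n j).2.2 = 0 := by
  rcases j with j | j <;> rfl

lemma hc_hd0 (j : Idx n) : hc n j (hd0 n) = 0 := by
  rw [hc_apply, hv_hd0]; simp

lemma Vop_eq (j : Idx n) (f : Hgrp n → ℂ) (p : Hgrp n) :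
    Vop n j f p = fderiv ℝ f p (hd1 n j) + (hc n j p : ℂ) * fderiv ℝ f p (hd0 n) := by
  rcases j with j | j
  · simp [Vop, Xop, hd1, hd0, hc_apply, hv_apply, JmatR, Matrix.fromBlocks_mulVec]
    ring
  · simp [Vop, Yop, hd1, hd0, hc_apply, hv_apply, JmatR, Matrix.fromBlocks_mulVec, Matrix.neg_mulVec]
    left
    ring

lemma Uop_eq (f : Hgrp n → ℂ) (p : Hgrp n) : Uop n f p = fderiv ℝ f p (hd0 n) := rfl

/-- polynomial bound -/
def PolyB (f : Hgrp n → ℂ) : Prop := ∃ (C : ℝ) (k : ℕ), 0 ≤ C ∧ ∀ p, ‖f p‖ ≤ C * (1 + ‖p‖) ^ k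

lemma PolyB.mul {f g : Hgrp n → ℂ} (hf : PolyB f) (hg : PolyB g) : PolyB (fun p => f p * g p) := by
  obtain ⟨C, k, hC, h⟩ := hf
  obtain ⟨C', k', hC', h'⟩ := hg
  refine ⟨C * C', k + k', by positivity, fun p => ?_⟩
  rw [norm_mul, pow_add]
  calc _ ≤ (C * (1 + ‖p‖) ^ k) * (C' * (1 + ‖p‖) ^ k') := mul_le_mul (h p) (h' p) (norm_nonneg _) (by positivity)
    _ = _ := by ring

lemma PolyB.add {f g : Hgrp n → ℂ} (hf : PolyB f) (hg : PolyB g) : PolyB (fun p => f p + g p) := by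
  obtain ⟨C, k, hC, h⟩ := hf
  obtain ⟨C', k', hC', h'⟩ := hg
  refine ⟨C + C', k + k', by positivity, fun p => (norm_add_le _ _).trans ?_⟩
  have h1 : (1 : ℝ) ≤ 1 + ‖p‖ := by linarith [norm_nonneg p]
  have e1 : (1 + ‖p‖) ^ k ≤ (1 + ‖p‖) ^ (k + k') := pow_le_pow_right₀ h1 (by omega)
  have e2 : (1 + ‖p‖) ^ k' ≤ (1 + ‖p‖) ^ (k + k') := pow_le_pow_right₀ h1 (by omega)
  rw [add_mul]
  exact add_le_add ((h p).trans (by gcongr)) ((h' p).trans (by gcongr))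

lemma PolyB.const (c : ℂ) : PolyB (fun _ : Hgrp n => c) := ⟨‖c‖, 0, norm_nonneg _, fun p => by simp⟩

lemma PolyB.sum {κ : Type*} (s : Finset κ) {f : κ → Hgrp n → ℂ} (hf : ∀ i, PolyB (f i)) :
    PolyB (fun p => ∑ i ∈ s, f i p) := by
  classical
  induction s using Finset.induction_on with
  | empty => simpa using PolyB.const 0
  | insert a s ha ih => simp only [Finset.sum_insert ha]; exact (hf a).add ih

lemma PolyB.clm (L : Hgrp n →L[ℝ] ℝ) : PolyB (fun p => (L p : ℂ)) := by
  refine ⟨‖L‖, 1, norm_nonneg _, fun p => ?_⟩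
  rw [Complex.norm_real, pow_one]
  exact (L.le_opNorm p).trans (by gcongr; linarith)

lemma PolyB.congr {f g : Hgrp n → ℂ} (hf : PolyB f) (h : ∀ p, g p = f p) : PolyB g := by
  rwa [show g = f from funext h]

lemma polyB_integrable {f : Hgrp n → ℂ} (hc : Continuous f) (hf : PolyB f) (φ : SchwartzMap (Hgrp n) ℂ) :
    Integrable (fun p => f p * φ p) := by
  obtain ⟨C, k, hC, h⟩ := hf
  have i1 := φ.integrable_pow_mul (μ := volume) k
  have i2 := (φ.integrable (μ := volume)).norm
  refine Integrable.mono' ((i2.add i1).const_mul (C * 2 ^ (k-1))) ((hc.mul φ.continuous).aestronglyMeasurable) ?_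
  filter_upwards with p
  rw [norm_mul]
  have h2 : (1 + ‖p‖) ^ k ≤ 2 ^ (k-1) * (1 ^ k + ‖p‖ ^ k) := add_pow_le zero_le_one (norm_nonneg _) k
  rw [one_pow] at h2
  calc ‖f p‖ * ‖φ p‖ ≤ (C * (2 ^ (k-1) * (1 + ‖p‖ ^ k))) * ‖φ p‖ := by
        gcongr; exact (h p).trans (by gcongr)
    _ = _ := by simp only [Pi.add_apply]; ring

structure Nice (f : Hgrp n → ℂ) : Prop where
  smooth : ContDiff ℝ 1 f
  pb : PolyB f
  dpb : ∀ d, PolyB (fun p => fderiv ℝ f p d)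

lemma Nice.diff {f : Hgrp n → ℂ} (hf : Nice f) : Differentiable ℝ f := hf.smooth.differentiable (by simp)

lemma fderiv_mul_apply' {f g : Hgrp n → ℂ} (hf : Differentiable ℝ f) (hg : Differentiable ℝ g) (p d : Hgrp n) :
    fderiv ℝ (fun p => f p * g p) p d = fderiv ℝ f p d * g p + f p * fderiv ℝ g p d := by
  rw [fderiv_fun_mul (hf p) (hg p)]
  simp; ring

lemma Nice.mul {f g : Hgrp n → ℂ} (hf : Nice f) (hg : Nice g) : Nice (fun p => f p * g p) where
  smooth := hf.smooth.mul hg.smooth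
  pb := hf.pb.mul hg.pb
  dpb := fun d => (((hf.dpb d).mul hg.pb).add (hf.pb.mul (hg.dpb d))).congr
    (fun p => fderiv_mul_apply' hf.diff hg.diff p d)

lemma fderiv_ofReal_clm (L : Hgrp n →L[ℝ] ℝ) (p d : Hgrp n) :
    fderiv ℝ (fun p => (L p : ℂ)) p d = (L d : ℂ) := by
  have : HasFDerivAt (fun p => (L p : ℂ)) (Complex.ofRealCLM.comp L) p :=
    Complex.ofRealCLM.hasFDerivAt.comp p L.hasFDerivAt
  rw [this.fderiv]; rfl

lemma Nice.clm (L : Hgrp n →L[ℝ] ℝ) : Nice (fun p => (L p : ℂ)) where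
  smooth := Complex.ofRealCLM.contDiff.comp L.contDiff
  pb := PolyB.clm L
  dpb := fun d => (PolyB.const (L d : ℂ)).congr (fun p => fderiv_ofReal_clm L p d)

lemma Nice.const (c : ℂ) : Nice (fun _ : Hgrp n => c) where
  smooth := contDiff_const
  pb := PolyB.const c
  dpb := fun d => (PolyB.const 0).congr (fun p => by simp)

lemma Nice.add {f g : Hgrp n → ℂ} (hf : Nice f) (hg : Nice g) : Nice (fun p => f p + g p) where
  smooth := hf.smooth.add hg.smooth
  pb := hf.pb.add hg.pb
  dpb := fun d => ((hf.dpb d).add (hg.dpb d)).congr (fun p => by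
    rw [fderiv_fun_add (hf.diff p) (hg.diff p)]; rfl)

lemma Nice.sum {κ : Type*} (s : Finset κ) {f : κ → Hgrp n → ℂ} (hf : ∀ i, Nice (f i)) :
    Nice (fun p => ∑ i ∈ s, f i p) := by
  classical
  induction s using Finset.induction_on with
  | empty => simpa using Nice.const 0
  | insert a s ha ih => simp only [Finset.sum_insert ha]; exact (hf a).add ih

lemma ibp_const {f : Hgrp n → ℂ} (hf : Nice f) (φ : SchwartzMap (Hgrp n) ℂ) (d : Hgrp n) :
    ∫ p, f p * fderiv ℝ φ p d = - ∫ p, fderiv ℝ f p d * φ p := by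
  apply integral_mul_fderiv_eq_neg_fderiv_mul_of_integrable
  · refine polyB_integrable ?_ (hf.dpb d) φ
    exact (hf.smooth.continuous_fderiv (by simp)).clm_apply continuous_const
  · have := polyB_integrable hf.smooth.continuous hf.pb (LineDeriv.lineDerivOp d φ)
    simpa only [SchwartzMap.lineDerivOp_apply_eq_fderiv] using this
  · exact polyB_integrable hf.smooth.continuous hf.pb φ
  · exact fun p _ => hf.diff p
  · exact fun p _ => φ.differentiableAt

/-- `V_j` acting on Schwartz functions -/
def VS (n : ℕ) (j : Idx n) (φ : SchwartzMap (Hgrp n) ℂ) : SchwartzMap (Hgrp n) ℂ :=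
  LineDeriv.lineDerivOp (hd1 n j) φ +
    SchwartzMap.smulLeftCLM ℂ (fun p => (hc n j p : ℂ)) (LineDeriv.lineDerivOp (hd0 n) φ)

lemma hc_temp (j : Idx n) : Function.HasTemperateGrowth (fun p => (hc n j p : ℂ)) :=
  (Complex.ofRealCLM.comp (hc n j)).hasTemperateGrowth

lemma VS_coe (j : Idx n) (φ : SchwartzMap (Hgrp n) ℂ) : ⇑(VS n j φ) = Vop n j φ := by
  funext p
  rw [Vop_eq]
  simp [VS, SchwartzMap.smulLeftCLM_apply_apply (hc_temp j), SchwartzMap.lineDerivOp_apply_eq_fderiv]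

lemma ibp_V {f : Hgrp n → ℂ} (hf : Nice f) (φ : SchwartzMap (Hgrp n) ℂ) (j : Idx n) :
    ∫ p, f p * Vop n j φ p = - ∫ p, Vop n j f p * φ p := by
  have hcn := Nice.clm (hc n j)
  have e1 := ibp_const hf φ (hd1 n j)
  have e2 := ibp_const (hf.mul hcn) φ (hd0 n)
  have i1 := polyB_integrable hf.smooth.continuous hf.pb (LineDeriv.lineDerivOp (hd1 n j) φ)
  have i2 := polyB_integrable (hf.mul hcn).smooth.continuous (hf.mul hcn).pb (LineDeriv.lineDerivOp (hd0 n) φ)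
  simp only [SchwartzMap.lineDerivOp_apply_eq_fderiv] at i1 i2
  have i3 : Integrable (fun p => fderiv ℝ f p (hd1 n j) * φ p) := by
    refine polyB_integrable ?_ (hf.dpb _) φ
    exact (hf.smooth.continuous_fderiv (by simp)).clm_apply continuous_const
  have i4 : Integrable (fun p => fderiv ℝ (fun p => f p * (hc n j p : ℂ)) p (hd0 n) * φ p) := by
    refine polyB_integrable ?_ ((hf.mul hcn).dpb _) φ
    exact ((hf.mul hcn).smooth.continuous_fderiv (by simp)).clm_apply continuous_const
  calc _ = ∫ p, (f p * fderiv ℝ φ p (hd1 n j) + f p * (hc n j p : ℂ) * fderiv ℝ φ p (hd0 n)) := by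
        congr 1; funext p; rw [Vop_eq]; ring
    _ = -(∫ p, (fderiv ℝ f p (hd1 n j) * φ p + fderiv ℝ (fun p => f p * (hc n j p : ℂ)) p (hd0 n) * φ p)) := by
        rw [integral_add i1 i2, e1, e2, integral_add i3 i4, neg_add]
    _ = _ := by
        congr 2; funext p
        rw [fderiv_mul_apply' hf.diff hcn.diff, fderiv_ofReal_clm, hc_hd0, Vop_eq]
        push_cast; ring
end Hana

section Gfun
variable {n : ℕ}

lemma integral_double {ι X : Type*} [Fintype ι] [MeasurableSpace X] {μ : Measure X} (a : ι → ι → ℂ) (c : ℂ)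
    (f : ι → ι → X → ℂ) (g : X → ℂ) (hf : ∀ j k, Integrable (f j k) μ) (hg : Integrable g μ) :
    ∫ p, ((∑ j, ∑ k, a j k * f j k p) + c * g p) ∂μ = (∑ j, ∑ k, a j k * ∫ p, f j k p ∂μ) + c * ∫ p, g p ∂μ := by
  rw [integral_add (integrable_finsetSum _ fun j _ => integrable_finsetSum _ fun k _ => (hf j k).const_mul _) (hg.const_mul _),
      integral_finsetSum _ (fun j _ => integrable_finsetSum _ fun k _ => (hf j k).const_mul _), integral_const_mul]
  congr 1
  apply Finset.sum_congr rfl; intro j _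
  rw [integral_finsetSum _ (fun k _ => (hf j k).const_mul _)]
  apply Finset.sum_congr rfl; intro k _
  rw [integral_const_mul]

def hu (n : ℕ) : Hgrp n →L[ℝ] ℝ :=
  (ContinuousLinearMap.snd ℝ (Fin n → ℝ) ℝ).comp (ContinuousLinearMap.snd ℝ (Fin n → ℝ) ((Fin n → ℝ) × ℝ))

lemma hu_apply (p : Hgrp n) : hu n p = p.2.2 := rfl

def hvi (n : ℕ) (i : Idx n) : Hgrp n →L[ℝ] ℝ := (ContinuousLinearMap.proj i).comp (hv n)

lemma hvi_apply (i : Idx n) (p : Hgrp n) : hvi n i p = hv n p i := rfl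

def qexp (Z : Matrix (Idx n) (Idx n) ℂ) (m : ℝ) (p : Hgrp n) : ℂ :=
  -(1/2 : ℂ) * (toC (hv n p) ⬝ᵥ Z *ᵥ toC (hv n p)) - I * m * (hu n p : ℂ)

def GG (Z : Matrix (Idx n) (Idx n) ℂ) (m : ℝ) (p : Hgrp n) : ℂ := cexp (qexp Z m p)

lemma lin_nice (W : Matrix (Idx n) (Idx n) ℂ) (j : Idx n) : Nice (fun p => (W *ᵥ toC (hv n p)) j) :=
  Nice.sum Finset.univ (fun i => (Nice.const (W j i)).mul (Nice.clm (hvi n i)))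

lemma qexp_nice (Z : Matrix (Idx n) (Idx n) ℂ) (m : ℝ) : Nice (qexp Z m) := by
  have h1 : Nice (fun p => toC (hv n p) ⬝ᵥ Z *ᵥ toC (hv n p)) :=
    Nice.sum Finset.univ (fun i => (Nice.clm (hvi n i)).mul (lin_nice Z i))
  have h2 := ((Nice.const (-(1/2 : ℂ))).mul h1).add ((Nice.const (-(I * m))).mul (Nice.clm (hu n)))
  have e : qexp Z m = fun p => -(1/2 : ℂ) * (toC (hv n p) ⬝ᵥ Z *ᵥ toC (hv n p)) + -(I * m) * (hu n p : ℂ) := by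
    funext p; rw [qexp]; ring
  rw [e]; exact h2

lemma toC_add' {ι : Type*} (v w : ι → ℝ) : toC (v + w) = toC v + toC w := by
  funext i; simp [toC]

lemma toC_smul' {ι : Type*} (t : ℝ) (w : ι → ℝ) : toC (t • w) = (t : ℂ) • toC w := by
  funext i; simp [toC]

lemma sym_dot {ι : Type*} [Fintype ι] {Z : Matrix ι ι ℂ} (hZ : Zᵀ = Z) (a b : ι → ℂ) :
    a ⬝ᵥ Z *ᵥ b = b ⬝ᵥ Z *ᵥ a := by
  rw [Matrix.dotProduct_mulVec, ← Matrix.mulVec_transpose, hZ, dotProduct_comm]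

lemma qexp_fderiv {Z : Matrix (Idx n) (Idx n) ℂ} (hZ : Zᵀ = Z) (m : ℝ) (p d : Hgrp n) :
    fderiv ℝ (qexp Z m) p d = -(toC (hv n d) ⬝ᵥ Z *ᵥ toC (hv n p)) - I * m * (hu n d : ℂ) := by
  rw [← ((qexp_nice Z m).diff p).lineDeriv_eq_fderiv, lineDeriv]
  have hof : HasDerivAt (fun t : ℝ => (t : ℂ)) 1 0 := Complex.ofRealCLM.hasDerivAt
  have e : (fun t : ℝ => qexp Z m (p + t • d)) = fun t : ℝ => qexp Z m p +
      (t : ℂ) * (-(toC (hv n d) ⬝ᵥ Z *ᵥ toC (hv n p)) - I * m * (hu n d : ℂ)) +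
      (t : ℂ) * (t : ℂ) * (-(1/2) * (toC (hv n d) ⬝ᵥ Z *ᵥ toC (hv n d))) := by
    funext t
    simp only [qexp, map_add, map_smul, toC_add', toC_smul', Matrix.mulVec_add, Matrix.mulVec_smul, dotProduct_add,
      add_dotProduct, smul_dotProduct, dotProduct_smul, smul_eq_mul, ofReal_add, ofReal_mul]
    rw [sym_dot hZ (toC (hv n p)) (toC (hv n d))]
    ring
  rw [e]
  have h := ((hof.mul_const (-(toC (hv n d) ⬝ᵥ Z *ᵥ toC (hv n p)) - I * m * (hu n d : ℂ))).const_add (qexp Z m p)).add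
    ((hof.mul hof).mul_const (-(1/2) * (toC (hv n d) ⬝ᵥ Z *ᵥ toC (hv n d))))
  refine (h.congr_deriv ?_).deriv
  simp

lemma GG_fderiv {Z : Matrix (Idx n) (Idx n) ℂ} (hZ : Zᵀ = Z) (m : ℝ) (p d : Hgrp n) :
    fderiv ℝ (GG Z m) p d = (-(toC (hv n d) ⬝ᵥ Z *ᵥ toC (hv n p)) - I * m * (hu n d : ℂ)) * GG Z m p := by
  have h := ((qexp_nice Z m).diff p).hasFDerivAt.cexp
  have h2 : HasFDerivAt (GG Z m) (cexp (qexp Z m p) • fderiv ℝ (qexp Z m) p) p := h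
  rw [h2.fderiv, _root_.smul_apply, qexp_fderiv hZ, smul_eq_mul, mul_comm]; rfl

lemma GG_norm {Z : Matrix (Idx n) (Idx n) ℂ} (hZr : ∀ x : Idx n → ℝ, 0 ≤ (toC x ⬝ᵥ Z *ᵥ toC x).re)
    (m : ℝ) (p : Hgrp n) : ‖GG Z m p‖ ≤ 1 := by
  rw [GG, Complex.norm_exp, Real.exp_le_one_iff, qexp]
  have := hZr (hv n p)
  have e : (-(1/2 : ℂ) * (toC (hv n p) ⬝ᵥ Z *ᵥ toC (hv n p)) - I * m * (hu n p : ℂ)).re =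
      -(1/2) * (toC (hv n p) ⬝ᵥ Z *ᵥ toC (hv n p)).re := by
    rw [Complex.sub_re, Complex.mul_re]
    have : (-(1/2 : ℂ)) = ((-(1/2) : ℝ) : ℂ) := by push_cast; ring
    rw [this, ofReal_re, ofReal_im]
    simp
  rw [e]; linarith

lemma GG_nice {Z : Matrix (Idx n) (Idx n) ℂ} (hZ : Zᵀ = Z)
    (hZr : ∀ x : Idx n → ℝ, 0 ≤ (toC x ⬝ᵥ Z *ᵥ toC x).re) (m : ℝ) : Nice (GG Z m) := by
  have hpb : PolyB (GG Z m) := ⟨1, 0, zero_le_one, fun p => by simpa using GG_norm hZr m p⟩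
  refine ⟨(qexp_nice Z m).smooth.cexp, hpb, fun d => ?_⟩
  have h := (((qexp_nice Z m).dpb d).mul hpb)
  refine h.congr (fun p => ?_)
  rw [GG_fderiv hZ, qexp_fderiv hZ]

def Wm (Z : Matrix (Idx n) (Idx n) ℂ) (m : ℝ) : Matrix (Idx n) (Idx n) ℂ := Z + (-(I * m / 2)) • Jmat n

lemma toC_single {ι : Type*} [DecidableEq ι] (j : ι) : toC (Pi.single j (1:ℝ)) = Pi.single j 1 := by
  funext i; simp only [toC, Pi.single_apply]; split_ifs <;> simp

lemma JmatR_toC (v : Idx n → ℝ) (j : Idx n) : (((JmatR n *ᵥ v) j : ℝ) : ℂ) = (Jmat n *ᵥ toC v) j := by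
  rcases j with j | j <;>
  simp [Jmat, JmatR, toC, Matrix.mulVec, dotProduct, Matrix.one_apply]

lemma V_GG {Z : Matrix (Idx n) (Idx n) ℂ} (hZ : Zᵀ = Z) (m : ℝ) (j : Idx n) (p : Hgrp n) :
    Vop n j (GG Z m) p = -(Wm Z m *ᵥ toC (hv n p)) j * GG Z m p := by
  rw [Vop_eq, GG_fderiv hZ, GG_fderiv hZ, hv_hd1, hv_hd0, toC_single, hc_apply]
  have e0 : toC (0 : Idx n → ℝ) = 0 := by funext i; simp [toC]
  have e1 : hu n (hd1 n j) = 0 := hd1_u j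
  have e2 : hu n (hd0 n) = 1 := rfl
  rw [e0, e1, e2, Wm, Matrix.add_mulVec, Matrix.smul_mulVec, Pi.add_apply, Pi.smul_apply, ofReal_mul, JmatR_toC]
  simp
  ring

lemma fderiv_lin (W : Matrix (Idx n) (Idx n) ℂ) (j : Idx n) (p d : Hgrp n) :
    fderiv ℝ (fun p => (W *ᵥ toC (hv n p)) j) p d = (W *ᵥ toC (hv n d)) j := by
  rw [← ((lin_nice W j).diff p).lineDeriv_eq_fderiv, lineDeriv]
  have hof : HasDerivAt (fun t : ℝ => (t : ℂ)) 1 0 := Complex.ofRealCLM.hasDerivAt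
  have e : (fun t : ℝ => (W *ᵥ toC (hv n (p + t • d))) j) = fun t : ℝ => (W *ᵥ toC (hv n p)) j + (t : ℂ) * (W *ᵥ toC (hv n d)) j := by
    funext t
    simp [map_add, map_smul, toC_add', toC_smul', Matrix.mulVec_add, Matrix.mulVec_smul]
  rw [e]
  refine (((hof.mul_const _).const_add _).congr_deriv ?_).deriv
  simp

lemma VV_GG {Z : Matrix (Idx n) (Idx n) ℂ} (hZ : Zᵀ = Z)
    (hZr : ∀ x : Idx n → ℝ, 0 ≤ (toC x ⬝ᵥ Z *ᵥ toC x).re) (m : ℝ) (j k : Idx n) (p : Hgrp n) :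
    Vop n k (Vop n j (GG Z m)) p =
      (-(Wm Z m j k) + (Wm Z m *ᵥ toC (hv n p)) j * (Wm Z m *ᵥ toC (hv n p)) k) * GG Z m p := by
  have e : Vop n j (GG Z m) = fun p => (-1 * (Wm Z m *ᵥ toC (hv n p)) j) * GG Z m p := by
    funext p; rw [V_GG hZ]; ring
  have hg := GG_nice hZ hZr m
  have hl := (Nice.const (-1)).mul (lin_nice (Wm Z m) j)
  have hd : ∀ d, fderiv ℝ (fun p => -1 * (Wm Z m *ᵥ toC (hv n p)) j) p d = - (Wm Z m *ᵥ toC (hv n d)) j := by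
    intro d
    rw [fderiv_mul_apply' (Nice.const (-1)).diff (lin_nice (Wm Z m) j).diff, fderiv_lin]; simp
  have hV := V_GG hZ m k p
  rw [Vop_eq] at hV
  have e0 : toC (0 : Idx n → ℝ) = 0 := by funext i; simp [toC]
  rw [e, Vop_eq, fderiv_mul_apply' hl.diff hg.diff, fderiv_mul_apply' hl.diff hg.diff, hd, hd, hv_hd1, hv_hd0, toC_single, e0]
  rw [Matrix.mulVec_zero, Matrix.mulVec_single_one]
  simp only [Pi.zero_apply, Matrix.col_apply]
  linear_combination (-1 * (Wm Z m *ᵥ toC (hv n p)) j) * hV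

/-- the second order operator on Schwartz functions -/
lemma ibp_L {Z : Matrix (Idx n) (Idx n) ℂ} (hZ : Zᵀ = Z)
    (hZr : ∀ x : Idx n → ℝ, 0 ≤ (toC x ⬝ᵥ Z *ᵥ toC x).re) (m : ℝ) (A : Matrix (Idx n) (Idx n) ℂ)
    (hA : Aᵀ = A) (α : ℂ) (φ ψ : SchwartzMap (Hgrp n) ℂ) (hψ : ⇑ψ = Lop n A (-α) ⇑φ) :
    ∫ p, GG Z m p * ψ p = ∫ p, ((-(A * Wm Z m).trace + toC (hv n p) ⬝ᵥ ((Wm Z m)ᵀ * A * Wm Z m) *ᵥ toC (hv n p)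
      + α * m) * GG Z m p) * φ p := by
  have hg := GG_nice hZ hZr m
  have hVg : ∀ j, Nice (Vop n j (GG Z m)) := by
    intro j
    have e : Vop n j (GG Z m) = fun p => (-1 * (Wm Z m *ᵥ toC (hv n p)) j) * GG Z m p := by
      funext p; rw [V_GG hZ]; ring
    rw [e]; exact ((Nice.const (-1)).mul (lin_nice (Wm Z m) j)).mul hg
  have hVV : ∀ j k, ∫ p, GG Z m p * Vop n j (Vop n k φ) p = ∫ p, Vop n k (Vop n j (GG Z m)) p * φ p := by
    intro j k
    rw [← VS_coe k, ibp_V hg, VS_coe, ibp_V (hVg j), neg_neg]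
  have hU : ∫ p, GG Z m p * Uop n φ p = ∫ p, (I * m * GG Z m p) * φ p := by
    simp only [Uop_eq]
    rw [ibp_const hg, ← integral_neg]
    congr 1; funext p
    have e0 : toC (0 : Idx n → ℝ) = 0 := by funext i; simp [toC]
    have e2 : hu n (hd0 n) = 1 := rfl
    rw [GG_fderiv hZ, hv_hd0, e0, e2]; simp
  have hiL : ∀ j k, Integrable (fun p => GG Z m p * Vop n j (Vop n k φ) p) := by
    intro j k
    have := polyB_integrable hg.smooth.continuous hg.pb (VS n j (VS n k φ))
    simpa only [VS_coe] using this
  have hiU : Integrable (fun p => GG Z m p * Uop n φ p) := by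
    have := polyB_integrable hg.smooth.continuous hg.pb (LineDeriv.lineDerivOp (hd0 n) φ)
    simpa only [SchwartzMap.lineDerivOp_apply_eq_fderiv, Uop_eq] using this
  have hiV2 : ∀ j k, Integrable (fun p => Vop n k (Vop n j (GG Z m)) p * φ p) := by
    intro j k
    have h := ((Nice.const (-(Wm Z m j k))).add ((lin_nice (Wm Z m) j).mul (lin_nice (Wm Z m) k))).mul hg
    have := polyB_integrable h.smooth.continuous h.pb φ
    simpa only [VV_GG hZ hZr] using this
  have hiU2 : Integrable (fun p => (I * m * GG Z m p) * φ p) :=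
    polyB_integrable ((Nice.const (I * m)).mul hg).smooth.continuous ((Nice.const (I * m)).mul hg).pb φ
  have L1 : ∫ p, GG Z m p * ψ p = (∑ j, ∑ k, A j k * ∫ p, GG Z m p * Vop n j (Vop n k φ) p) + I * (-α) * ∫ p, GG Z m p * Uop n φ p := by
    have : ∀ p, GG Z m p * ψ p = (∑ j, ∑ k, A j k * (GG Z m p * Vop n j (Vop n k φ) p)) + I * (-α) * (GG Z m p * Uop n φ p) := by
      intro p
      rw [hψ, Lop, mul_add, Finset.mul_sum]
      congr 1
      · apply Finset.sum_congr rfl; intro j _; rw [Finset.mul_sum]; apply Finset.sum_congr rfl; intro k _; ring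
      · ring
    rw [integral_congr_ae (Filter.Eventually.of_forall this)]
    exact integral_double (fun j k => A j k) _ (fun j k p => GG Z m p * Vop n j (Vop n k φ) p) _ hiL hiU
  rw [L1, hU]
  simp only [hVV]
  have L2 : ∀ p, ((-(A * Wm Z m).trace + toC (hv n p) ⬝ᵥ ((Wm Z m)ᵀ * A * Wm Z m) *ᵥ toC (hv n p)
      + α * m) * GG Z m p) * φ p = (∑ j, ∑ k, A j k * (Vop n k (Vop n j (GG Z m)) p * φ p)) + I * (-α) * ((I * m * GG Z m p) * φ p) := by
    intro p
    simp only [VV_GG hZ hZr]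
    have t1 : (A * Wm Z m).trace = ∑ j, ∑ k, A j k * Wm Z m j k := by
      rw [Matrix.trace, Finset.sum_comm]
      have : ∀ j k, A j k = A k j := fun j k => congrFun (congrFun hA k) j |>.symm ▸ rfl
      simp only [Matrix.diag_apply, Matrix.mul_apply]
      rw [Finset.sum_comm]
      conv_lhs => rw [Finset.sum_comm]
      apply Finset.sum_congr rfl; intro j _; apply Finset.sum_congr rfl; intro k _; rw [this]
    have t2 : toC (hv n p) ⬝ᵥ ((Wm Z m)ᵀ * A * Wm Z m) *ᵥ toC (hv n p) =
        ∑ j, ∑ k, A j k * ((Wm Z m *ᵥ toC (hv n p)) j * (Wm Z m *ᵥ toC (hv n p)) k) := by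
      rw [Matrix.mul_assoc, ← Matrix.mulVec_mulVec, Matrix.dotProduct_mulVec, Matrix.vecMul_transpose, ← Matrix.mulVec_mulVec]
      generalize Wm Z m *ᵥ toC (hv n p) = y
      simp only [dotProduct, Matrix.mulVec, Finset.mul_sum]
      apply Finset.sum_congr rfl; intro j _; apply Finset.sum_congr rfl; intro k _; ring
    rw [t1, t2]
    have t3 : ∑ j, ∑ k, A j k * ((-(Wm Z m j k) + (Wm Z m *ᵥ toC (hv n p)) j * (Wm Z m *ᵥ toC (hv n p)) k) * GG Z m p * φ p)
      = (-(∑ j, ∑ k, A j k * Wm Z m j k) + ∑ j, ∑ k, A j k * ((Wm Z m *ᵥ toC (hv n p)) j * (Wm Z m *ᵥ toC (hv n p)) k)) * GG Z m p * φ p := by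
      rw [add_mul, add_mul, ← Finset.sum_neg_distrib, Finset.sum_mul, Finset.sum_mul, Finset.sum_mul, Finset.sum_mul, ← Finset.sum_add_distrib]
      apply Finset.sum_congr rfl; intro j _
      rw [← Finset.sum_neg_distrib, Finset.sum_mul, Finset.sum_mul, Finset.sum_mul, Finset.sum_mul, ← Finset.sum_add_distrib]
      apply Finset.sum_congr rfl; intro k _; ring
    rw [t3]
    linear_combination (-(α * m * GG Z m p * φ p)) * (-1 : ℂ) * I_mul_I
  rw [integral_congr_ae (Filter.Eventually.of_forall L2)]
  exact (integral_double (fun j k => A j k) _ (fun j k p => Vop n k (Vop n j (GG Z m)) p * φ p) _ hiV2 hiU2).symm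
end Gfun

section EvoS
variable {n : ℕ}

structure Evo (A : Matrix (Idx n) (Idx n) ℂ) (m μ : ℝ) (a : ℝ → ℂ) (Z : ℝ → Matrix (Idx n) (Idx n) ℂ) : Prop where
  sym : ∀ s, 0 ≤ s → (Z s)ᵀ = Z s
  re : ∀ s, 0 ≤ s → ∀ x : Idx n → ℝ, 0 ≤ (toC x ⬝ᵥ Z s *ᵥ toC x).re
  dZ : ∀ s, 0 ≤ s → MD Z (-(μ:ℂ)⁻¹ • ((Wm (Z s) m)ᵀ * A * Wm (Z s) m)) s
  da : ∀ s, 0 ≤ s → HasDerivAt a (-(2 * (μ:ℂ))⁻¹ * (A * Wm (Z s) m).trace * a s) s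

variable {A : Matrix (Idx n) (Idx n) ℂ} {m μ : ℝ} {a : ℝ → ℂ} {Z : ℝ → Matrix (Idx n) (Idx n) ℂ}

lemma Evo.cZ (h : Evo A m μ a Z) {s : ℝ} (hs : 0 ≤ s) (i j : Idx n) : ContinuousAt (fun s => Z s i j) s :=
  (h.dZ s hs i j).continuousAt

lemma Evo.cZ' (h : Evo A m μ a Z) {s : ℝ} (hs : 0 ≤ s) : ContinuousAt Z s :=
  continuousAt_pi.2 fun i => continuousAt_pi.2 fun j => h.cZ hs i j

lemma Evo.cD (h : Evo A m μ a Z) {s : ℝ} (hs : 0 ≤ s) (i j : Idx n) :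
    ContinuousAt (fun s => (-(μ:ℂ)⁻¹ • ((Wm (Z s) m)ᵀ * A * Wm (Z s) m)) i j) s := by
  have hc : Continuous (fun Y : Matrix (Idx n) (Idx n) ℂ => (-(μ:ℂ)⁻¹ • ((Wm Y m)ᵀ * A * Wm Y m)) i j) := by
    have h1 : Continuous (fun Y : Matrix (Idx n) (Idx n) ℂ => Wm Y m) := by unfold Wm; fun_prop
    exact ((((h1.matrix_transpose).matrix_mul continuous_const).matrix_mul h1).const_smul (-(μ:ℂ)⁻¹)).matrix_elem i j
  exact ContinuousAt.comp (f := Z) (hc.continuousAt (x := Z s)) (h.cZ' hs)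

lemma quad_hasDeriv {Z' : Matrix (Idx n) (Idx n) ℂ} {s : ℝ} (h : MD Z Z' s) (x : Idx n → ℂ) :
    HasDerivAt (fun s => x ⬝ᵥ Z s *ᵥ x) (x ⬝ᵥ Z' *ᵥ x) s := by
  simp only [dotProduct, Matrix.mulVec]
  exact HasDerivAt.fun_sum fun i _ => (HasDerivAt.fun_sum fun j _ => (h i j).mul_const _).const_mul _

lemma GG_hasDeriv {Z' : Matrix (Idx n) (Idx n) ℂ} {s : ℝ} (h : MD Z Z' s) (m : ℝ) (p : Hgrp n) :
    HasDerivAt (fun s => GG (Z s) m p) ((-(1/2 : ℂ) * (toC (hv n p) ⬝ᵥ Z' *ᵥ toC (hv n p))) * GG (Z s) m p) s := by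
  have h1 := (((quad_hasDeriv h (toC (hv n p))).const_mul (-(1/2 : ℂ))).sub_const (I * m * (hu n p : ℂ))).cexp
  refine HasDerivAt.congr_deriv (f := fun s => GG (Z s) m p) h1 ?_
  rw [mul_comm]; rfl

lemma quad_norm_le (B : Matrix (Idx n) (Idx n) ℂ) (c : Idx n → Idx n → ℝ) (hB : ∀ i j, ‖B i j‖ ≤ c i j) (p : Hgrp n) :
    ‖toC (hv n p) ⬝ᵥ B *ᵥ toC (hv n p)‖ ≤ ∑ i, ∑ j, c i j * ‖(hvi n i p : ℂ) * (hvi n j p : ℂ)‖ := by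
  simp only [dotProduct, Matrix.mulVec, Finset.mul_sum]
  refine (norm_sum_le _ _).trans (Finset.sum_le_sum fun i _ => (norm_sum_le _ _).trans (Finset.sum_le_sum fun j _ => ?_))
  have : toC (hv n p) i * (B i j * toC (hv n p) j) = B i j * ((hvi n i p : ℂ) * (hvi n j p : ℂ)) := by
    simp only [toC, hvi_apply]; ring
  rw [this, norm_mul]
  exact mul_le_mul_of_nonneg_right (hB i j) (norm_nonneg _)

def JJ (Z : ℝ → Matrix (Idx n) (Idx n) ℂ) (m : ℝ) (φ : SchwartzMap (Hgrp n) ℂ) (s : ℝ) : ℂ := ∫ p, GG (Z s) m p * φ p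

lemma JJ_deriv (h : Evo A m μ a Z) (φ : SchwartzMap (Hgrp n) ℂ) {s : ℝ} (hs : 0 < s) :
    HasDerivAt (JJ Z m φ) (∫ p, ((-(1/2 : ℂ) * (toC (hv n p) ⬝ᵥ (-(μ:ℂ)⁻¹ • ((Wm (Z s) m)ᵀ * A * Wm (Z s) m)) *ᵥ toC (hv n p)))
      * GG (Z s) m p) * φ p) s := by
  set D : ℝ → Matrix (Idx n) (Idx n) ℂ := fun s => -(μ:ℂ)⁻¹ • ((Wm (Z s) m)ᵀ * A * Wm (Z s) m) with hD
  set c : Idx n → Idx n → ℝ := fun i j => ‖D s i j‖ + 1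
  have hev : ∀ᶠ x in nhds s, 0 < x ∧ ∀ i j, ‖D x i j‖ ≤ c i j := by
    refine (lt_mem_nhds hs).and ?_
    rw [Filter.eventually_all]; intro i; rw [Filter.eventually_all]; intro j
    have h1 := (h.cD hs.le i j).norm
    filter_upwards [h1.eventually_lt_const (lt_add_one _)] with x hx using hx.le
  have hintg : ∀ f : Hgrp n → ℂ, Nice f → Integrable (fun p => f p * φ p) := fun f hf =>
    polyB_integrable hf.smooth.continuous hf.pb φ
  refine (hasDerivAt_integral_of_dominated_loc_of_deriv_le (F := fun s p => GG (Z s) m p * φ p)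
    (F' := fun s p => ((-(1/2 : ℂ) * (toC (hv n p) ⬝ᵥ D s *ᵥ toC (hv n p))) * GG (Z s) m p) * φ p)
    (bound := fun p => ∑ i, ∑ j, c i j * ‖((hvi n i p : ℂ) * (hvi n j p : ℂ)) * φ p‖) hev ?_ ?_ ?_ ?_ ?_ ?_).2
  · filter_upwards [lt_mem_nhds hs] with x hx
    exact (hintg _ (GG_nice (h.sym x hx.le) (h.re x hx.le) m)).aestronglyMeasurable
  · exact hintg _ (GG_nice (h.sym s hs.le) (h.re s hs.le) m)
  · have h1 : Nice (fun p => toC (hv n p) ⬝ᵥ D s *ᵥ toC (hv n p)) :=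
      Nice.sum Finset.univ (fun i => (Nice.clm (hvi n i)).mul (lin_nice (D s) i))
    exact (hintg _ (((Nice.const _).mul h1).mul (GG_nice (h.sym s hs.le) (h.re s hs.le) m))).aestronglyMeasurable
  · filter_upwards with p x hx
    have h1 := quad_norm_le (D x) c hx.2 p
    have h2 := GG_norm (h.re x hx.1.le) m p
    have h3 : ∑ i, ∑ j, c i j * ‖((hvi n i p : ℂ) * (hvi n j p : ℂ)) * φ p‖ = (∑ i, ∑ j, c i j * ‖(hvi n i p : ℂ) * (hvi n j p : ℂ)‖) * ‖φ p‖ := by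
      rw [Finset.sum_mul]; apply Finset.sum_congr rfl; intro i _
      rw [Finset.sum_mul]; apply Finset.sum_congr rfl; intro j _
      rw [norm_mul _ (φ p)]; ring
    rw [h3, norm_mul]
    gcongr
    rw [norm_mul, norm_mul]
    have h4 : ‖(-(1/2 : ℂ))‖ ≤ 1 := by norm_num
    calc _ ≤ 1 * ‖toC (hv n p) ⬝ᵥ D x *ᵥ toC (hv n p)‖ * 1 := by gcongr
      _ ≤ _ := by simpa using h1
  · exact integrable_finsetSum _ fun i _ => integrable_finsetSum _ fun j _ =>
      ((hintg _ ((Nice.clm (hvi n i)).mul (Nice.clm (hvi n j)))).norm).const_mul _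
  · filter_upwards with p x hx
    exact (GG_hasDeriv (h.dZ x hx.1.le) m p).mul_const _

lemma JJ_cont (h : Evo A m μ a Z) (φ : SchwartzMap (Hgrp n) ℂ) : ContinuousOn (JJ Z m φ) (Set.Ici 0) := by
  intro s hs
  refine continuousWithinAt_of_dominated (bound := fun p => ‖φ p‖) ?_ ?_ φ.integrable.norm ?_
  · filter_upwards [self_mem_nhdsWithin] with x hx
    have hg := GG_nice (h.sym x hx) (h.re x hx) m
    exact (hg.smooth.continuous.mul φ.continuous).aestronglyMeasurable
  · filter_upwards [self_mem_nhdsWithin] with x hx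
    filter_upwards with p
    rw [norm_mul]
    exact mul_le_of_le_one_left (norm_nonneg _) (GG_norm (h.re x hx) m p)
  · filter_upwards with p
    exact ((GG_hasDeriv (h.dZ s hs) m p).continuousAt.mul continuousAt_const).continuousWithinAt

lemma evo_deriv (h : Evo A m μ a Z) (hA : Aᵀ = A) (hμ : 0 < μ) (α : ℂ) (φ ψ : SchwartzMap (Hgrp n) ℂ)
    (hψ : ⇑ψ = Lop n A (-α) ⇑φ) {s : ℝ} (hs : 0 < s) :
    HasDerivAt (fun s : ℝ => cexp ((α * m / (2 * μ)) * s) * (a s * JJ Z m φ s))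
      (cexp ((α * m / (2 * μ)) * s) * ((2 * (μ:ℂ))⁻¹ * (a s * JJ Z m ψ s))) s := by
  have hof : HasDerivAt (fun t : ℝ => (t : ℂ)) 1 s := Complex.ofRealCLM.hasDerivAt
  have h1 := ((hof.const_mul (α * m / (2 * μ))).cexp).mul ((h.da s hs.le).mul (JJ_deriv h φ hs))
  refine HasDerivAt.congr_deriv (f := fun s : ℝ => cexp ((α * m / (2 * μ)) * s) * (a s * JJ Z m φ s)) h1 ?_
  have hμ' : (μ : ℂ) ≠ 0 := by exact_mod_cast hμ.ne'
  have hg := GG_nice (h.sym s hs.le) (h.re s hs.le) m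
  have h2 : Nice (fun p => toC (hv n p) ⬝ᵥ ((Wm (Z s) m)ᵀ * A * Wm (Z s) m) *ᵥ toC (hv n p)) :=
      Nice.sum Finset.univ (fun i => (Nice.clm (hvi n i)).mul (lin_nice ((Wm (Z s) m)ᵀ * A * Wm (Z s) m) i))
  have hi1 := polyB_integrable (h2.mul hg).smooth.continuous (h2.mul hg).pb φ
  have hi2 := polyB_integrable hg.smooth.continuous hg.pb φ
  have e1 : JJ Z m ψ s = (-(A * Wm (Z s) m).trace + α * m) * JJ Z m φ s +
      ∫ p, ((toC (hv n p) ⬝ᵥ ((Wm (Z s) m)ᵀ * A * Wm (Z s) m) *ᵥ toC (hv n p)) * GG (Z s) m p) * φ p := by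
    rw [JJ, ibp_L (h.sym s hs.le) (h.re s hs.le) m A hA α φ ψ hψ, JJ, ← integral_const_mul, ← integral_add (hi2.const_mul _) hi1]
    congr 1; funext p; ring
  have e2 : ∫ p, ((-(1/2 : ℂ) * (toC (hv n p) ⬝ᵥ (-(μ:ℂ)⁻¹ • ((Wm (Z s) m)ᵀ * A * Wm (Z s) m)) *ᵥ toC (hv n p)))
      * GG (Z s) m p) * φ p = (2 * (μ:ℂ))⁻¹ * ∫ p, ((toC (hv n p) ⬝ᵥ ((Wm (Z s) m)ᵀ * A * Wm (Z s) m) *ᵥ toC (hv n p)) * GG (Z s) m p) * φ p := by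
    rw [← integral_const_mul]
    congr 1; funext p
    rw [Matrix.smul_mulVec, dotProduct_smul, smul_eq_mul, mul_inv]; ring
  simp only [Pi.mul_apply]
  rw [e1, e2]
  field_simp
  ring

def hker (b s : ℝ) : ℝ := Real.exp (-(b * s)) * Real.sqrt ((1 + s) / s)

lemma hker_integrable {b : ℝ} (hb : 0 < b) : IntegrableOn (hker b) (Set.Ioi 0) := by
  have i1 := integrableOn_rpow_mul_exp_neg_mul_rpow (p := 1) (s := 0) (b := b) (by norm_num) (by norm_num) hb
  have i2 := integrableOn_rpow_mul_exp_neg_mul_rpow (p := 1) (s := -(1/2)) (b := b) (by norm_num) (by norm_num) hb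
  refine Integrable.mono' (i1.add i2) ?_ ?_
  · have : Measurable (hker b) := by unfold hker; fun_prop
    exact this.aestronglyMeasurable
  · filter_upwards [ae_restrict_mem measurableSet_Ioi] with s hs
    have hs' : 0 < s := hs
    rw [Real.norm_of_nonneg (by unfold hker; positivity)]
    simp only [hker, Pi.add_apply, Real.rpow_one, Real.rpow_zero, one_mul]
    have e1 : (1 + s)/s = 1 + s⁻¹ := by field_simp; ring
    have e2 : Real.sqrt ((1 + s)/s) ≤ 1 + s ^ (-(1/2) : ℝ) := by
      rw [e1]
      rw [Real.rpow_neg hs'.le, ← Real.sqrt_eq_rpow, ← Real.sqrt_inv]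
      apply Real.sqrt_le_iff.2
      have h0 := Real.sqrt_nonneg s⁻¹
      have h1 := Real.sq_sqrt (inv_pos.2 hs').le
      refine ⟨by positivity, by nlinarith⟩
    calc _ ≤ Real.exp (-(b*s)) * (1 + s ^ (-(1/2) : ℝ)) := by gcongr
      _ = _ := by rw [neg_mul]; ring

lemma evo_bound0 (h : Evo A m μ a Z) (hA : Aᵀ = A) (hμ : 0 < μ) (hm : |m| = 2 * μ) (α : ℂ) (ν : ℝ) (hα : |α.re| < ν)
    (φ ψ : SchwartzMap (Hgrp n) ℂ) (hψ : ⇑ψ = Lop n A (-α) ⇑φ) (B B' : ℝ) (hB : 0 ≤ B)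
    (h1 : ∀ s, 0 < s → ‖a s * JJ Z m ψ s‖ ≤ B * hker ν s)
    (h2 : ∀ s, 0 < s → ‖a s * JJ Z m φ s‖ ≤ B' * hker ν s) :
    ‖a 0 * JJ Z m φ 0‖ ≤ (2 * μ)⁻¹ * B * ∫ s in Set.Ioi 0, hker (ν - |α.re|) s := by
  set κ : ℂ := α * m / (2 * μ) with hκ
  set b := ν - |α.re| with hb
  have hb0 : 0 < b := by linarith
  have hκre : ∀ s : ℝ, 0 ≤ s → ‖cexp (κ * s)‖ ≤ Real.exp (|α.re| * s) := by
    intro s hs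
    rw [Complex.norm_exp]
    apply Real.exp_le_exp.2
    have : (κ * s).re = α.re * (m / (2 * μ)) * s := by
      have : κ * s = α * ((m / (2 * μ) * s : ℝ) : ℂ) := by rw [hκ]; push_cast; ring
      rw [this, Complex.re_mul_ofReal]; ring
    rw [this]
    have h5 : α.re * (m / (2 * μ)) ≤ |α.re| := by
      refine (le_abs_self _).trans ?_
      rw [abs_mul, abs_div, hm, abs_of_pos (by positivity : 0 < 2 * μ), div_self (by positivity), mul_one]
    gcongr
  have hker_mul : ∀ s : ℝ, Real.exp (|α.re| * s) * hker ν s = hker b s := by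
    intro s; rw [hker, hker, ← mul_assoc, ← Real.exp_add]; congr 2; rw [hb]; ring
  have hkpos : ∀ s, 0 ≤ hker b s := fun s => by unfold hker; positivity
  set N : ℝ → ℂ := fun s : ℝ => cexp (κ * s) * (a s * JJ Z m φ s) with hN
  set N' : ℝ → ℂ := fun s : ℝ => cexp (κ * s) * ((2 * (μ:ℂ))⁻¹ * (a s * JJ Z m ψ s)) with hN'
  have hac : ContinuousOn a (Set.Ici 0) := fun s hs => (h.da s hs).continuousAt.continuousWithinAt
  have hec : Continuous (fun s : ℝ => cexp (κ * s)) := by fun_prop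
  have hNc : ContinuousOn N (Set.Ici 0) := hec.continuousOn.mul (hac.mul (JJ_cont h φ))
  have hNc' : ContinuousOn N' (Set.Ici 0) := hec.continuousOn.mul (continuousOn_const.mul (hac.mul (JJ_cont h ψ)))
  have hN'b : ∀ s, 0 < s → ‖N' s‖ ≤ (2 * μ)⁻¹ * B * hker b s := by
    intro s hs
    rw [hN', norm_mul, norm_mul, norm_inv]
    have : ‖2 * (μ:ℂ)‖ = 2 * μ := by rw [norm_mul, Complex.norm_real, Real.norm_of_nonneg hμ.le]; simp
    rw [this]
    calc _ ≤ Real.exp (|α.re| * s) * ((2 * μ)⁻¹ * (B * hker ν s)) := by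
          gcongr
          · exact hκre s hs.le
          · exact h1 s hs
      _ = (2 * μ)⁻¹ * B * (Real.exp (|α.re| * s) * hker ν s) := by ring
      _ = _ := by rw [hker_mul]
  have key : ∀ T : ℝ, 0 < T → ‖N 0‖ ≤ B' * hker b T + (2 * μ)⁻¹ * B * ∫ s in Set.Ioi 0, hker b s := by
    intro T hT
    have hsub : Set.Icc 0 T ⊆ Set.Ici 0 := fun x hx => hx.1
    have ftc := intervalIntegral.integral_eq_sub_of_hasDerivAt_of_le hT.le (hNc.mono hsub)
      (fun s hs => evo_deriv h hA hμ α φ ψ hψ hs.1)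
      ((hNc'.mono hsub).intervalIntegrable_of_Icc hT.le)
    have e : N 0 = N T - ∫ s in (0:ℝ)..T, N' s := by rw [ftc]; ring
    rw [e]
    refine (norm_sub_le _ _).trans (add_le_add ?_ ?_)
    · rw [hN, norm_mul]
      calc _ ≤ Real.exp (|α.re| * T) * (B' * hker ν T) := by
            gcongr
            · exact hκre T hT.le
            · exact h2 T hT
        _ = _ := by rw [← hker_mul]; ring
    · have hki : IntegrableOn (fun s => (2 * μ)⁻¹ * B * hker b s) (Set.Ioi 0) := (hker_integrable hb0).const_mul ((2 * μ)⁻¹ * B)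
      rw [intervalIntegral.integral_of_le hT.le]
      refine (norm_integral_le_of_norm_le (hki.mono_set Set.Ioc_subset_Ioi_self) ?_).trans ?_
      · filter_upwards [ae_restrict_mem measurableSet_Ioc] with s hs using hN'b s hs.1
      · rw [← integral_const_mul]
        refine setIntegral_mono_set hki ?_ (Filter.Eventually.of_forall Set.Ioc_subset_Ioi_self)
        filter_upwards with s
        have := hkpos s
        simp only [Pi.zero_apply]; positivity
  have hN0 : N 0 = a 0 * JJ Z m φ 0 := by simp [hN]
  rw [← hN0]
  have hlim : Filter.Tendsto (fun T => B' * hker b T + (2 * μ)⁻¹ * B * ∫ s in Set.Ioi 0, hker b s) Filter.atTop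
      (nhds (B' * (0 * Real.sqrt (0 + 1)) + (2 * μ)⁻¹ * B * ∫ s in Set.Ioi 0, hker b s)) := by
    refine (Filter.Tendsto.const_mul _ (Filter.Tendsto.mul ?_ ?_)).add_const _
    · refine Real.tendsto_exp_neg_atTop_nhds_zero.comp (Filter.tendsto_id.const_mul_atTop hb0)
    · refine (Real.continuous_sqrt.tendsto _).comp ?_
      have : Filter.Tendsto (fun T : ℝ => T⁻¹ + 1) Filter.atTop (nhds (0 + 1)) := tendsto_inv_atTop_zero.add_const 1
      refine this.congr' ?_
      filter_upwards [Filter.eventually_gt_atTop 0] with T hT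
      field_simp
  have := ge_of_tendsto hlim (by filter_upwards [Filter.eventually_gt_atTop 0] with T hT using key T hT)
  simpa using this
end EvoS

section InstS
variable {n : ℕ}

lemma Ke_Wm (A : Matrix (Idx n) (Idx n) ℂ) {m μ e : ℝ} (hme : μ * e = -(m/2)) (ε s : ℝ) :
    WM (Ke n e) A μ ε s = Wm (ZM (Ke n e) A μ ε s) m := by
  rw [WM, Wm, Ke, smul_smul]
  congr 2
  have : (μ:ℂ) * (I * (e:ℂ)) = I * ((μ * e : ℝ) : ℂ) := by push_cast; ring
  rw [this, hme]; push_cast; ring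

lemma evo_inst {A : Matrix (Idx n) (Idx n) ℂ} (hA : Aᵀ = A) (hAp : ∀ x : Idx n → ℂ, 0 ≤ (star x ⬝ᵥ A *ᵥ x).re)
    {m μ e : ℝ} (he : e * e = 1) (hμ : 0 < μ) (hme : μ * e = -(m/2)) {ε : ℝ} (hε : 0 < ε) :
    Evo A m μ (aM (Ke n e) A μ ε) (ZM (Ke n e) A μ ε) where
  sym s hs := ZM_symm (Ke_sq n he) (Ke_cj n) (Ke_tr n) hA hAp μ hε hs
  re s hs x := ZM_re (Ke_sq n he) (Ke_cj n) hAp μ hμ hε hs x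
  dZ s hs := by
    have := ZM_deriv (Ke_sq n he) (Ke_cj n) (Ke_tr n) hA hAp μ hμ hε hs
    rwa [Ke_Wm A hme] at this
  da s hs := by
    have := aM_deriv (Ke_sq n he) (Ke_cj n) (Ke_tr n) hA hAp μ hμ hε hs
    rwa [Ke_Wm A hme] at this

abbrev EV (n : ℕ) := EuclideanSpace ℝ (Idx n)
abbrev EX (n : ℕ) := WithLp 2 (EV n × ℝ)

def tau (v : EV n) (u : ℝ) : EX n := WithLp.toLp 2 (v, u)

def hTl (n : ℕ) : EX n ≃ₗ[ℝ] Hgrp n where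
  toFun x := (fun i => (WithLp.ofLp x).1 (Sum.inl i), fun i => (WithLp.ofLp x).1 (Sum.inr i), (WithLp.ofLp x).2)
  invFun p := WithLp.toLp 2 (WithLp.toLp 2 (Sum.elim p.1 p.2.1), p.2.2)
  map_add' x y := rfl
  map_smul' c x := rfl
  left_inv x := by
    apply WithLp.ofLp_injective
    refine Prod.ext ?_ rfl
    ext i
    rcases i with i | i <;> rfl
  right_inv p := rfl

lemma hTl_cont : Continuous (hTl n) := by
  have h1 : Continuous (WithLp.ofLp : EX n → EV n × ℝ) := WithLp.prod_continuous_ofLp 2 (EV n) ℝ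
  have h2 : Continuous (WithLp.ofLp : EV n → (Idx n → ℝ)) := PiLp.continuous_ofLp 2 _
  have h3 : Continuous (fun x : EX n => WithLp.ofLp (WithLp.ofLp x).1) := h2.comp (continuous_fst.comp h1)
  refine Continuous.prodMk (continuous_pi fun i => (continuous_apply (Sum.inl i)).comp h3) (Continuous.prodMk
    (continuous_pi fun i => (continuous_apply (Sum.inr i)).comp h3) (continuous_snd.comp h1))

lemma hTl_symm_cont : Continuous (hTl n).symm := by
  have h1 : Continuous (WithLp.toLp 2 : EV n × ℝ → EX n) := WithLp.prod_continuous_toLp 2 (EV n) ℝ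
  have h2 : Continuous (WithLp.toLp 2 : (Idx n → ℝ) → EV n) := PiLp.continuous_toLp 2 _
  exact h1.comp (Continuous.prodMk (h2.comp (hv n).continuous) (hu n).continuous)

def hT (n : ℕ) : EX n ≃L[ℝ] Hgrp n where
  toLinearEquiv := hTl n
  continuous_toFun := hTl_cont
  continuous_invFun := hTl_symm_cont

lemma hT_apply (x : EX n) : hT n x = (fun i => (WithLp.ofLp x).1 (Sum.inl i), fun i => (WithLp.ofLp x).1 (Sum.inr i), (WithLp.ofLp x).2) := rfl

lemma hv_hT (v : EV n) (u : ℝ) : hv n (hT n (tau v u)) = WithLp.ofLp v := by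
  rw [hv_apply]; funext i; rcases i with i | i <;> rfl

lemma hu_hT (v : EV n) (u : ℝ) : hu n (hT n (tau v u)) = u := rfl

lemma hT_mp : MeasurePreserving (hT n) := by
  have h1 := WithLp.volume_preserving_ofLp (EV n) ℝ
  have h2 : MeasurePreserving (Prod.map (WithLp.ofLp : EV n → (Idx n → ℝ)) (id : ℝ → ℝ)) :=
    (PiLp.volume_preserving_ofLp (Idx n)).prod (MeasurePreserving.id _)
  have h3 : MeasurePreserving (Prod.map (MeasurableEquiv.sumPiEquivProdPi (fun _ : Idx n => ℝ)) (id : ℝ → ℝ)) :=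
    (volume_measurePreserving_sumPiEquivProdPi (fun _ : Idx n => ℝ)).prod (MeasurePreserving.id _)
  have h4 : MeasurePreserving (MeasurableEquiv.prodAssoc : ((Fin n → ℝ) × (Fin n → ℝ)) × ℝ ≃ᵐ Hgrp n) :=
    volume_preserving_prodAssoc
  exact h4.comp (h3.comp (h2.comp h1))

lemma hT_emb : MeasurableEmbedding (hT n) := (hT n).toHomeomorph.measurableEmbedding

lemma tau_mp : MeasurePreserving (fun q : EV n × ℝ => tau q.1 q.2) := WithLp.volume_preserving_toLp (EV n) ℝ

lemma tau_emb : MeasurableEmbedding (fun q : EV n × ℝ => tau q.1 q.2) := (MeasurableEquiv.toLp 2 (EV n × ℝ)).measurableEmbedding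

lemma tau_cont : Continuous (fun q : EV n × ℝ => tau q.1 q.2) := WithLp.prod_continuous_toLp 2 (EV n) ℝ

lemma integral_H (f : Hgrp n → ℂ) (hf : Integrable f) : ∫ p, f p = ∫ v : EV n, ∫ u : ℝ, f (hT n (tau v u)) := by
  rw [← hT_mp.integral_comp hT_emb, ← tau_mp.integral_comp tau_emb]
  have h1 : Integrable (fun x => f (hT n x)) := (hT_mp.integrable_comp_emb hT_emb).2 hf
  have h2 : Integrable (fun q : EV n × ℝ => f (hT n (tau q.1 q.2))) := (tau_mp.integrable_comp_emb tau_emb).2 h1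
  exact integral_prod _ h2

lemma norm_tau_le1 (v : EV n) (u : ℝ) : ‖v‖ ≤ ‖tau v u‖ := WithLp.norm_fst_le _ (tau v u)
lemma norm_tau_le2 (v : EV n) (u : ℝ) : ‖u‖ ≤ ‖tau v u‖ := WithLp.norm_snd_le _ (tau v u)

lemma inner_tau (v β : EV n) (u w : ℝ) : inner ℝ (tau v u) (tau β w) = inner ℝ v β + w * u := rfl

end InstS

section SliceS
variable {n : ℕ}

open scoped FourierTransform

def sSem (n : ℕ) (k : ℕ) : Seminorm ℂ (SchwartzMap (EX n) ℂ) :=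
  (Finset.Iic (k, 0)).sup (fun m => SchwartzMap.seminorm ℂ m.1 m.2)

lemma slice_decay (F : SchwartzMap (EX n) ℂ) (k l : ℕ) (v : EV n) (u : ℝ) :
    ‖F (tau v u)‖ ≤ 2 ^ (k + l) * sSem n (k + l) F * ((1 + ‖v‖) ^ k)⁻¹ * ((1 + ‖u‖) ^ l)⁻¹ := by
  have h := SchwartzMap.one_add_le_sup_seminorm_apply (𝕜 := ℂ) (m := (k + l, 0)) (le_refl (k + l)) le_rfl F (tau v u)
  rw [norm_iteratedFDeriv_zero] at h
  have h2 : (1 + ‖v‖) ^ k * (1 + ‖u‖) ^ l ≤ (1 + ‖tau v u‖) ^ (k + l) := by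
    rw [pow_add]
    have := norm_tau_le1 v u
    have := norm_tau_le2 v u
    gcongr
  have h3 : (1 + ‖v‖) ^ k * (1 + ‖u‖) ^ l * ‖F (tau v u)‖ ≤ 2 ^ (k + l) * sSem n (k + l) F :=
    (mul_le_mul_of_nonneg_right h2 (norm_nonneg _)).trans h
  have p1 : 0 < (1 + ‖v‖) ^ k := by positivity
  have p2 : 0 < (1 + ‖u‖) ^ l := by positivity
  rw [← div_eq_mul_inv, ← div_eq_mul_inv, le_div_iff₀ p2, le_div_iff₀ p1]
  linarith

lemma int_V (n : ℕ) : Integrable (fun v : EV n => ((1 + ‖v‖) ^ (2 * n + 1))⁻¹) := by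
  have h := integrable_one_add_norm (E := EV n) (μ := volume) (r := 2 * n + 1) (by simp; norm_cast; omega)
  refine h.congr (Filter.Eventually.of_forall fun v => ?_)
  have : (0:ℝ) ≤ 1 + ‖v‖ := by positivity
  simp only
  rw [Real.rpow_neg this]; norm_cast

lemma int_U (l : ℕ) (hl : 2 ≤ l) : Integrable (fun u : ℝ => ((1 + ‖u‖) ^ l)⁻¹) := by
  have h := integrable_one_add_norm (E := ℝ) (μ := volume) (r := l) (by simp; norm_cast)
  refine h.congr (Filter.Eventually.of_forall fun v => ?_)
  have : (0:ℝ) ≤ 1 + ‖v‖ := by positivity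
  simp only
  rw [Real.rpow_neg this]; norm_cast

lemma tau_cont_v (u : ℝ) : Continuous (fun v : EV n => tau v u) := tau_cont.comp (by fun_prop : Continuous fun v : EV n => (v, u))
lemma tau_cont_u (v : EV n) : Continuous (fun u : ℝ => tau v u) := tau_cont.comp (by fun_prop : Continuous fun u : ℝ => (v, u))

lemma slice_int (F : SchwartzMap (EX n) ℂ) (w : ℝ) : Integrable (fun β : EV n => F (tau β w)) := by
  refine Integrable.mono' ((int_V n).const_mul (2 ^ (2 * n + 1 + 0) * sSem n (2 * n + 1 + 0) F)) ?_ ?_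
  · exact (F.continuous.comp (tau_cont_v w)).aestronglyMeasurable
  · filter_upwards with v
    simpa using slice_decay F (2 * n + 1) 0 v w

lemma slice_norm (F : SchwartzMap (EX n) ℂ) (l : ℕ) (w : ℝ) :
    ∫ β : EV n, ‖F (tau β w)‖ ≤ 2 ^ (2 * n + 1 + l) * (∫ v : EV n, ((1 + ‖v‖) ^ (2 * n + 1))⁻¹) * sSem n (2 * n + 1 + l) F * ((1 + ‖w‖) ^ l)⁻¹ := by
  have h : ∫ β : EV n, ‖F (tau β w)‖ ≤ ∫ v : EV n, (2 ^ (2 * n + 1 + l) * sSem n (2 * n + 1 + l) F * ((1 + ‖w‖) ^ l)⁻¹) * ((1 + ‖v‖) ^ (2 * n + 1))⁻¹ := by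
    refine integral_mono (slice_int F w).norm ((int_V n).const_mul _) fun v => ?_
    refine (slice_decay F (2 * n + 1) l v w).trans (le_of_eq ?_)
    ring
  refine h.trans (le_of_eq ?_)
  rw [integral_const_mul]; ring

def gS (Ψ : SchwartzMap (EX n) ℂ) (w : ℝ) (v : EV n) : ℂ := ∫ u : ℝ, cexp (((-2 * Real.pi * (w * u) : ℝ) : ℂ) * I) * Ψ (tau v u)

lemma norm_char (x : ℝ) : ‖cexp ((x : ℂ) * I)‖ = 1 := Complex.norm_exp_ofReal_mul_I x

lemma gS_cont (Ψ : SchwartzMap (EX n) ℂ) (w : ℝ) : Continuous (gS Ψ w) := by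
  refine continuous_of_dominated (bound := fun u => 2 ^ (0 + 2) * sSem n (0 + 2) Ψ * ((1 + ‖u‖) ^ 2)⁻¹) ?_ ?_ ?_ ?_
  · intro v
    have := Ψ.continuous.comp (tau_cont_u v)
    exact (Continuous.mul (by fun_prop) this).aestronglyMeasurable
  · intro v
    filter_upwards with u
    rw [norm_mul, norm_char, one_mul]
    simpa using slice_decay Ψ 0 2 v u
  · exact (int_U 2 le_rfl).const_mul _
  · filter_upwards with u
    exact continuous_const.mul (Ψ.continuous.comp (tau_cont_v u))

lemma prod_int (Ψ : SchwartzMap (EX n) ℂ) : Integrable (fun q : EV n × ℝ => Ψ (tau q.1 q.2)) :=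
  (tau_mp.integrable_comp_emb tau_emb).2 Ψ.integrable

lemma prod_int2 (Ψ : SchwartzMap (EX n) ℂ) {c : EV n × ℝ → ℝ} (hc : Continuous c) :
    Integrable (fun q : EV n × ℝ => cexp ((c q : ℂ) * I) * Ψ (tau q.1 q.2)) := by
  refine (prod_int Ψ).mono ?_ ?_
  · exact (Continuous.mul (by fun_prop) (Ψ.continuous.comp tau_cont)).aestronglyMeasurable
  · filter_upwards with q
    rw [norm_mul, norm_char, one_mul]

lemma gS_int (Ψ : SchwartzMap (EX n) ℂ) (w : ℝ) : Integrable (gS Ψ w) :=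
  (prod_int2 Ψ (c := fun q => -2 * Real.pi * (w * q.2)) (by fun_prop)).integral_prod_left

lemma gS_fourier (Ψ : SchwartzMap (EX n) ℂ) (w : ℝ) (β : EV n) : 𝓕 (gS Ψ w) β = (𝓕 Ψ) (tau β w) := by
  rw [SchwartzMap.fourier_coe, Real.fourier_eq', Real.fourier_eq']
  rw [← tau_mp.integral_comp tau_emb]
  have h1 : ∀ q : EV n × ℝ, cexp (((-2 * Real.pi * inner ℝ (tau q.1 q.2) (tau β w) : ℝ) : ℂ) * I) • Ψ (tau q.1 q.2) =
     cexp (((-2 * Real.pi * (inner ℝ q.1 β + w * q.2) : ℝ) : ℂ) * I) * Ψ (tau q.1 q.2) := fun q => by rw [inner_tau]; rfl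
  rw [integral_congr_ae (Filter.Eventually.of_forall h1)]
  have h2 := prod_int2 Ψ (c := fun q => -2 * Real.pi * (inner ℝ q.1 β + w * q.2)) (by fun_prop)
  refine Eq.trans ?_ (integral_prod _ h2).symm
  refine integral_congr_ae (Filter.Eventually.of_forall fun v => ?_)
  simp only [gS, smul_eq_mul]
  rw [← integral_const_mul]
  refine integral_congr_ae (Filter.Eventually.of_forall fun u => ?_)
  simp only
  rw [← mul_assoc, ← Complex.exp_add]
  congr 2; push_cast; ring

lemma gS_inv (Ψ : SchwartzMap (EX n) ℂ) (w : ℝ) (v : EV n) :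
    gS Ψ w v = ∫ β : EV n, cexp (((2 * Real.pi * inner ℝ β v : ℝ) : ℂ) * I) * (𝓕 Ψ) (tau β w) := by
  have hF : 𝓕 (gS Ψ w) = fun β => (𝓕 Ψ) (tau β w) := funext fun β => gS_fourier Ψ w β
  have h := (gS_int Ψ w).fourierInv_fourier_eq (by rw [hF]; exact slice_int _ w) (v := v) (gS_cont Ψ w).continuousAt
  rw [← h, hF, Real.fourierInv_eq']
  rfl

/-- pairing a slice with an integrable weight -/
lemma pair_bound (Ψ : SchwartzMap (EX n) ℂ) (w : ℝ) (F : EV n → ℂ) (hF : Integrable F) (B : ℝ)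
    (hB : ∀ β : EV n, ‖∫ v, F v * cexp (((2 * Real.pi * inner ℝ β v : ℝ) : ℂ) * I)‖ ≤ B) :
    ‖∫ v, F v * gS Ψ w v‖ ≤ B * ∫ β : EV n, ‖(𝓕 Ψ) (tau β w)‖ := by
  set h : EV n → ℂ := fun β => (𝓕 Ψ) (tau β w) with hh
  have hi : Integrable h := slice_int _ w
  have e1 : ∀ v, F v * gS Ψ w v = ∫ β, F v * (cexp (((2 * Real.pi * inner ℝ β v : ℝ) : ℂ) * I) * h β) := fun v => by
    rw [gS_inv, integral_const_mul]
  rw [integral_congr_ae (Filter.Eventually.of_forall e1)]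
  rw [integral_integral_swap]
  · have e2 : ∀ β, ∫ v, F v * (cexp (((2 * Real.pi * inner ℝ β v : ℝ) : ℂ) * I) * h β) = (∫ v, F v * cexp (((2 * Real.pi * inner ℝ β v : ℝ) : ℂ) * I)) * h β := fun β => by
      rw [← integral_mul_const]
      refine integral_congr_ae (Filter.Eventually.of_forall fun v => ?_)
      simp only; ring
    rw [integral_congr_ae (Filter.Eventually.of_forall e2), ← integral_const_mul]
    refine norm_integral_le_of_norm_le (hi.norm.const_mul B) ?_
    filter_upwards with β
    rw [norm_mul]
    exact mul_le_mul_of_nonneg_right (hB β) (norm_nonneg _)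
  · refine (hF.mul_prod hi).mono ?_ ?_
    · have h1 := hF.aestronglyMeasurable.comp_fst (ν := (volume : Measure (EV n)))
      have h2 := hi.aestronglyMeasurable.comp_snd (μ := (volume : Measure (EV n)))
      have h3 : Continuous (fun q : EV n × EV n => cexp (((2 * Real.pi * inner ℝ q.2 q.1 : ℝ) : ℂ) * I)) := by fun_prop
      exact h1.mul (h3.aestronglyMeasurable.mul h2)
    · filter_upwards with q
      simp only [Function.uncurry]
      rw [norm_mul, norm_mul, norm_char, one_mul, norm_mul]
end SliceS

section BoundS
variable {n : ℕ}

open scoped FourierTransform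

def wS (n : ℕ) (p : Hgrp n) : ℂ := ((wt (hv n p) ^ (Fintype.card (Idx n) + 2) : ℝ) : ℂ)

lemma hvi_temp (i : Idx n) : Function.HasTemperateGrowth (fun p => (hvi n i p : ℂ)) :=
  (Complex.ofRealCLM.comp (hvi n i)).hasTemperateGrowth

lemma wS_temp : Function.HasTemperateGrowth (wS n) := by
  have h1 : Function.HasTemperateGrowth (fun p : Hgrp n => (∑ i, (hvi n i p : ℂ) * (hvi n i p : ℂ))) :=
    Function.HasTemperateGrowth.sum fun i _ => (hvi_temp i).mul (hvi_temp i)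
  have h2 : Function.HasTemperateGrowth (fun p : Hgrp n => ((1:ℂ) + (∑ i, (hvi n i p : ℂ) * (hvi n i p : ℂ)) * (1/2 : ℂ)) ^ (Fintype.card (Idx n) + 2)) :=
    ((Function.HasTemperateGrowth.const _).add (h1.mul (Function.HasTemperateGrowth.const _))).pow _
  have : wS n = (fun p : Hgrp n => ((1:ℂ) + (∑ i, (hvi n i p : ℂ) * (hvi n i p : ℂ)) * (1/2 : ℂ)) ^ (Fintype.card (Idx n) + 2)) := by
    funext p
    simp only [wS, wt, dotProduct, hvi_apply]
    push_cast
    congr 2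
    ring
  rw [this]; exact h2

def PS (n : ℕ) : SchwartzMap (Hgrp n) ℂ →L[ℂ] SchwartzMap (EX n) ℂ :=
  (SchwartzMap.compCLMOfContinuousLinearEquiv ℂ (hT n)) ∘L (SchwartzMap.smulLeftCLM ℂ (wS n))

lemma PS_apply (ψ : SchwartzMap (Hgrp n) ℂ) (x : EX n) : PS n ψ x = wS n (hT n x) * ψ (hT n x) := by
  simp [PS, SchwartzMap.smulLeftCLM_apply_apply wS_temp]

def HH (n : ℕ) : SchwartzMap (Hgrp n) ℂ →L[ℂ] SchwartzMap (EX n) ℂ := (SchwartzMap.fourierTransformCLM ℂ) ∘L (PS n)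

lemma HH_apply (ψ : SchwartzMap (Hgrp n) ℂ) : HH n ψ = 𝓕 (PS n ψ) := rfl

def RR (ψ : SchwartzMap (Hgrp n) ℂ) (w : ℝ) : ℝ := ∫ β : EV n, ‖HH n ψ (tau β w)‖

lemma RR_nonneg (ψ : SchwartzMap (Hgrp n) ℂ) (w : ℝ) : 0 ≤ RR ψ w := integral_nonneg fun _ => norm_nonneg _

lemma gg_bound {Z : Matrix (Idx n) (Idx n) ℂ} (hZ : Zᵀ = Z) (hZr : ∀ x : Idx n → ℝ, 0 ≤ (toC x ⬝ᵥ Z *ᵥ toC x).re)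
    (w m : ℝ) (hm : m = 2 * Real.pi * w) (B : ℝ)
    (hB : ∀ b : Idx n → ℝ, ‖∫ v : Idx n → ℝ, cexp (-(1/2 : ℂ) * (toC v ⬝ᵥ Z *ᵥ toC v) + I * ((b ⬝ᵥ v : ℝ) : ℂ)) *
      (((wt v ^ (Fintype.card (Idx n) + 2))⁻¹ : ℝ) : ℂ)‖ ≤ B) (ψ : SchwartzMap (Hgrp n) ℂ) :
    ‖∫ p, GG Z m p * ψ p‖ ≤ B * RR ψ w := by
  have hg := GG_nice hZ hZr m
  rw [integral_H _ (polyB_integrable hg.smooth.continuous hg.pb ψ)]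
  set F : EV n → ℂ := fun v => cexp (-(1/2 : ℂ) * (toC (WithLp.ofLp v) ⬝ᵥ Z *ᵥ toC (WithLp.ofLp v))) *
    (((wt (WithLp.ofLp v) ^ (Fintype.card (Idx n) + 2))⁻¹ : ℝ) : ℂ) with hF
  have hmp := PiLp.volume_preserving_ofLp (Idx n)
  have hemb : MeasurableEmbedding (WithLp.ofLp : EV n → (Idx n → ℝ)) := (MeasurableEquiv.toLp 2 (Idx n → ℝ)).symm.measurableEmbedding
  have hFi : Integrable F := by
    refine ((hmp.integrable_comp_emb hemb).2 (wgauss_integrable Z hZr 0)).congr (Filter.Eventually.of_forall fun v => ?_)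
    simp [hF]
  have e1 : ∀ v : EV n, ∫ u : ℝ, GG Z m (hT n (tau v u)) * ψ (hT n (tau v u)) = F v * gS (PS n ψ) w v := by
    intro v
    rw [gS, ← integral_const_mul]
    refine integral_congr_ae (Filter.Eventually.of_forall fun u => ?_)
    simp only [PS_apply, hF, wS, hv_hT, GG, qexp, hu_hT]
    have hw : ((wt (WithLp.ofLp v) ^ (Fintype.card (Idx n) + 2) : ℝ) : ℂ) ≠ 0 := by
      exact_mod_cast (pow_pos (wt_pos _) _).ne'
    rw [sub_eq_add_neg, Complex.exp_add, Complex.ofReal_inv]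
    have : -(I * (m:ℂ) * (u:ℂ)) = ((-2 * Real.pi * (w * u) : ℝ) : ℂ) * I := by rw [hm]; push_cast; ring
    rw [this]
    field_simp
  rw [integral_congr_ae (Filter.Eventually.of_forall e1)]
  refine pair_bound (PS n ψ) w F hFi B fun β => ?_
  refine le_trans (le_of_eq ?_) (hB ((2 * Real.pi) • WithLp.ofLp β))
  rw [← hmp.integral_comp hemb]
  congr 1
  refine integral_congr_ae (Filter.Eventually.of_forall fun v => ?_)
  simp only [hF]
  rw [Complex.exp_add]
  have : (((2 * Real.pi * inner ℝ β v : ℝ) : ℂ) * I) = I * ((((2 * Real.pi) • WithLp.ofLp β) ⬝ᵥ WithLp.ofLp v : ℝ) : ℂ) := by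
    rw [mul_comm, smul_dotProduct, smul_eq_mul, EuclideanSpace.inner_eq_star_dotProduct, dotProduct_comm]
    rfl
  rw [this]; ring

lemma main_bound (A S : Matrix (Idx n) (Idx n) ℂ) (hA : Aᵀ = A) (hS : S = -(A * Jmat n)) (hpos : RePosQ n S)
    (α : ℂ) (hα : |α.re| < nuTotal n S) (e : ℝ) (he : e = 1 ∨ e = -1) :
    ∃ C : ℝ, 0 < C ∧ ∀ (φ ψ : SchwartzMap (Hgrp n) ℂ), ⇑ψ = Lop n A (-α) ⇑φ → ∀ w μ : ℝ, 0 < μ → μ * e = -(Real.pi * w) →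
      ∀ ε : ℝ, 0 < ε → ‖aM (Ke n e) A μ ε 0 * ∫ p, GG (((μ / ε : ℝ) : ℂ) • 1) (2 * Real.pi * w) p * φ p‖ ≤
        C * ((Real.sqrt μ)⁻¹ * (1 + μ) ^ (2 * n)) * RR ψ w := by
  have hAp := A_pos n A S hA hS hpos
  have hee : e * e = 1 := by rcases he with rfl | rfl <;> norm_num
  have hgr := growth_eq n A S hA hS e he
  have hν : 0 < nuTotal n S := lt_of_le_of_lt (abs_nonneg _) hα
  obtain ⟨C, hC, hb⟩ := evol_bound (Ke_sq n hee) (Ke_cj n) (Ke_tr n) hA hAp (by rw [hgr]; positivity)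
  set Q := ∫ s in Set.Ioi 0, hker (nuTotal n S - |α.re|) s with hQ
  have hQ0 : 0 ≤ Q := setIntegral_nonneg measurableSet_Ioi fun s _ => by unfold hker; positivity
  have hcard : Fintype.card (Idx n) = 2 * n := by simp [two_mul]
  refine ⟨C * (Q + 1), by positivity, fun φ ψ hψ w μ hμ hw ε hε => ?_⟩
  have hme : μ * e = -((2 * Real.pi * w) / 2) := by rw [hw]; ring
  have evo := evo_inst hA hAp hee hμ hme hε
  have hm : |2 * Real.pi * w| = 2 * μ := by
    have : 2 * Real.pi * w = -(2 * (μ * e)) := by rw [hw]; ring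
    rw [this, abs_neg, abs_mul, abs_mul, abs_of_pos hμ]
    rcases he with rfl | rfl <;> simp
  have hJ : ∀ (f : SchwartzMap (Hgrp n) ℂ) (s : ℝ), 0 < s →
      ‖aM (Ke n e) A μ ε s * JJ (ZM (Ke n e) A μ ε) (2 * Real.pi * w) f s‖ ≤
        (C * ((1 + μ) ^ (2 * n) * Real.sqrt μ) * RR f w) * hker (nuTotal n S) s := by
    intro f s hs
    have ha := aM_ne (K := Ke n e) (A := A) μ hμ (s := s) hε
    have h1 := gg_bound (evo.sym s hs.le) (evo.re s hs.le) w _ rfl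
      (C * ((1 + μ) ^ (2 * n) * Real.sqrt μ) * hker (nuTotal n S) s / ‖aM (Ke n e) A μ ε s‖) (fun b => by
        rw [le_div_iff₀ ha, mul_comm]
        refine (hb μ ε s hμ hε hs b).trans (le_of_eq ?_)
        rw [hgr, hcard, hker]
        have : s * (2 * nuTotal n S / 2) = nuTotal n S * s := by ring
        rw [this]; ring) f
    rw [norm_mul]
    refine (mul_le_mul_of_nonneg_left h1 ha.le).trans (le_of_eq ?_)
    field_simp
  have fin := evo_bound0 evo hA hμ hm α (nuTotal n S) hα φ ψ hψ _ _
    (by have := RR_nonneg ψ w; positivity) (hJ ψ) (hJ φ)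
  rw [JJ, ZM_zero (Ke_sq n hee) (Ke_cj n) hAp μ hε] at fin
  refine fin.trans ?_
  rw [← hQ]
  have hsq : (2 * μ)⁻¹ * Real.sqrt μ = (1/2) * (Real.sqrt μ)⁻¹ := by
    have h0 : Real.sqrt μ ≠ 0 := (Real.sqrt_pos.2 hμ).ne'
    have h1 := Real.mul_self_sqrt hμ.le
    field_simp
    nlinarith
  have hr := RR_nonneg ψ w
  calc _ = ((2 * μ)⁻¹ * Real.sqrt μ) * (C * (1 + μ) ^ (2 * n) * RR ψ w * Q) := by ring
    _ = (1/2) * (C * ((Real.sqrt μ)⁻¹ * (1 + μ) ^ (2 * n)) * RR ψ w * Q) := by rw [hsq]; ring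
    _ ≤ 1 * (C * ((Real.sqrt μ)⁻¹ * (1 + μ) ^ (2 * n)) * RR ψ w * (Q + 1)) := by
        gcongr
        · norm_num
        · linarith
    _ = _ := by ring
end BoundS

section LimitS
variable {n : ℕ}

open scoped FourierTransform

def PhS (n : ℕ) (φ : SchwartzMap (Hgrp n) ℂ) : SchwartzMap (EX n) ℂ := SchwartzMap.compCLMOfContinuousLinearEquiv ℂ (hT n) φ

lemma PhS_apply (φ : SchwartzMap (Hgrp n) ℂ) (x : EX n) : PhS n φ x = φ (hT n x) := rfl

lemma finrank_EV : Module.finrank ℝ (EV n) = 2 * n := by simp [two_mul]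

lemma peak_lim (g : EV n → ℂ) (hg : Integrable g) (hc : Continuous g) :
    Filter.Tendsto (fun t : ℝ => ∫ x : EV n, (t ^ (2 * n) * Real.exp (-Real.pi * ‖t • x‖ ^ 2)) • g x) Filter.atTop (nhds (g 0)) := by
  have h := tendsto_integral_comp_smul_smul_of_integrable (μ := (volume : Measure (EV n))) (φ := fun x => Real.exp (-Real.pi * ‖x‖ ^ 2))
    (fun x => by positivity) ?_ ?_ hg hc.continuousAt
  · rw [finrank_EV] at h; exact h
  · rw [GaussianFourier.integral_rexp_neg_mul_sq_norm Real.pi_pos, div_self Real.pi_ne_zero, Real.one_rpow]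
  · rw [finrank_EV]
    have h1 : Filter.Tendsto (fun x : EV n => Real.pi * ‖x‖ ^ 2) (Bornology.cobounded (EV n)) Filter.atTop := by
      rw [Filter.tendsto_const_mul_atTop_of_pos Real.pi_pos]
      exact (Filter.tendsto_pow_atTop two_ne_zero).comp tendsto_norm_cobounded_atTop
    have h2 := ((Real.tendsto_pow_mul_exp_neg_atTop_nhds_zero n).comp h1).const_mul ((Real.pi ^ n)⁻¹)
    rw [mul_zero] at h2
    refine h2.congr fun x => ?_
    simp only [Function.comp]
    rw [mul_pow, ← pow_mul, neg_mul]
    have : Real.pi ^ n ≠ 0 := by positivity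
    field_simp

lemma gg_peak (φ : SchwartzMap (Hgrp n) ℂ) (w t : ℝ) (ht : 0 < t) (c : ℝ) (hc : c = 2 * Real.pi * t ^ 2) :
    (Real.sqrt ((c / (2 * Real.pi)) ^ (Fintype.card (Idx n))) : ℂ) * ∫ p, GG ((c : ℂ) • 1) (2 * Real.pi * w) p * φ p =
      ∫ x : EV n, (t ^ (2 * n) * Real.exp (-Real.pi * ‖t • x‖ ^ 2)) • gS (PhS n φ) w x := by
  have hq : ∀ x : Idx n → ℝ, toC x ⬝ᵥ ((c:ℂ) • (1 : Matrix (Idx n) (Idx n) ℂ)) *ᵥ toC x = ((c * (x ⬝ᵥ x) : ℝ) : ℂ) := by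
    intro x
    rw [Matrix.smul_mulVec, Matrix.one_mulVec, dotProduct_smul, toC_dot, smul_eq_mul]; push_cast; rfl
  have hc0 : 0 < c := by rw [hc]; positivity
  have hg : Nice (GG ((c:ℂ) • (1 : Matrix (Idx n) (Idx n) ℂ)) (2 * Real.pi * w)) := by
    refine GG_nice (by rw [transpose_smul, transpose_one]) (fun x => ?_) _
    rw [hq, Complex.ofReal_re]
    have := dot_self_nonneg' x
    positivity
  have hs : Real.sqrt ((c / (2 * Real.pi)) ^ (Fintype.card (Idx n))) = t ^ (2 * n) := by
    have h1 : c / (2 * Real.pi) = t ^ 2 := by rw [hc]; field_simp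
    have h2 : Fintype.card (Idx n) = 2 * n := by simp [two_mul]
    rw [h1, h2, ← pow_mul, mul_comm 2 (2 * n), pow_mul]
    exact Real.sqrt_sq (by positivity)
  rw [hs, integral_H _ (polyB_integrable hg.smooth.continuous hg.pb φ), ← integral_const_mul]
  refine integral_congr_ae (Filter.Eventually.of_forall fun v => ?_)
  simp only
  have e1 : ∫ u : ℝ, GG ((c : ℂ) • 1) (2 * Real.pi * w) (hT n (tau v u)) * φ (hT n (tau v u)) =
      (Real.exp (-Real.pi * ‖t • v‖ ^ 2) : ℂ) * gS (PhS n φ) w v := by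
    rw [gS, ← integral_const_mul]
    refine integral_congr_ae (Filter.Eventually.of_forall fun u => ?_)
    simp only [PhS_apply, GG, qexp, hv_hT, hu_hT, hq]
    rw [← mul_assoc, Complex.ofReal_exp, ← Complex.exp_add]
    congr 2
    have hn : ‖t • v‖ ^ 2 = t ^ 2 * (WithLp.ofLp v ⬝ᵥ WithLp.ofLp v) := by
      rw [norm_smul, mul_pow, Real.norm_eq_abs, sq_abs, EuclideanSpace.real_norm_sq_eq]
      congr 1
      exact Finset.sum_congr rfl fun i _ => by ring
    rw [hn, hc]; push_cast; ring
  rw [e1, Complex.real_smul]; push_cast; ring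

lemma slice_bound (A S : Matrix (Idx n) (Idx n) ℂ) (hA : Aᵀ = A) (hS : S = -(A * Jmat n)) (hpos : RePosQ n S)
    (α : ℂ) (hα : |α.re| < nuTotal n S) (e : ℝ) (he : e = 1 ∨ e = -1) :
    ∃ C : ℝ, 0 < C ∧ ∀ (φ ψ : SchwartzMap (Hgrp n) ℂ), ⇑ψ = Lop n A (-α) ⇑φ → ∀ w μ : ℝ, 0 < μ → μ * e = -(Real.pi * w) →
      ‖gS (PhS n φ) w 0‖ ≤ C * ((Real.sqrt μ)⁻¹ * (1 + μ) ^ (2 * n)) * RR ψ w := by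
  obtain ⟨C, hC, h⟩ := main_bound A S hA hS hpos α hα e he
  refine ⟨C, hC, fun φ ψ hψ w μ hμ hw => ?_⟩
  have hlim := (peak_lim _ (gS_int (PhS n φ) w) (gS_cont (PhS n φ) w)).norm
  refine le_of_tendsto hlim ?_
  filter_upwards [Filter.eventually_gt_atTop 0] with t ht
  have hε : 0 < μ / (2 * Real.pi * t ^ 2) := by positivity
  have h1 := h φ ψ hψ w μ hμ hw _ hε
  have h2 : μ / (μ / (2 * Real.pi * t ^ 2)) = 2 * Real.pi * t ^ 2 := by field_simp
  have h3 : μ / (2 * Real.pi * (μ / (2 * Real.pi * t ^ 2))) = (2 * Real.pi * t ^ 2) / (2 * Real.pi) := by field_simp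
  rw [aM_zero, h2, h3, gg_peak φ w t ht _ rfl] at h1
  exact h1

lemma slice_bound' (A S : Matrix (Idx n) (Idx n) ℂ) (hA : Aᵀ = A) (hS : S = -(A * Jmat n)) (hpos : RePosQ n S)
    (α : ℂ) (hα : |α.re| < nuTotal n S) :
    ∃ C : ℝ, 0 < C ∧ ∀ (φ ψ : SchwartzMap (Hgrp n) ℂ), ⇑ψ = Lop n A (-α) ⇑φ → ∀ w : ℝ, w ≠ 0 →
      ‖gS (PhS n φ) w 0‖ ≤ C * ((Real.sqrt |w|)⁻¹ * ((1 + ‖w‖) ^ 2)⁻¹) * sSem n (2 * n + 1 + (2 * n + 2)) (HH n ψ) := by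
  obtain ⟨C1, hC1, h1⟩ := slice_bound A S hA hS hpos α hα 1 (Or.inl rfl)
  obtain ⟨C2, hC2, h2⟩ := slice_bound A S hA hS hpos α hα (-1) (Or.inr rfl)
  have h12 : ∀ (φ ψ : SchwartzMap (Hgrp n) ℂ), ⇑ψ = Lop n A (-α) ⇑φ → ∀ w : ℝ, w ≠ 0 →
      ‖gS (PhS n φ) w 0‖ ≤ (C1 + C2) * ((Real.sqrt (Real.pi * |w|))⁻¹ * (1 + Real.pi * |w|) ^ (2 * n)) * RR ψ w := by
    intro φ ψ hψ w hw
    have hr := RR_nonneg ψ w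
    have hwp : 0 < |w| := abs_pos.2 hw
    have hp := Real.pi_pos
    rcases lt_or_gt_of_ne hw with hneg | hpos'
    · refine (h1 φ ψ hψ w (Real.pi * |w|) (by positivity) (by rw [abs_of_neg hneg]; ring)).trans ?_
      gcongr; linarith
    · refine (h2 φ ψ hψ w (Real.pi * |w|) (by positivity) (by rw [abs_of_pos hpos']; ring)).trans ?_
      gcongr; linarith
  set Q := 2 ^ (2 * n + 1 + (2 * n + 2)) * (∫ v : EV n, ((1 + ‖v‖) ^ (2 * n + 1))⁻¹) with hQ
  have hQ0 : 0 ≤ Q := mul_nonneg (by positivity) (integral_nonneg fun v => by positivity)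
  refine ⟨(C1 + C2) * 4 ^ (2 * n) * (Q + 1), by positivity, fun φ ψ hψ w hw => ?_⟩
  refine (h12 φ ψ hψ w hw).trans ?_
  have hR : RR ψ w ≤ (Q + 1) * sSem n (2 * n + 1 + (2 * n + 2)) (HH n ψ) * ((1 + ‖w‖) ^ (2 * n + 2))⁻¹ := by
    refine (slice_norm (HH n ψ) (2 * n + 2) w).trans ?_
    rw [← hQ]
    have := apply_nonneg (sSem n (2 * n + 1 + (2 * n + 2))) (HH n ψ)
    gcongr; linarith
  have hwp : 0 < |w| := abs_pos.2 hw
  have hp := Real.pi_pos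
  have i1 : (Real.sqrt (Real.pi * |w|))⁻¹ ≤ (Real.sqrt |w|)⁻¹ := by
    have : 0 < Real.sqrt |w| := Real.sqrt_pos.2 hwp
    gcongr
    nlinarith [Real.pi_gt_three]
  have i2 : (1 + Real.pi * |w|) ^ (2 * n) ≤ 4 ^ (2 * n) * (1 + ‖w‖) ^ (2 * n) := by
    rw [← mul_pow]
    gcongr
    rw [Real.norm_eq_abs]; nlinarith [Real.pi_le_four]
  calc _ ≤ (C1 + C2) * ((Real.sqrt |w|)⁻¹ * (4 ^ (2 * n) * (1 + ‖w‖) ^ (2 * n))) *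
        ((Q + 1) * sSem n (2 * n + 1 + (2 * n + 2)) (HH n ψ) * ((1 + ‖w‖) ^ (2 * n + 2))⁻¹) := by
        have := RR_nonneg ψ w
        gcongr
    _ = _ := by
        have : (1 + ‖w‖) ≠ 0 := by positivity
        rw [pow_add _ (2 * n) 2]
        field_simp

lemma int_w : Integrable (fun w : ℝ => (Real.sqrt |w|)⁻¹ * ((1 + ‖w‖) ^ 2)⁻¹) := by
  have hm : AEStronglyMeasurable (fun w : ℝ => (Real.sqrt |w|)⁻¹ * ((1 + ‖w‖) ^ 2)⁻¹) volume := by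
    have : Measurable (fun w : ℝ => (Real.sqrt |w|)⁻¹ * ((1 + ‖w‖) ^ 2)⁻¹) := by fun_prop
    exact this.aestronglyMeasurable
  have i1 : IntervalIntegrable (fun w : ℝ => (Real.sqrt |w|)⁻¹) volume 0 1 := by
    refine (intervalIntegral.intervalIntegrable_rpow' (a := 0) (b := 1) (r := -(1/2)) (by norm_num)).congr ?_
    intro x hx
    rw [Set.uIoc_of_le zero_le_one] at hx
    simp only
    rw [abs_of_pos hx.1, Real.rpow_neg hx.1.le, Real.sqrt_eq_rpow]
  have i2 : IntervalIntegrable (fun w : ℝ => (Real.sqrt |w|)⁻¹) volume (-1) 0 := by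
    have := ((IntervalIntegrable.iff_comp_neg (by simp)).1 i1).symm
    simpa using this
  have i3 : IntegrableOn (fun w : ℝ => (Real.sqrt |w|)⁻¹) (Set.Ioc (-1) 1) :=
    (intervalIntegrable_iff_integrableOn_Ioc_of_le (by norm_num)).1 (i2.trans i1)
  have i4 := (integrable_indicator_iff measurableSet_Ioc).2 i3
  refine (i4.add (int_U 2 le_rfl)).mono' hm ?_
  filter_upwards with w
  rw [Real.norm_of_nonneg (by positivity)]
  simp only [Pi.add_apply]
  have hs := Real.sqrt_nonneg |w|
  by_cases hw : w ∈ Set.Ioc (-1:ℝ) 1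
  · rw [Set.indicator_of_mem hw]
    have h1 : ((1 + ‖w‖) ^ 2)⁻¹ ≤ 1 := inv_le_one_of_one_le₀ (one_le_pow₀ (by linarith [norm_nonneg w]))
    have h2 : 0 ≤ ((1 + ‖w‖) ^ 2)⁻¹ := by positivity
    have h3 : (Real.sqrt |w|)⁻¹ * ((1 + ‖w‖) ^ 2)⁻¹ ≤ (Real.sqrt |w|)⁻¹ * 1 := by gcongr
    linarith
  · rw [Set.indicator_of_notMem hw, zero_add]
    have h1 : 1 ≤ |w| := by
      by_contra hlt
      push Not at hlt
      rw [abs_lt] at hlt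
      exact hw ⟨hlt.1, hlt.2.le⟩
    have h2 : (Real.sqrt |w|)⁻¹ ≤ 1 := inv_le_one_of_one_le₀ (Real.one_le_sqrt.2 h1)
    exact mul_le_of_le_one_left (by positivity) h2

lemma gS_w_cont (Ψ : SchwartzMap (EX n) ℂ) : Continuous (fun w => gS Ψ w 0) := by
  refine continuous_of_dominated (bound := fun u => ‖Ψ (tau 0 u)‖) ?_ ?_ ?_ ?_
  · intro v
    have := Ψ.continuous.comp (tau_cont_u (0 : EV n))
    exact (Continuous.mul (by fun_prop) this).aestronglyMeasurable
  · intro v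
    filter_upwards with u
    rw [norm_mul, norm_char, one_mul]
  · refine (((int_U 2 le_rfl).const_mul (2 ^ (0 + 2) * sSem n (0 + 2) Ψ)).mono' (Ψ.continuous.comp (tau_cont_u (0 : EV n))).aestronglyMeasurable ?_).norm
    filter_upwards with u
    simpa using slice_decay Ψ 0 2 0 u
  · filter_upwards with u
    fun_prop

lemma eval_zero (Ψ : SchwartzMap (EX n) ℂ) (hi : Integrable (fun w => gS Ψ w 0)) : Ψ 0 = ∫ w, gS Ψ w 0 := by
  set f : ℝ → ℂ := fun u => Ψ (tau 0 u) with hf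
  have hfc : Continuous f := Ψ.continuous.comp (tau_cont_u (0 : EV n))
  have hfi : Integrable f := by
    refine ((int_U 2 le_rfl).const_mul (2 ^ (0 + 2) * sSem n (0 + 2) Ψ)).mono' hfc.aestronglyMeasurable ?_
    filter_upwards with u
    simpa using slice_decay Ψ 0 2 0 u
  have hF : 𝓕 f = fun w => gS Ψ w 0 := by
    funext w
    rw [Real.fourier_real_eq_integral_exp_smul, gS]
    refine integral_congr_ae (Filter.Eventually.of_forall fun u => ?_)
    simp only [smul_eq_mul, hf]
    congr 2; push_cast; ring
  have h := hfi.fourierInv_fourier_eq (by rw [hF]; exact hi) (v := 0) hfc.continuousAt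
  rw [hF, Real.fourierInv_eq'] at h
  have h0 : f 0 = Ψ 0 := rfl
  rw [← h0, ← h]
  refine integral_congr_ae (Filter.Eventually.of_forall fun u => ?_)
  simp

/-- the a priori estimate -/
lemma apriori (A S : Matrix (Idx n) (Idx n) ℂ) (hA : Aᵀ = A) (hS : S = -(A * Jmat n)) (hpos : RePosQ n S)
    (α : ℂ) (hα : |α.re| < nuTotal n S) :
    ∃ (C : ℝ), 0 ≤ C ∧ ∀ (φ ψ : SchwartzMap (Hgrp n) ℂ), ⇑ψ = Lop n A (-α) ⇑φ →
      ‖φ 0‖ ≤ C * sSem n (2 * n + 1 + (2 * n + 2)) (HH n ψ) := by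
  obtain ⟨C, hC, h⟩ := slice_bound' A S hA hS hpos α hα
  refine ⟨C * ∫ w : ℝ, (Real.sqrt |w|)⁻¹ * ((1 + ‖w‖) ^ 2)⁻¹, mul_nonneg hC.le (integral_nonneg fun w => by positivity), fun φ ψ hψ => ?_⟩
  have hb : ∀ᵐ w : ℝ, ‖gS (PhS n φ) w 0‖ ≤ (C * sSem n (2 * n + 1 + (2 * n + 2)) (HH n ψ)) * ((Real.sqrt |w|)⁻¹ * ((1 + ‖w‖) ^ 2)⁻¹) := by
    have h0 : ∀ᵐ w : ℝ, w ≠ 0 := by simp [ae_iff]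
    filter_upwards [h0] with w hw
    refine (h φ ψ hψ w hw).trans (le_of_eq ?_)
    ring
  have hdom := int_w.const_mul (C * sSem n (2 * n + 1 + (2 * n + 2)) (HH n ψ))
  have hi : Integrable (fun w => gS (PhS n φ) w 0) := hdom.mono' (gS_w_cont _).aestronglyMeasurable hb
  have e : φ 0 = PhS n φ 0 := by rw [PhS_apply, ContinuousLinearEquiv.map_zero]
  rw [e, eval_zero _ hi]
  refine (norm_integral_le_of_norm_le hdom hb).trans (le_of_eq ?_)
  rw [integral_const_mul]; ring
end LimitS

section FundS
variable {n : ℕ}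

lemma VS_add (j : Idx n) (φ ψ : SchwartzMap (Hgrp n) ℂ) : VS n j (φ + ψ) = VS n j φ + VS n j ψ := by
  simp only [VS, LineDeriv.lineDerivOp_add, map_add]
  abel

lemma VS_smul (j : Idx n) (c : ℂ) (φ : SchwartzMap (Hgrp n) ℂ) : VS n j (c • φ) = c • VS n j φ := by
  simp only [VS, LineDeriv.lineDerivOp_smul, map_smul, smul_add]

/-- the operator as a linear map on Schwartz functions -/
def LSm (n : ℕ) (A : Matrix (Idx n) (Idx n) ℂ) (α : ℂ) :
    SchwartzMap (Hgrp n) ℂ →ₗ[ℂ] SchwartzMap (Hgrp n) ℂ where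
  toFun φ := (∑ j, ∑ k, A j k • VS n j (VS n k φ)) +
    (Complex.I * α) • LineDeriv.lineDerivOp (hd0 n) φ
  map_add' φ ψ := by
    simp only [VS_add, LineDeriv.lineDerivOp_add, smul_add, Finset.sum_add_distrib]
    abel
  map_smul' c φ := by
    simp only [VS_smul, LineDeriv.lineDerivOp_smul, smul_add, Finset.smul_sum, RingHom.id_apply]
    simp only [smul_comm c]

lemma LSm_coe (A : Matrix (Idx n) (Idx n) ℂ) (α : ℂ) (φ : SchwartzMap (Hgrp n) ℂ) :
    ⇑(LSm n A α φ) = Lop n A α φ := by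
  funext p
  simp only [LSm, LinearMap.coe_mk, AddHom.coe_mk, Lop, SchwartzMap.add_apply, SchwartzMap.sum_apply,
    SchwartzMap.smul_apply, smul_eq_mul, VS_coe, Uop_eq, SchwartzMap.lineDerivOp_apply_eq_fderiv]

lemma sSem_cont (k : ℕ) : Continuous (sSem n k) := by
  have h := schwartz_withSeminorms ℂ (EX n) ℂ
  have : sSem n k ≤ ∑ m ∈ Finset.Iic (k, 0), schwartzSeminormFamily ℂ (EX n) ℂ m :=
    Seminorm.finset_sup_le_sum _ _
  refine Seminorm.continuous_of_le ?_ this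
  have e : ⇑(∑ m ∈ Finset.Iic (k, 0), schwartzSeminormFamily ℂ (EX n) ℂ m) =
      fun x => ∑ m ∈ Finset.Iic (k, 0), schwartzSeminormFamily ℂ (EX n) ℂ m x := by
    funext x
    simp
  rw [e]
  exact continuous_finsetSum _ fun m _ => h.continuous_seminorm m

lemma fund (A S : Matrix (Idx n) (Idx n) ℂ) (hA : Aᵀ = A) (hS : S = -(A * Jmat n)) (hpos : RePosQ n S)
    (α : ℂ) (hα : |α.re| < nuTotal n S) :
    ∃ E : SchwartzMap (Hgrp n) ℂ →L[ℂ] ℂ,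
        ∀ φ ψ : SchwartzMap (Hgrp n) ℂ, ⇑ψ = Lop n A (-α) ⇑φ → E ψ = φ 0 := by
  obtain ⟨C, hC, h⟩ := apriori A S hA hS hpos α hα
  let p : Seminorm ℂ (SchwartzMap (Hgrp n) ℂ) :=
    (C.toNNReal) • (sSem n (2 * n + 1 + (2 * n + 2))).comp (HH n).toLinearMap
  have hp : ∀ x, p x = C * sSem n (2 * n + 1 + (2 * n + 2)) (HH n x) := by
    intro x
    simp only [p, Seminorm.smul_apply, Seminorm.comp_apply, NNReal.smul_def, Real.coe_toNNReal _ hC]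
    rfl
  have hpc : Continuous p := by
    have : ⇑p = fun x => C * sSem n (2 * n + 1 + (2 * n + 2)) (HH n x) := funext hp
    rw [this]
    exact continuous_const.mul ((sSem_cont _).comp (HH n).continuous)
  let δ : SchwartzMap (Hgrp n) ℂ →ₗ[ℂ] ℂ :=
    { toFun := fun φ => φ 0, map_add' := fun _ _ => rfl, map_smul' := fun _ _ => rfl }
  have hb : ∀ φ, ‖δ φ‖ ≤ p (LSm n A (-α) φ) := by
    intro φ
    rw [hp]
    exact h φ _ (LSm_coe A (-α) φ)
  obtain ⟨r, hr⟩ := LinearMap.exists_rightInverse_of_surjective (LSm n A (-α)).rangeRestrict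
    (LinearMap.range_rangeRestrict _)
  have hr1 : ∀ x, LSm n A (-α) (r x) = x := fun x => by
    have := LinearMap.congr_fun hr x
    exact congrArg Subtype.val this
  have : PolynormableSpace ℂ (SchwartzMap (Hgrp n) ℂ) :=
    (schwartz_withSeminorms ℂ (Hgrp n) ℂ).toPolynormableSpace
  obtain ⟨g, hg, -⟩ := Module.Dual.exists_continuous_extension_of_le_seminorm
    (LinearMap.range (LSm n A (-α))) (δ ∘ₗ r) hpc (by
      intro x
      have := hb (r x)
      rwa [hr1] at this)
  refine ⟨g, fun φ ψ hψ => ?_⟩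
  have e : ψ = LSm n A (-α) φ := by
    apply DFunLike.coe_injective
    rw [hψ, LSm_coe]
  have h1 := hg ⟨LSm n A (-α) φ, φ, rfl⟩
  rw [e]
  refine h1.trans ?_
  have h2 := hb (r ⟨LSm n A (-α) φ, φ, rfl⟩ - φ)
  rw [map_sub, map_sub, hr1] at h2
  simp only [sub_self, map_zero] at h2
  have h3 := norm_le_zero_iff.1 h2
  exact sub_eq_zero.1 h3

/-- left translation, linear part -/
def tl (n : ℕ) (g : Hgrp n) : Hgrp n →L[ℝ] ℝ :=
  ∑ j, (hc n j g) • (ContinuousLinearMap.proj (R := ℝ) (φ := fun _ : Idx n => ℝ) j).comp (hv n)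

lemma tl_apply (g p : Hgrp n) : tl n g p = ∑ j, hc n j g * hv n p j := by
  simp [tl]

lemma tl_hd0 (g : Hgrp n) : tl n g (hd0 n) = 0 := by
  rw [tl_apply, hv_hd0]; simp

lemma tl_hd1 (g : Hgrp n) (j : Idx n) : tl n g (hd1 n j) = hc n j g := by
  rw [tl_apply, hv_hd1]
  simp only [Pi.single_apply, mul_ite, mul_one, mul_zero, Finset.sum_ite_eq', Finset.mem_univ, if_true]

def tL (n : ℕ) (g : Hgrp n) : Hgrp n →L[ℝ] Hgrp n :=
  ContinuousLinearMap.id ℝ _ + (tl n g).smulRight (hd0 n)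

lemma tL_apply (g p : Hgrp n) : tL n g p = p + tl n g p • hd0 n := rfl

/-- left translation by `g` -/
def tr (n : ℕ) (g : Hgrp n) (p : Hgrp n) : Hgrp n := g + tL n g p

lemma tr_zero (g : Hgrp n) : tr n g 0 = g := by simp [tr]

lemma tr_deriv (g p : Hgrp n) : HasFDerivAt (tr n g) (tL n g) p :=
  (tL n g).hasFDerivAt.const_add g

lemma tr_smooth (g : Hgrp n) : ContDiff ℝ (⊤ : ℕ∞) (tr n g) :=
  contDiff_const.add (tL n g).contDiff

def trH (n : ℕ) (g : Hgrp n) : Hgrp n ≃ₜ Hgrp n where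
  toFun := tr n g
  invFun q := (q - g) - tl n g (q - g) • hd0 n
  left_inv p := by
    simp [tr, tL_apply, tl_hd0]
  right_inv q := by
    simp [tr, tL_apply, tl_hd0]
  continuous_toFun := (tr_smooth g).continuous
  continuous_invFun := by fun_prop

lemma Vop_tr (g : Hgrp n) (j : Idx n) {f : Hgrp n → ℂ} (hf : Differentiable ℝ f) :
    Vop n j (f ∘ tr n g) = Vop n j f ∘ tr n g := by
  funext p
  have h := ((hf (tr n g p)).hasFDerivAt.comp p (tr_deriv g p)).fderiv
  rw [Vop_eq, h, Function.comp_apply, Vop_eq]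
  simp only [ContinuousLinearMap.comp_apply, tL_apply, tl_hd0, tl_hd1, zero_smul, add_zero, map_add,
    map_smul, tr, hc_hd0, smul_zero, real_smul]
  push_cast
  ring

lemma Uop_tr (g : Hgrp n) {f : Hgrp n → ℂ} (hf : Differentiable ℝ f) :
    Uop n (f ∘ tr n g) = Uop n f ∘ tr n g := by
  funext p
  have h := ((hf (tr n g p)).hasFDerivAt.comp p (tr_deriv g p)).fderiv
  rw [Uop_eq, h, Function.comp_apply, Uop_eq]
  simp only [ContinuousLinearMap.comp_apply, tL_apply, tl_hd0, zero_smul, add_zero]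

lemma Lop_tr (A : Matrix (Idx n) (Idx n) ℂ) (α : ℂ) (g : Hgrp n) (φ : SchwartzMap (Hgrp n) ℂ) :
    Lop n A α (φ ∘ tr n g) = Lop n A α φ ∘ tr n g := by
  funext p
  have h : ∀ j k, Vop n j (Vop n k (φ ∘ tr n g)) = Vop n j (Vop n k φ) ∘ tr n g := by
    intro j k
    rw [Vop_tr g k φ.differentiable, ← VS_coe, Vop_tr g j (VS n k φ).differentiable]
  simp only [Lop, h, Uop_tr g φ.differentiable, Function.comp_apply]

lemma locsolv (A S : Matrix (Idx n) (Idx n) ℂ) (hA : Aᵀ = A) (hS : S = -(A * Jmat n)) (hpos : RePosQ n S)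
    (α : ℂ) (hα : |α.re| < nuTotal n S) : LocSolv n A α := by
  obtain ⟨E, hE⟩ := fund A S hA hS hpos α hα
  intro p
  refine ⟨Set.univ, isOpen_univ, Set.mem_univ _, fun f hf => ?_⟩
  let T : Submodule ℂ (SchwartzMap (Hgrp n) ℂ) :=
    { carrier := {φ | HasCompactSupport φ}
      add_mem' := fun {a b} ha hb => HasCompactSupport.add ha hb
      zero_mem' := HasCompactSupport.zero
      smul_mem' := fun c φ hφ => HasCompactSupport.smul_left (f := fun _ => c) hφ }
  let cf : SchwartzMap (Hgrp n) ℂ →ₗ[ℂ] (Hgrp n → ℂ) :=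
    { toFun := fun φ => ⇑φ, map_add' := fun _ _ => rfl, map_smul' := fun _ _ => rfl }
  let Λ : T →ₗ[ℂ] (Hgrp n → ℂ) := cf ∘ₗ LSm n A (-α) ∘ₗ T.subtype
  have hΛ : ∀ φ : T, Λ φ = Lop n A (-α) (φ : SchwartzMap (Hgrp n) ℂ) := fun φ => LSm_coe A (-α) φ
  have hinj : LinearMap.ker Λ = ⊥ := by
    rw [LinearMap.ker_eq_bot']
    intro φ h0
    rw [hΛ] at h0
    apply Subtype.ext
    ext g
    have hcs : HasCompactSupport ((φ : SchwartzMap (Hgrp n) ℂ) ∘ tr n g) :=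
      HasCompactSupport.comp_homeomorph φ.2 (trH n g)
    let χ : SchwartzMap (Hgrp n) ℂ := hcs.toSchwartzMap ((φ.1.smooth ⊤).comp (tr_smooth g))
    have hχ : ⇑χ = (φ : SchwartzMap (Hgrp n) ℂ) ∘ tr n g := rfl
    have h1 := hE χ 0 (by
      rw [hχ, Lop_tr, h0]; rfl)
    rw [map_zero, hχ, Function.comp_apply, tr_zero] at h1
    exact h1.symm
  let F : T →ₗ[ℂ] ℂ :=
    { toFun := fun φ => ∫ x, f x * (φ : SchwartzMap (Hgrp n) ℂ) x
      map_add' := by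
        intro φ ψ
        have hi : ∀ φ : SchwartzMap (Hgrp n) ℂ, Integrable (fun x => f x * φ x) := fun φ =>
          (hf.1.continuous.mul φ.continuous).integrable_of_hasCompactSupport (hf.2.1.mul_right)
        rw [← integral_add (hi φ) (hi ψ)]
        refine integral_congr_ae (Filter.Eventually.of_forall fun x => ?_)
        exact mul_add _ _ _
      map_smul' := by
        intro c φ
        rw [RingHom.id_apply, smul_eq_mul, ← integral_const_mul]
        refine integral_congr_ae (Filter.Eventually.of_forall fun x => ?_)
        exact mul_left_comm _ _ _ }
  obtain ⟨r, hr⟩ := LinearMap.exists_leftInverse_of_injective Λ hinj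
  refine ⟨F ∘ₗ r, fun φ hφ => ?_⟩
  let φs : T := ⟨hφ.2.1.toSchwartzMap hφ.1, hφ.2.1⟩
  have h1 : Lop n A (-α) φ = Λ φs := (hΛ φs).symm
  have h2 : r (Λ φs) = φs := LinearMap.congr_fun hr φs
  rw [h1, LinearMap.comp_apply, h2]
  rfl
end FundS

/-- if `Re Q_S ≥ 0`, `S_i ≠ 0` and condition (R) holds, then for
`|Re α| < ν` the operator `L_S + iαU` admits a tempered fundamental solution `E` with
`(L_S + iαU) E = δ_0` (expressed weakly: `E((L_S + iαU)ᵗ φ) = φ(0)` for Schwartz `φ`,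
where `(L_S + iαU)ᵗ = L_S - iαU`); in particular it is locally solvable. -/
theorem statement0 (n : ℕ) (A : Matrix (Idx n) (Idx n) ℂ) (hA : Aᵀ = A)
    (S : Matrix (Idx n) (Idx n) ℂ) (hS : S = -(A * Jmat n))
    (hpos : RePosQ n S) (hSi : HasNonrealEig n S) (hR : CondR n S)
    (α : ℂ) (hα : |α.re| < nuTotal n S) :
    (∃ E : SchwartzMap (Hgrp n) ℂ →L[ℂ] ℂ,
        ∀ φ ψ : SchwartzMap (Hgrp n) ℂ, ⇑ψ = Lop n A (-α) ⇑φ → E ψ = φ 0) ∧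
      LocSolv n A α := by
  exact ⟨fund A S hA hS hpos α hα, locsolv A S hA hS hpos α hα⟩
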